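/- arXiv:2009.13848 — 4 statements merged into one kernel-verified Lean document; each statement's English description precedes it below -/
import Mathlib

section
/- Let μ be a positive Borel measure on ℝ₊ = (0,∞) and let a ∈ ℝ₊. Then μ is log-unimodal with mode a if and only if the measure x·dμ(x) (the measure on ℝ₊ with density x with respect to μ) is unimodal with mode a. -/
/-!
Since `μ` lives on `(0, ∞)`, it is the push-forward under `exp` of `ν = log_* μ`. The substitution
`x = exp t` has Jacobian `exp t`, which is exactly the factor `x` in `x dμ(x)`; hence
`ν = c₀ δ_{log a} + g (exp t) dt` corresponds to `x dμ(x) = a c₀ δ_a + g(x) dx` on `(0, ∞)`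
(`withDensity_map_exp`). As `exp` is increasing, monotonicity of `g` on either side of `a` within
`(0, ∞)` amounts to monotonicity of `g ∘ exp` on either side of `log a`.

From left to right, take `g = f ∘ log` extended by zero to `(-∞, 0]`, where `f` is the density of
`ν`; the extension stays monotone below `a` because `f ≥ 0`. From right to left, the given density
`g` vanishes a.e. on `(-∞, 0]`, so the change of variables applies to it, and it yields `μ` itself
because a measure on `(0, ∞)` is determined by `x dμ(x)` (`eq_of_withDensity_eq`).
-/

open MeasureTheory Set Filter Topology
open scoped ENNReal NNReal

noncomputable section

/-- A positive Borel measure `τ` on `ℝ` is *unimodal with mode `c`* if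
`τ = c₀ • δ_c + f(x) dx` where `c₀ ∈ [0,∞]` and `f : ℝ → [0,∞)` is
non-decreasing on `(-∞, c)` and non-increasing on `(c, ∞)`. -/
def IsUnimodalWithMode (τ : Measure ℝ) (c : ℝ) : Prop :=
  ∃ (c₀ : ℝ≥0∞) (f : ℝ → ℝ),
    (∀ x, 0 ≤ f x) ∧ MonotoneOn f (Set.Iio c) ∧ AntitoneOn f (Set.Ioi c) ∧
    τ = c₀ • (Measure.dirac c) + volume.withDensity (fun x => ENNReal.ofReal (f x))

/-- A measure on `ℝ` is unimodal if it is unimodal with some mode. -/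
def IsUnimodal (τ : Measure ℝ) : Prop := ∃ c, IsUnimodalWithMode τ c

/-- A positive Borel measure `μ` on `ℝ₊ = (0,∞)` is *log-unimodal with mode `a`* if its
push-forward under `log` is unimodal with mode `log a`. -/
def IsLogUnimodalWithMode (μ : Measure ℝ) (a : ℝ) : Prop :=
  IsUnimodalWithMode (μ.map Real.log) (Real.log a)

/-- A measure on `ℝ₊` is log-unimodal if it is log-unimodal with some mode `a ∈ ℝ₊`. -/
def IsLogUnimodal (μ : Measure ℝ) : Prop := ∃ a, 0 < a ∧ IsLogUnimodalWithMode μ a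

/-- Classical multiplicative convolution `μ ⊛ ν`: the push-forward of `μ ⊗ ν`
under `(x, y) ↦ x * y`. -/
def mulConv (μ ν : Measure ℝ) : Measure ℝ := (μ.prod ν).map (fun p => p.1 * p.2)

/-- Classical additive convolution `μ ∗ ν`: the push-forward of `μ ⊗ ν`
under `(x, y) ↦ x + y`. -/
def addConv (μ ν : Measure ℝ) : Measure ℝ := (μ.prod ν).map (fun p => p.1 + p.2)

/-- A measure `μ` on `ℝ₊` is multiplicatively symmetric if `μ = μ⁻¹`, where `μ⁻¹` is
the push-forward of `μ` under `x ↦ 1/x`. -/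
def MulSymmetric (μ : Measure ℝ) : Prop := μ = μ.map (fun x => x⁻¹)

/-- A probability measure `μ` on `ℝ₊` is `⊛`-strongly log-unimodal if `μ ⊛ ν` is
log-unimodal for every log-unimodal probability measure `ν` on `ℝ₊`. -/
def StronglyLogUnimodal (μ : Measure ℝ) : Prop :=
  ∀ ν : Measure ℝ, IsProbabilityMeasure ν → ν (Set.Iic 0) = 0 → IsLogUnimodal ν →
    IsLogUnimodal (mulConv μ ν)

/-- A probability measure `ρ` on `ℝ` is `∗`-strongly unimodal if `ρ ∗ σ` is unimodal
for every unimodal probability measure `σ` on `ℝ`. -/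
def StronglyUnimodal (ρ : Measure ℝ) : Prop :=
  ∀ σ : Measure ℝ, IsProbabilityMeasure σ → IsUnimodal σ → IsUnimodal (addConv ρ σ)

/-- No measurability is part of the definition of unimodality: it follows from monotonicity on
each side of the mode. -/
lemma measurable_of_monotoneOn_antitoneOn {f : ℝ → ℝ} {c : ℝ} (h₁ : MonotoneOn f (Iio c))
    (h₂ : AntitoneOn f (Ioi c)) : Measurable f := by
  refine measurable_of_restrict_of_restrict_compl (s := Iio c) measurableSet_Iio
    (Monotone.measurable fun x y hxy => h₁ x.2 y.2 hxy) ?_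
  refine measurable_of_measurable_on_compl_singleton (⟨c, by simp⟩ : ↥(Iio c)ᶜ) ?_
  refine Antitone.measurable fun x y hxy => h₂ ?_ ?_ hxy
  · exact lt_of_le_of_ne (notMem_Iio.mp x.1.2) fun h => x.2 (Subtype.ext h.symm)
  · exact lt_of_le_of_ne (notMem_Iio.mp y.1.2) fun h => y.2 (Subtype.ext h.symm)

/-- The change of variables `x = exp t`, for an atom and an absolutely continuous part. -/
lemma withDensity_map_exp {g : ℝ → ℝ} (hg : Measurable g)
    (hg0 : ∫⁻ x in Iic 0, ENNReal.ofReal (g x) = 0) (c₀ : ℝ≥0∞) {a : ℝ} (ha : 0 < a) :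
    ((c₀ • Measure.dirac (Real.log a) +
        volume.withDensity (fun t => ENNReal.ofReal (g (Real.exp t)))).map Real.exp).withDensity
        (fun x => ENNReal.ofReal x) =
      (c₀ * ENNReal.ofReal a) • Measure.dirac a +
        volume.withDensity (fun x => ENNReal.ofReal (g x)) := by
  have he : Measurable Real.exp := Real.measurable_exp
  have hX : Measurable (fun x : ℝ => ENNReal.ofReal x) := ENNReal.measurable_ofReal
  have hXe : Measurable (fun t => ENNReal.ofReal (Real.exp t)) := hX.comp he
  have hge : Measurable (fun t => ENNReal.ofReal (g (Real.exp t))) := hX.comp (hg.comp he)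
  rw [Measure.map_add _ _ he, Measure.map_smul, Measure.map_dirac' he, Real.exp_log ha,
    withDensity_add_measure]
  congr 1
  · ext s hs
    classical
    rw [withDensity_apply _ hs, Measure.restrict_smul, lintegral_smul_measure,
      setLIntegral_dirac' hX hs]
    by_cases h : a ∈ s <;> simp [h, hs]
  · ext s hs
    have himg : Real.exp '' (Real.exp ⁻¹' s) = s ∩ Ioi 0 := by
      rw [image_preimage_eq_inter_range, Real.range_exp]
    have hcov := lintegral_image_eq_lintegral_abs_deriv_mul (he hs)
      (fun x _ => (Real.hasDerivAt_exp x).hasDerivWithinAt) Real.exp_injective.injOn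
      (fun x => ENNReal.ofReal (g x))
    have hneg : ∫⁻ x in s \ Ioi 0, ENNReal.ofReal (g x) = 0 :=
      le_antisymm (hg0 ▸ lintegral_mono_set fun x hx => notMem_Ioi.mp hx.2) zero_le
    rw [withDensity_apply _ hs, withDensity_apply _ hs, setLIntegral_map hs hX he,
      setLIntegral_withDensity_eq_setLIntegral_mul _ hge hXe (he hs),
      ← lintegral_inter_add_sdiff _ s measurableSet_Ioi, hneg, add_zero, ← himg, hcov]
    simp [mul_comm, abs_of_pos (Real.exp_pos _)]

/-- A measure on `(0, ∞)` is determined by `x dμ(x)`: the density `x` is a.e. positive and finite,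
so it can be divided out. -/
lemma eq_of_withDensity_eq {μ ν : Measure ℝ} (hμ : μ (Iic 0) = 0) (hν : ν (Iic 0) = 0)
    (h : μ.withDensity (fun x => ENNReal.ofReal x) = ν.withDensity (fun x => ENNReal.ofReal x)) :
    μ = ν := by
  have key : ∀ ρ : Measure ℝ, ρ (Iic 0) = 0 →
      (ρ.withDensity (fun x => ENNReal.ofReal x)).withDensity
        (fun x => ENNReal.ofReal x)⁻¹ = ρ := by
    intro ρ hρ
    refine withDensity_inv_same ENNReal.measurable_ofReal ?_ (by simp)
    filter_upwards [measure_eq_zero_iff_ae_notMem.mp hρ] with x hx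
    simpa using hx
  rw [← key μ hμ, h, key ν hν]

lemma map_exp_Iic_zero (ν : Measure ℝ) : ν.map Real.exp (Iic 0) = 0 := by
  rw [Measure.map_apply Real.measurable_exp measurableSet_Iic]
  convert measure_empty (μ := ν)
  ext x
  simp [Real.exp_pos]

lemma map_exp_map_log {μ : Measure ℝ} (hμ : μ (Iic 0) = 0) :
    (μ.map Real.log).map Real.exp = μ := by
  rw [Measure.map_map Real.measurable_exp Real.measurable_log]
  conv_rhs => rw [← Measure.map_id (μ := μ)]
  refine Measure.map_congr ?_
  filter_upwards [measure_eq_zero_iff_ae_notMem.mp hμ] with x hx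
  exact Real.exp_log (not_le.mp hx)

/-- `μ` is log-unimodal with mode `a` iff the measure `x dμ(x)` is
unimodal with mode `a`. -/
theorem logUnimodal_iff_xdmu_unimodal (μ : Measure ℝ) (hμ : μ (Set.Iic 0) = 0)
    (a : ℝ) (ha : 0 < a) :
    IsLogUnimodalWithMode μ a ↔
      IsUnimodalWithMode (μ.withDensity (fun x => ENNReal.ofReal x)) a := by
  constructor
  · rintro ⟨c₀, f, hf, hmono, hanti, hν⟩
    let g : ℝ → ℝ := fun x => if 0 < x then f (Real.log x) else 0
    have hg1 : MonotoneOn g (Iio a) := by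
      intro x hx y hy hxy
      by_cases h0 : 0 < x
      · have h0y : 0 < y := h0.trans_le hxy
        simp only [g, h0, h0y, if_true]
        exact hmono (Real.log_lt_log h0 hx) (Real.log_lt_log h0y hy) (Real.log_le_log h0 hxy)
      · simp only [g, h0, if_false]
        split_ifs
        exacts [hf _, le_rfl]
    have hg2 : AntitoneOn g (Ioi a) := by
      intro x hx y hy hxy
      have h0 : 0 < x := ha.trans hx
      have h0y : 0 < y := ha.trans hy
      simp only [g, h0, h0y, if_true]
      exact hanti (Real.log_lt_log ha hx) (Real.log_lt_log ha hy) (Real.log_le_log h0 hxy)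
    have hg0 : ∫⁻ x in Iic 0, ENNReal.ofReal (g x) = 0 := by
      rw [setLIntegral_congr_fun (g := fun _ => 0) measurableSet_Iic, lintegral_zero]
      intro x hx
      simp [g, not_lt.mpr (mem_Iic.mp hx)]
    refine ⟨c₀ * ENNReal.ofReal a, g, ?_, hg1, hg2, ?_⟩
    · intro x
      simp only [g]
      split_ifs
      exacts [hf _, le_rfl]
    · rw [← withDensity_map_exp (measurable_of_monotoneOn_antitoneOn hg1 hg2) hg0 c₀ ha]
      simp only [g, Real.exp_pos, if_true, Real.log_exp]
      rw [← hν, map_exp_map_log hμ]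
  · rintro ⟨c₀, g, hg, hmono, hanti, hν⟩
    have hg0 : ∫⁻ x in Iic 0, ENNReal.ofReal (g x) = 0 := by
      have h0 := withDensity_absolutelyContinuous μ (fun x => ENNReal.ofReal x) hμ
      rw [hν, Measure.add_apply, add_eq_zero, withDensity_apply _ measurableSet_Iic] at h0
      exact h0.2
    have ha0 : ENNReal.ofReal a ≠ 0 := by simpa using ha
    refine ⟨c₀ / ENNReal.ofReal a, fun t => g (Real.exp t), fun _ => hg _, ?_, ?_, ?_⟩
    · exact fun x hx y hy hxy => hmono ((Real.lt_log_iff_exp_lt ha).mp hx)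
        ((Real.lt_log_iff_exp_lt ha).mp hy) (Real.exp_le_exp.mpr hxy)
    · exact fun x hx y hy hxy => hanti ((Real.log_lt_iff_lt_exp ha).mp hx)
        ((Real.log_lt_iff_lt_exp ha).mp hy) (Real.exp_le_exp.mpr hxy)
    · have hT := withDensity_map_exp (measurable_of_monotoneOn_antitoneOn hmono hanti) hg0
        (c₀ / ENNReal.ofReal a) ha
      rw [ENNReal.div_mul_cancel ha0 ENNReal.ofReal_ne_top, ← hν] at hT
      rw [← eq_of_withDensity_eq (map_exp_Iic_zero _) hμ hT,
        Measure.map_map Real.measurable_log Real.measurable_exp]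
      have hid : Real.log ∘ Real.exp = id := funext Real.log_exp
      rw [hid, Measure.map_id]
end
end

section
/- Let τ be a positive Borel measure on ℝ such that ∫_ℝ dτ(x)/(1+x²) < ∞, let c ∈ ℝ, and define the Pick function P_τ(z) = ∫_ℝ (1+xz)/((x−z)(1+x²)) dτ(x) for z in the upper half-plane ℂ⁺ = {z ∈ ℂ : Im z > 0}. Then τ is unimodal with mode c if and only if Im[(z − c)·P_τ'(z)] ≤ 0 for all z ∈ ℂ⁺. -/
/-!
Differentiating under the integral gives `P_τ'(z) = ∫ (x - z)⁻² dτ(x)`.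

If `τ` is unimodal, `Im [(z - c) P_τ'(z)]` is the `τ`-integral of `K(x) = Im [(z - c) / (x - z)²]`.
The function `K` is the derivative of `G(x) = -(x - c) Im z / |x - z|²`, which is nonnegative to the
left of `c` and nonpositive to the right, so `K` has nonpositive integral over every interval
containing `c`. By the layer-cake formula the density of `τ`, whose superlevel sets are such
intervals, contributes a nonpositive amount (`lintegral_pos_le_neg`); so does the atom at `c`.

Conversely, the inequality says that the Poisson integral `Im P_τ` decreases along rays issuing
from `c` (`pick_im_antitone`). Rescaling, the Poisson integral of `τ` is at most that of the measure
`A ↦ r τ(h_r⁻¹ A)`, where `h_r(x) = c + r (x - c)` and `r ≥ 1`. Stieltjes inversion turns this into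
`τ A ≤ r τ(h_r⁻¹ A)` (`measure_le_of_poisson_le`, `scaling_of_pick`). Averaging over `r` shows that
`τ` is absolutely continuous away from `c` (`absolutelyContinuous_of_scaling`), and its upper right
density, which equals the Radon-Nikodym derivative almost everywhere, inherits the monotonicity
along rays pointwise (`upperDensity_scaling`); this yields the unimodal density.
-/

open MeasureTheory Set Filter Topology
open scoped ENNReal NNReal

noncomputable section

/-! ### The Pick function and its derivative -/

lemma one_add_sq_le_norm_sq {δ M : ℝ} (hδ : 0 < δ) {w : ℂ} (hw : δ ≤ w.im) (hM : ‖w‖ ≤ M) (x : ℝ) :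
    1 + x ^ 2 ≤ (2 + (1 + 2 * M ^ 2) / δ ^ 2) * ‖(x : ℂ) - w‖ ^ 2 := by
  have h1 : δ ≤ ‖(x : ℂ) - w‖ := by
    have := Complex.abs_im_le_norm ((x : ℂ) - w)
    simp only [Complex.sub_im, Complex.ofReal_im, zero_sub, abs_neg] at this
    exact hw.trans ((le_abs_self _).trans this)
  have h2 : |x| ≤ ‖(x : ℂ) - w‖ + M := by
    have : ‖(x : ℂ)‖ ≤ ‖(x : ℂ) - w‖ + ‖w‖ := by simpa using norm_add_le ((x : ℂ) - w) w
    rw [Complex.norm_real, Real.norm_eq_abs] at this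
    linarith
  set N := ‖(x : ℂ) - w‖
  have h3 : x ^ 2 ≤ (N + M) ^ 2 := by
    rw [← sq_abs]; gcongr
  have h4 : 1 + 2 * M ^ 2 ≤ (1 + 2 * M ^ 2) / δ ^ 2 * N ^ 2 := by
    rw [div_mul_eq_mul_div, le_div_iff₀ (by positivity)]
    gcongr
  nlinarith [sq_nonneg (N - M)]

lemma sub_ne_zero_of_im_pos {z : ℂ} (hz : 0 < z.im) (x : ℝ) : (x : ℂ) - z ≠ 0 := by
  intro h
  have := congrArg Complex.im h
  simp at this
  exact hz.ne' this

lemma one_add_ofReal_sq_ne_zero (x : ℝ) : (1 + (x : ℂ) ^ 2) ≠ 0 := by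
  have : (1 + x ^ 2 : ℝ) ≠ 0 := by positivity
  exact_mod_cast this

/-- The kernel of the Pick function `P_τ`. -/
def pickKernel (w : ℂ) (x : ℝ) : ℂ :=
  (1 + (x : ℂ) * w) / (((x : ℂ) - w) * (1 + (x : ℂ) ^ 2))

lemma measurable_pickKernel (w : ℂ) : Measurable (pickKernel w) := by
  unfold pickKernel; fun_prop

lemma hasDerivAt_pickKernel {w : ℂ} (hw : 0 < w.im) (x : ℝ) :
    HasDerivAt (fun w => pickKernel w x) (1 / ((x : ℂ) - w) ^ 2) w := by
  have h1 := sub_ne_zero_of_im_pos hw x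
  have h2 := one_add_ofReal_sq_ne_zero x
  have hn : HasDerivAt (fun w : ℂ => 1 + (x : ℂ) * w) (x : ℂ) w := by
    simpa using ((hasDerivAt_id w).const_mul (x : ℂ)).const_add 1
  have hd : HasDerivAt (fun w : ℂ => ((x : ℂ) - w) * (1 + (x : ℂ) ^ 2))
      (-1 * (1 + (x : ℂ) ^ 2)) w :=
    ((hasDerivAt_id w).const_sub (x : ℂ)).mul_const (1 + (x : ℂ) ^ 2)
  have := hn.div hd (mul_ne_zero h1 h2)
  refine this.congr_deriv ?_
  field_simp
  ring

lemma pickKernel_im {z : ℂ} (hz : 0 < z.im) (x : ℝ) :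
    (pickKernel z x).im = z.im / ((x - z.re) ^ 2 + z.im ^ 2) := by
  have h1 := sub_ne_zero_of_im_pos hz x
  have h2 := one_add_ofReal_sq_ne_zero x
  have h3 : (x - z.re) ^ 2 + z.im ^ 2 ≠ 0 := by positivity
  have h4 : pickKernel z x = 1 / ((x : ℂ) - z) - ((x / (1 + x ^ 2) : ℝ) : ℂ) := by
    unfold pickKernel; push_cast; field_simp; ring
  rw [h4, Complex.sub_im, Complex.ofReal_im, Complex.div_im]
  simp only [Complex.normSq_apply, Complex.one_im, Complex.one_re, Complex.sub_re, Complex.sub_im,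
    Complex.ofReal_re, Complex.ofReal_im]
  have h5 : (x - z.re) * (x - z.re) + (0 - z.im) * (0 - z.im) = (x - z.re) ^ 2 + z.im ^ 2 := by ring
  rw [h5]
  field_simp
  ring

lemma integrable_weight {τ : Measure ℝ}
    (hτ : (∫⁻ x, ENNReal.ofReal (1 / (1 + x ^ 2)) ∂τ) < ⊤) :
    Integrable (fun x : ℝ => 1 / (1 + x ^ 2)) τ := by
  refine ⟨Measurable.aestronglyMeasurable (by fun_prop), ?_⟩
  rw [hasFiniteIntegral_iff_ofReal]
  · exact hτ
  · filter_upwards with x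
    positivity

lemma norm_inv_sq_le {δ M : ℝ} (hδ : 0 < δ) {w : ℂ} (hw : δ ≤ w.im) (hM : ‖w‖ ≤ M) (x : ℝ) :
    ‖1 / ((x : ℂ) - w) ^ 2‖ ≤ (2 + (1 + 2 * M ^ 2) / δ ^ 2) * (1 / (1 + x ^ 2)) := by
  have h := one_add_sq_le_norm_sq hδ hw hM x
  have h1 : 0 < ‖(x : ℂ) - w‖ := norm_pos_iff.2 (sub_ne_zero_of_im_pos (hδ.trans_le hw) x)
  rw [norm_div, norm_one, norm_pow, mul_one_div, div_le_div_iff₀ (by positivity) (by positivity)]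
  linarith

lemma integrable_pickKernel {τ : Measure ℝ}
    (hτ : (∫⁻ x, ENNReal.ofReal (1 / (1 + x ^ 2)) ∂τ) < ⊤) {z : ℂ} (hz : 0 < z.im) :
    Integrable (pickKernel z) τ := by
  refine ((integrable_weight hτ).const_mul (‖z‖ + ‖1 + z ^ 2‖ / z.im)).mono'
    (measurable_pickKernel z).aestronglyMeasurable ?_
  filter_upwards with x
  have h1 := sub_ne_zero_of_im_pos hz x
  have h2 := one_add_ofReal_sq_ne_zero x
  have h4 : pickKernel z x = (z + (1 + z ^ 2) / ((x : ℂ) - z)) * ((1 / (1 + x ^ 2) : ℝ) : ℂ) := by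
    unfold pickKernel; push_cast; field_simp; ring
  have h5 : z.im ≤ ‖(x : ℂ) - z‖ := by
    have := Complex.abs_im_le_norm ((x : ℂ) - z)
    simp only [Complex.sub_im, Complex.ofReal_im, zero_sub, abs_neg] at this
    exact (le_abs_self _).trans this
  have h6 : (0 : ℝ) ≤ 1 / (1 + x ^ 2) := by positivity
  rw [h4, norm_mul, Complex.norm_real, Real.norm_of_nonneg h6]
  gcongr
  refine (norm_add_le _ _).trans ?_
  rw [norm_div]
  gcongr

/-- Differentiation under the integral sign: `P_τ'(z) = ∫ (x - z)⁻² dτ(x)`. -/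
lemma hasDerivAt_pick {τ : Measure ℝ}
    (hτ : (∫⁻ x, ENNReal.ofReal (1 / (1 + x ^ 2)) ∂τ) < ⊤) {z : ℂ} (hz : 0 < z.im) :
    Integrable (fun x : ℝ => 1 / ((x : ℂ) - z) ^ 2) τ ∧
    HasDerivAt (fun w : ℂ => ∫ x : ℝ, pickKernel w x ∂τ) (∫ x : ℝ, 1 / ((x : ℂ) - z) ^ 2 ∂τ) z := by
  have him : ∀ w ∈ Metric.ball z (z.im / 2), z.im / 2 ≤ w.im := by
    intro w hw
    rw [Metric.mem_ball, dist_eq_norm] at hw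
    have := (Complex.abs_im_le_norm (w - z)).trans_lt hw
    rw [Complex.sub_im, abs_lt] at this
    linarith
  refine hasDerivAt_integral_of_dominated_loc_of_deriv_le
    (s := Metric.ball z (z.im / 2)) (F' := fun w x => 1 / ((x : ℂ) - w) ^ 2)
    (bound := fun x => (2 + (1 + 2 * (‖z‖ + z.im / 2) ^ 2) / (z.im / 2) ^ 2) * (1 / (1 + x ^ 2)))
    (Metric.ball_mem_nhds _ (by linarith)) ?_ (integrable_pickKernel hτ hz) ?_ ?_
    ((integrable_weight hτ).const_mul _) ?_
  · filter_upwards with w using (measurable_pickKernel w).aestronglyMeasurable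
  · exact Measurable.aestronglyMeasurable (by fun_prop)
  · filter_upwards with x w hw
    refine norm_inv_sq_le (by linarith) (him w hw) ?_ x
    rw [Metric.mem_ball, dist_eq_norm] at hw
    have : ‖w‖ ≤ ‖z‖ + ‖w - z‖ := by simpa using norm_add_le z (w - z)
    linarith
  · filter_upwards with x w hw
    exact hasDerivAt_pickKernel (by linarith [him w hw]) x

/-- `Im P_τ` is (up to the factor `π`) the Poisson integral of `τ`. -/
lemma pick_im {τ : Measure ℝ}
    (hτ : (∫⁻ x, ENNReal.ofReal (1 / (1 + x ^ 2)) ∂τ) < ⊤) {z : ℂ} (hz : 0 < z.im) :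
    ∫⁻ t, ENNReal.ofReal (z.im / ((t - z.re) ^ 2 + z.im ^ 2)) ∂τ
      = ENNReal.ofReal (∫ x : ℝ, pickKernel z x ∂τ).im := by
  have h : (∫ x : ℝ, pickKernel z x ∂τ).im = ∫ x : ℝ, (pickKernel z x).im ∂τ :=
    (Complex.imCLM.integral_comp_comm (integrable_pickKernel hτ hz)).symm
  have hi : Integrable (fun x => (pickKernel z x).im) τ := (integrable_pickKernel hτ hz).im
  rw [h, ofReal_integral_eq_lintegral_ofReal hi]
  · simp only [pickKernel_im hz]
  · filter_upwards with x
    rw [pickKernel_im hz]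
    simp only [Pi.zero_apply]
    positivity

lemma isLocallyFinite_of_weight {τ : Measure ℝ}
    (hτ : (∫⁻ x, ENNReal.ofReal (1 / (1 + x ^ 2)) ∂τ) < ⊤) : IsLocallyFiniteMeasure τ := by
  refine ⟨fun x => ⟨Metric.ball x 1, Metric.ball_mem_nhds _ one_pos, ?_⟩⟩
  have hpos : ENNReal.ofReal (1 / (1 + (|x| + 1) ^ 2)) ≠ 0 := by
    rw [Ne, ENNReal.ofReal_eq_zero, not_le]; positivity
  have h := meas_ge_le_lintegral_div (μ := τ) (f := fun x => ENNReal.ofReal (1 / (1 + x ^ 2)))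
    (by fun_prop) hpos ENNReal.ofReal_ne_top
  refine (measure_mono ?_).trans_lt (h.trans_lt (ENNReal.div_lt_top hτ.ne hpos))
  intro t ht
  rw [Metric.mem_ball, Real.dist_eq] at ht
  refine ENNReal.ofReal_le_ofReal ?_
  have : |t| ≤ |x| + 1 := by
    have := abs_sub_abs_le_abs_sub t x
    linarith
  have : t ^ 2 ≤ (|x| + 1) ^ 2 := by rw [← sq_abs]; gcongr
  gcongr

/-! ### Unimodal densities against the derivative kernel -/

lemma ordConnected_superlevel {f : ℝ → ℝ} {c : ℝ} (h1 : MonotoneOn f (Iio c))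
    (h2 : AntitoneOn f (Ioi c)) (t : ℝ) : (insert c {x | t < f x}).OrdConnected := by
  refine ⟨fun x hx z hz y hy => ?_⟩
  rcases lt_trichotomy y c with h | h | h
  · have hxc : x < c := hy.1.trans_lt h
    have : t < f x := hx.resolve_left hxc.ne
    exact Or.inr (this.trans_le (h1 hxc h hy.1))
  · exact Or.inl h
  · have hzc : c < z := h.trans_le hy.2
    have : t < f z := hz.resolve_left hzc.ne'
    exact Or.inr (this.trans_le (h2 h hzc hy.2))

lemma measurable_of_unimodal {f : ℝ → ℝ} {c : ℝ} (h1 : MonotoneOn f (Iio c))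
    (h2 : AntitoneOn f (Ioi c)) : Measurable f := by
  refine measurable_of_Ioi fun t => ?_
  have hT := (ordConnected_superlevel h1 h2 t).measurableSet
  by_cases hc : t < f c
  · rwa [insert_eq_of_mem (show c ∈ {x | t < f x} from hc)] at hT
  · have : f ⁻¹' Ioi t = insert c {x | t < f x} \ {c} := by
      rw [insert_sdiff_self_of_notMem (show c ∉ {x | t < f x} from hc)]; rfl
    rw [this]
    exact hT.diff (measurableSet_singleton c)

/-- If a continuous `K` has nonpositive integral over each compact interval containing `c`, then
its positive part has no more mass than its negative part on any order-connected set
containing `c`. -/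
lemma withDensity_le_of_ordConnected {K : ℝ → ℝ} (hK : Continuous K) {c : ℝ}
    (hint : ∀ a b, a ≤ c → c ≤ b → ∫ x in a..b, K x ≤ 0) {T : Set ℝ} (hT : T.OrdConnected)
    (hc : c ∈ T) :
    volume.withDensity (fun x => ENNReal.ofReal (K x)) T ≤
      volume.withDensity (fun x => ENNReal.ofReal (-K x)) T := by
  set μ := volume.withDensity (fun x => ENNReal.ofReal (K x))
  set ν := volume.withDensity (fun x => ENNReal.ofReal (-K x))
  have hbdd : ∀ S : Set ℝ, S.OrdConnected → c ∈ S → BddBelow S → BddAbove S → μ S ≤ ν S := by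
    intro S hS hcS hb ha
    have hcon : IsConnected S := ⟨⟨c, hcS⟩, hS.isPreconnected⟩
    have hae : S =ᵐ[volume] Icc (sInf S) (sSup S) := by
      refine (LE.le.eventuallyLE (subset_Icc_csInf_csSup hb ha)).antisymm ?_
      exact Ioo_ae_eq_Icc.symm.le.trans
        (LE.le.eventuallyLE (hcon.Ioo_csInf_csSup_subset hb ha))
    set a := sInf S
    set b := sSup S
    have hac : a ≤ c := csInf_le hb hcS
    have hcb : c ≤ b := le_csSup ha hcS
    rw [measure_congr ((withDensity_absolutelyContinuous _ _).ae_eq hae),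
      measure_congr ((withDensity_absolutelyContinuous _ _).ae_eq hae),
      withDensity_apply _ measurableSet_Icc, withDensity_apply _ measurableSet_Icc]
    have hi : Integrable K (volume.restrict (Icc a b)) := hK.integrableOn_Icc
    have h := hint a b hac hcb
    rw [intervalIntegral.integral_of_le (hac.trans hcb), ← integral_Icc_eq_integral_Ioc,
      integral_eq_lintegral_pos_part_sub_lintegral_neg_part hi, sub_nonpos] at h
    have hfin : ∀ {g : ℝ → ℝ}, Integrable g (volume.restrict (Icc a b)) →
        ∫⁻ x in Icc a b, ENNReal.ofReal (g x) ≠ ⊤ := fun hg => hg.lintegral_lt_top.ne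
    exact (ENNReal.toReal_le_toReal (hfin hi) (hfin hi.neg)).1 h
  -- exhaust `T` by its intersections with `[c - n, c + n]`
  have hU : T = ⋃ n : ℕ, T ∩ Icc (c - n) (c + n) := by
    rw [← inter_iUnion, eq_comm, inter_eq_left]
    intro x _
    obtain ⟨n, hn⟩ := exists_nat_ge |x - c|
    rw [abs_le] at hn
    exact mem_iUnion.2 ⟨n, by linarith, by linarith⟩
  have hmono : Monotone fun n : ℕ => T ∩ Icc (c - n) (c + n) := by
    intro m n hmn
    have : (m : ℝ) ≤ n := by exact_mod_cast hmn
    exact inter_subset_inter_right _ (Icc_subset_Icc (by linarith) (by linarith))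
  rw [hU, hmono.measure_iUnion, hmono.measure_iUnion]
  refine iSup_mono fun n => hbdd _ (hT.inter ordConnected_Icc) ⟨hc, ?_⟩ ?_ ?_
  · constructor <;> simp
  · exact bddBelow_Icc.mono inter_subset_right
  · exact bddAbove_Icc.mono inter_subset_right

/-- Layer-cake step: the superlevel sets of a unimodal density are, up to the point `c`, intervals
around `c`. -/
lemma lintegral_pos_le_neg {K f : ℝ → ℝ} (hK : Continuous K) {c : ℝ}
    (hint : ∀ a b, a ≤ c → c ≤ b → ∫ x in a..b, K x ≤ 0) (h0 : ∀ x, 0 ≤ f x)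
    (h1 : MonotoneOn f (Iio c)) (h2 : AntitoneOn f (Ioi c)) :
    ∫⁻ x, ENNReal.ofReal (K x) ∂(volume.withDensity fun x => ENNReal.ofReal (f x)) ≤
      ∫⁻ x, ENNReal.ofReal (-K x) ∂(volume.withDensity fun x => ENNReal.ofReal (f x)) := by
  have hf := measurable_of_unimodal h1 h2
  have key : ∀ g : ℝ → ℝ, Continuous g →
      ∫⁻ x, ENNReal.ofReal (g x) ∂(volume.withDensity fun x => ENNReal.ofReal (f x)) =
      ∫⁻ t in Ioi 0, volume.withDensity (fun x => ENNReal.ofReal (g x)) {x | t < f x} := by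
    intro g hg
    have hg' := hg.measurable
    rw [← lintegral_eq_lintegral_meas_lt _ (Eventually.of_forall h0) hf.aemeasurable,
      lintegral_withDensity_eq_lintegral_mul _ (by fun_prop) (by fun_prop),
      lintegral_withDensity_eq_lintegral_mul _ (by fun_prop) (by fun_prop), mul_comm]
  rw [key _ hK, key (fun x => -K x) hK.neg]
  refine lintegral_mono fun t => ?_
  refine (measure_mono (subset_insert c _)).trans
    ((withDensity_le_of_ordConnected hK hint (ordConnected_superlevel h1 h2 t)
      (mem_insert c _)).trans ?_)
  rw [insert_eq]
  refine (measure_union_le _ _).trans (le_of_eq ?_)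
  rw [withDensity_absolutelyContinuous _ _ (Real.volume_singleton (a := c)), zero_add]

lemma hasDerivAt_im_div {z : ℂ} (hz : 0 < z.im) (c x : ℝ) :
    HasDerivAt (fun x : ℝ => ((z - c) / (z - x)).im) ((z - c) * (1 / ((x : ℂ) - z) ^ 2)).im x := by
  have h1 : z - x ≠ 0 := by
    intro h
    have := congrArg Complex.im h
    simp at this
    exact hz.ne' this
  have h1' : (x : ℂ) - z ≠ 0 := by rwa [← neg_ne_zero, neg_sub]
  have hd : HasDerivAt (fun x : ℝ => z - (x : ℂ)) (-1) x := by
    simpa using (Complex.ofRealCLM.hasDerivAt (x := x)).const_sub z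
  have := (hasDerivAt_const x (z - c)).div hd h1
  have h2 := Complex.imCLM.hasFDerivAt.comp_hasDerivAt x this
  refine h2.congr_deriv ?_
  simp only [Complex.imCLM_apply]
  congr 1
  field_simp
  ring

/-- The antiderivative of the kernel, with its sign visible: nonnegative for `x ≤ c`, nonpositive
for `x ≥ c`. -/
lemma im_div_eq {z : ℂ} (hz : 0 < z.im) (c x : ℝ) :
    ((z - c) / (z - x)).im = - (x - c) * (z.im / ((z.re - x) ^ 2 + z.im ^ 2)) := by
  have h3 : (z.re - x) ^ 2 + z.im ^ 2 ≠ 0 := by positivity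
  rw [Complex.div_im]
  simp only [Complex.normSq_apply, Complex.sub_re, Complex.sub_im,
    Complex.ofReal_re, Complex.ofReal_im, sub_zero]
  rw [← sq, ← sq]
  field_simp
  ring

lemma continuous_kernel {z : ℂ} (hz : 0 < z.im) (c : ℝ) :
    Continuous fun x : ℝ => ((z - c) * (1 / ((x : ℂ) - z) ^ 2)).im := by
  refine Complex.continuous_im.comp (continuous_const.mul (continuous_const.div ?_ ?_))
  · fun_prop
  · intro x h
    have := congrArg Complex.im (pow_eq_zero_iff two_ne_zero |>.1 h)
    simp at this
    exact hz.ne' this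

lemma interval_integral_kernel_nonpos {z : ℂ} (hz : 0 < z.im) {a b c : ℝ} (ha : a ≤ c)
    (hb : c ≤ b) : ∫ x in a..b, ((z - c) * (1 / ((x : ℂ) - z) ^ 2)).im ≤ 0 := by
  rw [intervalIntegral.integral_eq_sub_of_hasDerivAt (fun x _ => hasDerivAt_im_div hz c x)
    ((continuous_kernel hz c).intervalIntegrable _ _), im_div_eq hz, im_div_eq hz]
  have h1 : 0 ≤ (b - c) * (z.im / ((z.re - b) ^ 2 + z.im ^ 2)) :=
    mul_nonneg (by linarith) (by positivity)
  have h2 : 0 ≤ (c - a) * (z.im / ((z.re - a) ^ 2 + z.im ^ 2)) :=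
    mul_nonneg (by linarith) (by positivity)
  nlinarith

/-! ### Comparison of measures through Poisson integrals -/

lemma lintegral_poisson_Icc {a b y : ℝ} (hab : a ≤ b) (hy : 0 < y) (t : ℝ) :
    ∫⁻ x in Icc a b, ENNReal.ofReal (y / ((t - x) ^ 2 + y ^ 2)) =
      ENNReal.ofReal (Real.arctan ((b - t) / y) - Real.arctan ((a - t) / y)) := by
  have hc : Continuous fun x : ℝ => y / ((t - x) ^ 2 + y ^ 2) :=
    continuous_const.div (by fun_prop) fun x => by positivity
  have hd : ∀ x, HasDerivAt (fun x => Real.arctan ((x - t) / y)) (y / ((t - x) ^ 2 + y ^ 2)) x := by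
    intro x
    have h := (((hasDerivAt_id x).sub_const t).div_const y).arctan
    refine h.congr_deriv ?_
    simp only [id]
    have : (t - x) ^ 2 + y ^ 2 ≠ 0 := by positivity
    have : 1 + ((x - t) / y) ^ 2 ≠ 0 := by positivity
    field_simp
    ring
  rw [← ofReal_integral_eq_lintegral_ofReal hc.integrableOn_Icc
    (Eventually.of_forall fun x => by simp only [Pi.zero_apply]; positivity),
    integral_Icc_eq_integral_Ioc, ← intervalIntegral.integral_of_le hab,
    intervalIntegral.integral_eq_sub_of_hasDerivAt (fun x _ => hd x) (hc.intervalIntegrable _ _)]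

/-- Uniform domination of the smoothed indicators of `[a, b]` by a multiple of `1 / (1 + t²)`. -/
lemma lintegral_poisson_Icc_le {a b : ℝ} (hab : a ≤ b) : ∃ C : ℝ, ∀ y, 0 < y → y ≤ 1 → ∀ t : ℝ,
    ∫⁻ x in Icc a b, ENNReal.ofReal (y / ((t - x) ^ 2 + y ^ 2)) ≤
      ENNReal.ofReal C * ENNReal.ofReal (1 / (1 + t ^ 2)) := by
  set R := |a| + |b| + 1 with hR
  have hR1 : 1 ≤ R := by have := abs_nonneg a; have := abs_nonneg b; linarith
  have hpi := Real.pi_pos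
  refine ⟨Real.pi * (1 + 4 * R ^ 2) + 8 * (b - a), fun y hy hy1 t => ?_⟩
  have hC : 0 ≤ Real.pi * (1 + 4 * R ^ 2) + 8 * (b - a) := by
    have : 0 ≤ b - a := by linarith
    positivity
  rw [← ENNReal.ofReal_mul hC]
  rcases le_or_gt |t| (2 * R) with ht | ht
  · rw [lintegral_poisson_Icc hab hy]
    refine ENNReal.ofReal_le_ofReal ?_
    have h1 := Real.arctan_lt_pi_div_two ((b - t) / y)
    have h2 := Real.neg_pi_div_two_lt_arctan ((a - t) / y)
    have h3 : t ^ 2 ≤ (2 * R) ^ 2 := by rw [← sq_abs]; gcongr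
    rw [mul_one_div, le_div_iff₀ (by positivity)]
    calc _ ≤ Real.pi * (1 + 4 * R ^ 2) := by
          gcongr
          · linarith
          · linarith
      _ ≤ _ := by linarith
  · have hx : ∀ x ∈ Icc a b, y / ((t - x) ^ 2 + y ^ 2) ≤ 8 * (1 / (1 + t ^ 2)) := by
      intro x hx
      have hxR : |x| ≤ R := by
        rw [abs_le]
        have := neg_abs_le a; have := le_abs_self b
        have := abs_nonneg a; have := abs_nonneg b
        constructor <;> linarith [hx.1, hx.2]
      have h1 : |t| / 2 ≤ |t - x| := by
        have := abs_sub_abs_le_abs_sub t x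
        linarith
      have h2 : t ^ 2 / 4 ≤ (t - x) ^ 2 := by
        rw [← sq_abs t, ← sq_abs (t - x)]
        have := abs_nonneg t
        nlinarith
      have h3 : 1 ≤ t ^ 2 := by
        rw [← sq_abs t]; nlinarith
      rw [mul_one_div, div_le_div_iff₀ (by positivity) (by positivity)]
      nlinarith
    calc _ ≤ ∫⁻ x in Icc a b, ENNReal.ofReal (8 * (1 / (1 + t ^ 2))) :=
          setLIntegral_mono measurable_const fun x h => ENNReal.ofReal_le_ofReal (hx x h)
      _ = ENNReal.ofReal (8 * (1 / (1 + t ^ 2)) * (b - a)) := by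
          rw [lintegral_const, Measure.restrict_apply_univ, Real.volume_Icc,
            ← ENNReal.ofReal_mul (by positivity)]
      _ ≤ _ := by
          refine ENNReal.ofReal_le_ofReal ?_
          have : 0 ≤ Real.pi * (1 + 4 * R ^ 2) * (1 / (1 + t ^ 2)) := by positivity
          linarith

lemma tendsto_arctan_top {s : ℝ} (hs : 0 < s) {y : ℕ → ℝ} (hy : Tendsto y atTop (𝓝[>] 0)) :
    Tendsto (fun n => Real.arctan (s / y n)) atTop (𝓝 (Real.pi / 2)) := by
  refine (Real.tendsto_arctan_atTop.mono_right nhdsWithin_le_nhds).comp ?_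
  simp only [div_eq_mul_inv]
  exact (tendsto_inv_nhdsGT_zero.comp hy).const_mul_atTop hs

lemma tendsto_arctan_bot {s : ℝ} (hs : s < 0) {y : ℕ → ℝ} (hy : Tendsto y atTop (𝓝[>] 0)) :
    Tendsto (fun n => Real.arctan (s / y n)) atTop (𝓝 (-(Real.pi / 2))) := by
  have := (tendsto_arctan_top (neg_pos.2 hs) hy).neg
  simpa only [neg_div, Real.arctan_neg, neg_neg] using this

/-- Stieltjes inversion, comparison form: integrate the Poisson inequality over `[a, b]` and let
the height tend to `0`. -/
lemma measure_Ioo_le_Icc_of_poisson_le {μ ν : Measure ℝ} [SFinite μ] [SFinite ν]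
    (hν : (∫⁻ x, ENNReal.ofReal (1 / (1 + x ^ 2)) ∂ν) < ⊤)
    (h : ∀ x y : ℝ, 0 < y → ∫⁻ t, ENNReal.ofReal (y / ((t - x) ^ 2 + y ^ 2)) ∂μ ≤
      ∫⁻ t, ENNReal.ofReal (y / ((t - x) ^ 2 + y ^ 2)) ∂ν) {a b : ℝ} (hab : a ≤ b) :
    μ (Ioo a b) ≤ ν (Icc a b) := by
  set Φ : ℝ → ℝ → ℝ≥0∞ := fun y t => ∫⁻ x in Icc a b, ENNReal.ofReal (y / ((t - x) ^ 2 + y ^ 2))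
    with hΦ
  have hΦm : ∀ y, Measurable (Φ y) := by
    intro y
    refine Measurable.lintegral_prod_right' (f := fun p : ℝ × ℝ =>
      ENNReal.ofReal (y / ((p.1 - p.2) ^ 2 + y ^ 2))) (by fun_prop)
  have hle : ∀ y, 0 < y → ∫⁻ t, Φ y t ∂μ ≤ ∫⁻ t, Φ y t ∂ν := by
    intro y hy
    have hm : Measurable (Function.uncurry fun t x : ℝ =>
        ENNReal.ofReal (y / ((t - x) ^ 2 + y ^ 2))) := by
      unfold Function.uncurry; fun_prop
    simp only [hΦ]
    rw [lintegral_lintegral_swap hm.aemeasurable, lintegral_lintegral_swap hm.aemeasurable]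
    exact lintegral_mono fun x => h x y hy
  set y : ℕ → ℝ := fun n => 1 / ((n : ℝ) + 1) with hyd
  have hy0 : ∀ n, 0 < y n := fun n => by positivity
  have hy1 : ∀ n, y n ≤ 1 := fun n => by
    rw [hyd]; simp only; rw [div_le_one (by positivity)]; linarith [Nat.cast_nonneg (α := ℝ) n]
  have hyt : Tendsto y atTop (𝓝[>] 0) :=
    tendsto_nhdsWithin_iff.2 ⟨tendsto_one_div_add_atTop_nhds_zero_nat,
      Eventually.of_forall hy0⟩
  have hpi := Real.pi_pos
  have hlow : ENNReal.ofReal Real.pi * μ (Ioo a b) ≤ ∫⁻ t, liminf (fun n => Φ (y n) t) atTop ∂μ := by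
    rw [← lintegral_indicator_const measurableSet_Ioo]
    refine lintegral_mono fun t => ?_
    by_cases ht : t ∈ Ioo a b
    · simp only [ht, indicator_of_mem]
      refine (Tendsto.liminf_eq ?_).ge
      simp only [hΦ]
      simp_rw [fun n => lintegral_poisson_Icc hab (hy0 n) t]
      refine ENNReal.tendsto_ofReal ?_
      have := (tendsto_arctan_top (sub_pos.2 ht.2) hyt).sub
        (tendsto_arctan_bot (sub_neg.2 ht.1) hyt)
      rwa [sub_neg_eq_add, add_halves] at this
    · simp only [ht, not_false_eq_true, indicator_of_notMem, zero_le]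
  have hup : ∫⁻ t, limsup (fun n => Φ (y n) t) atTop ∂ν ≤ ENNReal.ofReal Real.pi * ν (Icc a b) := by
    rw [← lintegral_indicator_const measurableSet_Icc]
    refine lintegral_mono fun t => ?_
    by_cases ht : t ∈ Icc a b
    · simp only [ht, indicator_of_mem]
      refine limsup_le_of_le (h := Eventually.of_forall fun n => ?_)
      simp only [hΦ]
      rw [lintegral_poisson_Icc hab (hy0 n)]
      refine ENNReal.ofReal_le_ofReal ?_
      have h1 := Real.arctan_lt_pi_div_two ((b - t) / y n)
      have h2 := Real.neg_pi_div_two_lt_arctan ((a - t) / y n)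
      linarith
    · simp only [ht, not_false_eq_true, indicator_of_notMem]
      refine (Tendsto.limsup_eq ?_).le
      simp only [hΦ]
      simp_rw [fun n => lintegral_poisson_Icc hab (hy0 n) t]
      rw [← ENNReal.ofReal_zero]
      refine ENNReal.tendsto_ofReal ?_
      rw [mem_Icc, not_and_or, not_le, not_le] at ht
      rcases ht with ht | ht
      · simpa using (tendsto_arctan_top (by linarith : 0 < b - t) hyt).sub
          (tendsto_arctan_top (sub_pos.2 ht) hyt)
      · simpa using (tendsto_arctan_bot (sub_neg.2 ht) hyt).sub
          (tendsto_arctan_bot (by linarith : a - t < 0) hyt)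
  obtain ⟨C, hC⟩ := lintegral_poisson_Icc_le hab
  have hlim : limsup (fun n => ∫⁻ t, Φ (y n) t ∂ν) atTop ≤
      ∫⁻ t, limsup (fun n => Φ (y n) t) atTop ∂ν := by
    refine limsup_lintegral_le (fun t => ENNReal.ofReal C * ENNReal.ofReal (1 / (1 + t ^ 2)))
      (fun n => hΦm _) (fun n => Eventually.of_forall fun t => hC _ (hy0 n) (hy1 n) t) ?_
    rw [lintegral_const_mul _ (by fun_prop)]
    exact ENNReal.mul_ne_top ENNReal.ofReal_ne_top hν.ne
  have hfin := calc ENNReal.ofReal Real.pi * μ (Ioo a b)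
      ≤ ∫⁻ t, liminf (fun n => Φ (y n) t) atTop ∂μ := hlow
    _ ≤ liminf (fun n => ∫⁻ t, Φ (y n) t ∂μ) atTop := lintegral_liminf_le fun n => hΦm _
    _ ≤ liminf (fun n => ∫⁻ t, Φ (y n) t ∂ν) atTop :=
        liminf_le_liminf (Eventually.of_forall fun n => hle _ (hy0 n))
    _ ≤ limsup (fun n => ∫⁻ t, Φ (y n) t ∂ν) atTop := liminf_le_limsup
    _ ≤ _ := hlim
    _ ≤ _ := hup
  exact (ENNReal.mul_le_mul_iff_right (by simpa using hpi) ENNReal.ofReal_ne_top).1 hfin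

/-- Comparing Poisson integrals gives the inequality on compact intervals, hence on closed balls; the
Besicovitch covering theorem extends it to all sets. -/
lemma measure_le_of_poisson_le {μ ν : Measure ℝ} [SFinite μ] [IsLocallyFiniteMeasure ν]
    (hν : (∫⁻ x, ENNReal.ofReal (1 / (1 + x ^ 2)) ∂ν) < ⊤)
    (h : ∀ x y : ℝ, 0 < y → ∫⁻ t, ENNReal.ofReal (y / ((t - x) ^ 2 + y ^ 2)) ∂μ ≤
      ∫⁻ t, ENNReal.ofReal (y / ((t - x) ^ 2 + y ^ 2)) ∂ν) (s : Set ℝ) : μ s ≤ ν s := by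
  have hIcc : ∀ a b : ℝ, a ≤ b → μ (Icc a b) ≤ ν (Icc a b) := by
    intro a b hab
    have hI : Icc a b = ⋂ n : ℕ, Icc (a - 1 / ((n : ℝ) + 1)) (b + 1 / ((n : ℝ) + 1)) := by
      ext x
      simp only [mem_iInter, mem_Icc]
      refine ⟨fun hx n => ?_, fun hx => ?_⟩
      · have : 0 < 1 / ((n : ℝ) + 1) := by positivity
        constructor <;> linarith [hx.1, hx.2]
      · have ht := tendsto_one_div_add_atTop_nhds_zero_nat (𝕜 := ℝ)
        constructor
        · refine le_of_tendsto' (x := atTop) (f := fun n : ℕ => a - 1 / ((n : ℝ) + 1)) ?_ fun n => (hx n).1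
          simpa using ht.const_sub a
        · refine ge_of_tendsto' (x := atTop) (f := fun n : ℕ => b + 1 / ((n : ℝ) + 1)) ?_ fun n => (hx n).2
          simpa using ht.const_add b
    have hanti : Antitone fun n : ℕ => Icc (a - 1 / ((n : ℝ) + 1)) (b + 1 / ((n : ℝ) + 1)) := by
      intro m n hmn
      have : 1 / ((n : ℝ) + 1) ≤ 1 / ((m : ℝ) + 1) := by gcongr
      exact Icc_subset_Icc (by linarith) (by linarith)
    have htend := tendsto_measure_iInter_atTop (μ := ν)
      (fun n : ℕ => (measurableSet_Icc (a := a - 1 / ((n : ℝ) + 1))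
        (b := b + 1 / ((n : ℝ) + 1))).nullMeasurableSet) hanti
      ⟨0, isCompact_Icc.measure_lt_top.ne⟩
    rw [← hI] at htend
    refine ge_of_tendsto' htend fun n => ?_
    have hpos : 0 < 1 / ((n : ℝ) + 1) := by positivity
    refine (measure_mono ?_).trans (measure_Ioo_le_Icc_of_poisson_le hν h (by linarith))
    exact Icc_subset_Ioo (by linarith) (by linarith)
  refine (Besicovitch.vitaliFamily μ).measure_le_of_frequently_le ν Measure.AbsolutelyContinuous.rfl
    s fun x _ => ?_
  refine (Besicovitch.tendsto_filterAt μ x).frequently (Eventually.frequently ?_)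
  filter_upwards [self_mem_nhdsWithin] with r hr
  rw [Real.closedBall_eq_Icc]
  exact hIcc _ _ (by linarith [mem_Ioi.1 hr])

/-! ### Densities of measures that decrease under homotheties -/

/-- A Lebesgue-null set `N` not containing `c` is `ρ`-null: for `ρ`-every `t ≠ c`, the set of
`r` with `c + r (t - c) ∈ N` is Lebesgue-null, so by Tonelli some `r ∈ [1, 2]` has
`ρ {t | c + r (t - c) ∈ N} = 0`. -/
lemma absolutelyContinuous_of_scaling {ρ : Measure ℝ} [SFinite ρ] {c : ℝ} (hc : ρ {c} = 0)
    (hs : ∀ r : ℝ, 1 ≤ r → ∀ A, MeasurableSet A →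
      ρ A ≤ ENNReal.ofReal r * ρ ((fun x => c + r * (x - c)) ⁻¹' A)) : ρ ≪ volume := by
  refine Measure.AbsolutelyContinuous.mk fun N hN h0 => ?_
  have hE : MeasurableSet {p : ℝ × ℝ | c + p.2 * (p.1 - c) ∈ N} := by
    have : Measurable fun p : ℝ × ℝ => c + p.2 * (p.1 - c) := by fun_prop
    exact this hN
  have hprod : (ρ.prod volume) {p : ℝ × ℝ | c + p.2 * (p.1 - c) ∈ N} = 0 := by
    rw [Measure.measure_prod_null hE]
    have hne : ∀ᵐ t ∂ρ, t ≠ c := by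
      rw [ae_iff]; simpa using hc
    filter_upwards [hne] with t ht
    have hts : t - c ≠ 0 := sub_ne_zero.2 ht
    have : Prod.mk t ⁻¹' {p : ℝ × ℝ | c + p.2 * (p.1 - c) ∈ N} =
        (fun r => r * (t - c)) ⁻¹' ((fun x => c + x) ⁻¹' N) := rfl
    rw [this, Real.volume_preimage_mul_right hts, measure_preimage_add, h0, mul_zero]
    rfl
  have hswap := (Measure.measurePreserving_swap (μ := (volume : Measure ℝ)) (ν := ρ)).measure_preimage
    hE.nullMeasurableSet
  rw [hprod] at hswap
  have hae := Measure.measure_ae_null_of_prod_null hswap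
  obtain ⟨r, hr, hr0⟩ : ∃ r ∈ Ioo (1 : ℝ) 2,
      ρ ((fun x => c + r * (x - c)) ⁻¹' N) = 0 := by
    by_contra! hcon
    have : (volume (Ioo (1 : ℝ) 2)) = 0 := by
      refine measure_mono_null (fun r hr => ?_) (ae_iff.1 hae)
      exact hcon r hr
    norm_num at this
  have := hs r hr.1.le N hN
  rw [hr0, mul_zero] at this
  exact le_antisymm this (zero_le)

/-- Upper right density of `ρ` with respect to Lebesgue measure. -/
def upperDensity (ρ : Measure ℝ) (x : ℝ) : ℝ≥0∞ :=
  limsup (fun y => ρ (Icc x y) / volume (Icc x y)) (𝓝[>] x)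

lemma upperDensity_scaling {ρ : Measure ℝ} {c : ℝ}
    (hs : ∀ r : ℝ, 1 ≤ r → ∀ A, MeasurableSet A →
      ρ A ≤ ENNReal.ofReal r * ρ ((fun x => c + r * (x - c)) ⁻¹' A)) {r : ℝ} (hr : 1 ≤ r) (x : ℝ) :
    upperDensity ρ (c + r * (x - c)) ≤ upperDensity ρ x := by
  have hr0 : 0 < r := by linarith
  set g : ℝ → ℝ := fun y => c + r * (y - c) with hg
  set k : ℝ → ℝ := fun y => c + (y - c) / r with hk
  have hgk : ∀ y, g (k y) = y := fun y => by simp only [hg, hk]; field_simp; ring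
  have hkg : ∀ y, k (g y) = y := fun y => by simp only [hg, hk]; field_simp; ring
  have hfil : 𝓝[>] (g x) ≤ map g (𝓝[>] x) := by
    refine le_map_of_right_inverse (Eventually.of_forall hgk) ?_
    refine tendsto_nhdsWithin_iff.2 ⟨?_, ?_⟩
    · have : Continuous k := by fun_prop
      have := this.tendsto (g x)
      rw [hkg] at this
      exact this.mono_left nhdsWithin_le_nhds
    · filter_upwards [self_mem_nhdsWithin] with y hy
      have hy' : c + r * (x - c) < y := hy
      simp only [hk, mem_Ioi]
      have : x - c < (y - c) / r := by rw [lt_div_iff₀ hr0]; linarith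
      linarith
  unfold upperDensity
  calc _ ≤ limsup (fun y => ρ (Icc (g x) y) / volume (Icc (g x) y)) (map g (𝓝[>] x)) :=
        limsup_le_limsup_of_le hfil
    _ = limsup (fun y => ρ (Icc (g x) (g y)) / volume (Icc (g x) (g y))) (𝓝[>] x) := by
        rw [← limsup_comp]; rfl
    _ ≤ _ := by
        refine limsup_le_limsup (Eventually.of_forall fun y => ?_)
        have h1 := hs r hr _ (measurableSet_Icc (a := g x) (b := g y))
        have h2 : g ⁻¹' Icc (g x) (g y) = Icc x y := by
          ext t
          simp only [hg, mem_preimage, mem_Icc, add_le_add_iff_left, mul_le_mul_iff_right₀ hr0,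
            sub_le_sub_iff_right]
        rw [h2] at h1
        have h3 : volume (Icc (g x) (g y)) = ENNReal.ofReal r * volume (Icc x y) := by
          rw [Real.volume_Icc, Real.volume_Icc, ← ENNReal.ofReal_mul hr0.le]
          congr 1; simp only [hg]; ring
        dsimp only
        rw [h3]
        refine (ENNReal.div_le_div_right h1 _).trans ?_
        rw [ENNReal.mul_div_mul_left _ _ (by simpa using hr0) ENNReal.ofReal_ne_top]

/-- The upper right density itself serves as the monotone version of the Radon-Nikodym derivative;
it is finite off `c` since it is finite almost everywhere and monotone on each side. -/
lemma exists_density_of_scaling {ρ : Measure ℝ} [IsLocallyFiniteMeasure ρ] {c : ℝ} (hc : ρ {c} = 0)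
    (hs : ∀ r : ℝ, 1 ≤ r → ∀ A, MeasurableSet A →
      ρ A ≤ ENNReal.ofReal r * ρ ((fun x => c + r * (x - c)) ⁻¹' A)) :
    ∃ f : ℝ → ℝ, (∀ x, 0 ≤ f x) ∧ MonotoneOn f (Iio c) ∧ AntitoneOn f (Ioi c) ∧
      ρ = volume.withDensity (fun x => ENNReal.ofReal (f x)) := by
  have hac := absolutelyContinuous_of_scaling hc hs
  have hD : ∀ᵐ x ∂(volume : Measure ℝ), upperDensity ρ x = ρ.rnDeriv volume x := by
    filter_upwards [(IsUnifLocDoublingMeasure.vitaliFamily (volume : Measure ℝ) 1).ae_tendsto_rnDeriv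
      ρ] with x hx
    exact (hx.comp (Real.tendsto_Icc_vitaliFamily_right x)).limsup_eq
  have hfin_ae : ∀ᵐ x ∂(volume : Measure ℝ), upperDensity ρ x < ⊤ := by
    filter_upwards [hD, Measure.rnDeriv_lt_top ρ volume] with x h1 h2
    rwa [h1]
  -- along rays from `c` the density decreases
  have hray : ∀ x x' r : ℝ, 1 ≤ r → x = c + r * (x' - c) → upperDensity ρ x ≤ upperDensity ρ x' := by
    rintro x x' r hr rfl
    exact upperDensity_scaling hs hr x'
  have hanti : ∀ x y, c < x → x ≤ y → upperDensity ρ y ≤ upperDensity ρ x := by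
    intro x y hx hxy
    have : 0 < x - c := sub_pos.2 hx
    refine hray y x ((y - c) / (x - c)) ?_ ?_
    · rw [one_le_div this]; linarith
    · field_simp; ring
  have hmono : ∀ x y, y < c → x ≤ y → upperDensity ρ x ≤ upperDensity ρ y := by
    intro x y hy hxy
    have : 0 < c - y := sub_pos.2 hy
    refine hray x y ((c - x) / (c - y)) ?_ ?_
    · rw [one_le_div this]; linarith
    · field_simp; ring
  have hex : ∀ a b : ℝ, a < b → ∃ x ∈ Ioo a b, upperDensity ρ x < ⊤ := by
    intro a b hab
    by_contra! hcon
    have : volume (Ioo a b) = 0 :=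
      measure_mono_null (fun x hx => not_lt.2 (hcon x hx)) (ae_iff.1 hfin_ae)
    rw [Real.volume_Ioo, ENNReal.ofReal_eq_zero] at this
    linarith
  have hfin_right : ∀ x, c < x → upperDensity ρ x ≠ ⊤ := by
    intro x hx
    obtain ⟨t, ht, ht'⟩ := hex c x hx
    exact ((hanti t x ht.1 ht.2.le).trans_lt ht').ne
  have hfin_left : ∀ x, x < c → upperDensity ρ x ≠ ⊤ := by
    intro x hx
    obtain ⟨t, ht, ht'⟩ := hex x c hx
    exact ((hmono x t ht.2 ht.1.le).trans_lt ht').ne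
  refine ⟨fun x => (upperDensity ρ x).toReal, fun x => ENNReal.toReal_nonneg, ?_, ?_, ?_⟩
  · intro x _ y hy hxy
    exact ENNReal.toReal_mono (hfin_left y hy) (hmono x y hy hxy)
  · intro x hx y _ hxy
    exact ENNReal.toReal_mono (hfin_right x hx) (hanti x y hx hxy)
  · rw [← Measure.withDensity_rnDeriv_eq ρ volume hac]
    refine withDensity_congr_ae ?_
    filter_upwards [hD, hfin_ae] with x h1 h2
    rw [Measure.withDensity_rnDeriv_eq ρ volume hac, ENNReal.ofReal_toReal h2.ne, h1]

/-! ### The two implications -/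

/-- Easy direction: `Im [(z - c) P_τ'(z)] = ∫ Im [(z - c) / (x - z)²] dτ(x)`, and the atom at `c`
and the unimodal density each contribute a nonpositive amount. -/
lemma pick_nonpos_of_unimodal {τ : Measure ℝ}
    (hτ : (∫⁻ x, ENNReal.ofReal (1 / (1 + x ^ 2)) ∂τ) < ⊤) {c : ℝ} (h : IsUnimodalWithMode τ c)
    {z : ℂ} (hz : 0 < z.im) :
    ((z - (c : ℂ)) * deriv (fun w : ℂ => ∫ x : ℝ, pickKernel w x ∂τ) z).im ≤ 0 := by
  obtain ⟨hi, hd⟩ := hasDerivAt_pick hτ hz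
  have hi' := hi.const_mul (z - c)
  have hi'' : Integrable (fun x : ℝ => ((z - c) * (1 / ((x : ℂ) - z) ^ 2)).im) τ := hi'.im
  have him : (∫ x : ℝ, (z - c) * (1 / ((x : ℂ) - z) ^ 2) ∂τ).im =
      ∫ x : ℝ, ((z - c) * (1 / ((x : ℂ) - z) ^ 2)).im ∂τ :=
    (Complex.imCLM.integral_comp_comm hi').symm
  rw [hd.deriv, ← integral_const_mul, him,
    integral_eq_lintegral_pos_part_sub_lintegral_neg_part hi'', sub_nonpos]
  refine ENNReal.toReal_mono hi''.neg.lintegral_lt_top.ne ?_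
  obtain ⟨c₀, f, h0, h1, h2, rfl⟩ := h
  simp only [lintegral_add_measure, lintegral_smul_measure]
  refine add_le_add ?_ (lintegral_pos_le_neg (continuous_kernel hz c)
    (fun a b ha hb => interval_integral_kernel_nonpos hz ha hb) h0 h1 h2)
  have hK := (continuous_kernel hz c).measurable
  rw [lintegral_dirac' _ (by fun_prop), lintegral_dirac' _ (by fun_prop)]
  have hneg : ((z - c) * (1 / ((c : ℂ) - z) ^ 2)).im ≤ 0 := by
    have hne : z - c ≠ 0 := by
      have := sub_ne_zero_of_im_pos hz c
      rwa [← neg_ne_zero, neg_sub]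
    have : (z - c) * (1 / ((c : ℂ) - z) ^ 2) = (z - c)⁻¹ := by
      rw [← neg_sub z (c : ℂ), neg_sq]; field_simp
    rw [this, Complex.inv_im]
    refine div_nonpos_of_nonpos_of_nonneg ?_ (Complex.normSq_nonneg _)
    simp only [Complex.sub_im, Complex.ofReal_im]; linarith
  gcongr
  linarith

/-- The differential inequality says exactly that `Im P_τ` decreases along rays from `c`, because
`r * d/dr (Im P_τ (c + r (z - c))) = Im [(w - c) P_τ'(w)]` at `w = c + r (z - c)`. -/
lemma pick_im_antitone {τ : Measure ℝ}
    (hτ : (∫⁻ x, ENNReal.ofReal (1 / (1 + x ^ 2)) ∂τ) < ⊤) {c : ℝ}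
    (h : ∀ z : ℂ, 0 < z.im →
      ((z - (c : ℂ)) * deriv (fun w : ℂ => ∫ x : ℝ, pickKernel w x ∂τ) z).im ≤ 0)
    {z : ℂ} (hz : 0 < z.im) {r : ℝ} (hr : 1 ≤ r) :
    (∫ x : ℝ, pickKernel (c + r * (z - c)) x ∂τ).im ≤ (∫ x : ℝ, pickKernel z x ∂τ).im := by
  set P : ℂ → ℂ := fun w => ∫ x : ℝ, pickKernel w x ∂τ with hP
  have hpos : ∀ s : ℝ, 0 < s → 0 < ((c : ℂ) + s * (z - c)).im := by
    intro s hs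
    simp only [Complex.add_im, Complex.ofReal_im, Complex.mul_im, Complex.ofReal_re,
      Complex.sub_im]
    simpa using mul_pos hs hz
  have hd : ∀ s : ℝ, 0 < s → HasDerivAt (fun s : ℝ => (P (c + s * (z - c))).im)
      (deriv P (c + s * (z - c)) * (z - c)).im s := by
    intro s hs
    have h1 : HasDerivAt P (deriv P (c + s * (z - c))) (c + s * (z - c)) :=
      (hasDerivAt_pick hτ (hpos s hs)).2.differentiableAt.hasDerivAt
    have h2 : HasDerivAt (fun s : ℝ => (c : ℂ) + s * (z - c)) (z - c) s := by
      simpa using ((Complex.ofRealCLM.hasDerivAt (x := s)).mul_const (z - c)).const_add (c : ℂ)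
    exact Complex.imCLM.hasFDerivAt.comp_hasDerivAt s (h1.comp s h2)
  have hanti : AntitoneOn (fun s : ℝ => (P (c + s * (z - c))).im) (Ici 1) := by
    refine antitoneOn_of_deriv_nonpos (convex_Ici 1) ?_ ?_ ?_
    · intro s hs
      exact (hd s (one_pos.trans_le hs)).continuousAt.continuousWithinAt
    · intro s hs
      rw [interior_Ici] at hs
      exact (hd s (one_pos.trans hs)).differentiableAt.differentiableWithinAt
    · intro s hs
      rw [interior_Ici] at hs
      have hs0 : 0 < s := one_pos.trans hs
      rw [(hd s hs0).deriv]
      have h1 := h _ (hpos s hs0)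
      have h2 : ((c : ℂ) + s * (z - c) - c) * deriv P (c + s * (z - c)) =
          s * (deriv P (c + s * (z - c)) * (z - c)) := by ring
      rw [h2, Complex.im_ofReal_mul] at h1
      exact nonpos_of_mul_nonpos_right h1 hs0
  have := hanti (mem_Ici.2 le_rfl) (mem_Ici.2 hr) hr
  simpa using this

/-- The Pick inequality makes `τ` decrease under homotheties centred at `c`: the Poisson integral of
`τ` is compared with that of `r` times the push-forward of `τ` under `x ↦ c + r (x - c)`. -/
lemma scaling_of_pick {τ : Measure ℝ}
    (hτ : (∫⁻ x, ENNReal.ofReal (1 / (1 + x ^ 2)) ∂τ) < ⊤) {c : ℝ}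
    (h : ∀ z : ℂ, 0 < z.im →
      ((z - (c : ℂ)) * deriv (fun w : ℂ => ∫ x : ℝ, pickKernel w x ∂τ) z).im ≤ 0)
    {r : ℝ} (hr : 1 ≤ r) {A : Set ℝ} (hA : MeasurableSet A) :
    τ A ≤ ENNReal.ofReal r * τ ((fun x => c + r * (x - c)) ⁻¹' A) := by
  have hr0 : 0 < r := by linarith
  have hm : Measurable fun x : ℝ => c + r * (x - c) := by fun_prop
  have := isLocallyFinite_of_weight hτ
  set ν : Measure ℝ := ENNReal.ofReal r • τ.map (fun x => c + r * (x - c)) with hνd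
  have hν : (∫⁻ x, ENNReal.ofReal (1 / (1 + x ^ 2)) ∂ν) < ⊤ := by
    rw [hνd, lintegral_smul_measure, lintegral_map (by fun_prop) hm, smul_eq_mul]
    refine ENNReal.mul_lt_top ENNReal.ofReal_lt_top ?_
    calc _ ≤ ∫⁻ t, ENNReal.ofReal (2 + 8 * c ^ 2) * ENNReal.ofReal (1 / (1 + t ^ 2)) ∂τ := by
          refine lintegral_mono fun t => ?_
          rw [← ENNReal.ofReal_mul (by positivity)]
          refine ENNReal.ofReal_le_ofReal ?_
          rw [mul_one_div, div_le_div_iff₀ (by positivity) (by positivity)]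
          set s := c + r * (t - c) with hs
          have h1 : |t| ≤ |s| + 2 * |c| := by
            have h2 : |t - c| ≤ r * |t - c| := le_mul_of_one_le_left (abs_nonneg _) hr
            have h3 : r * |t - c| = |s - c| := by
              rw [hs, add_sub_cancel_left, abs_mul, abs_of_pos hr0]
            have h4 := abs_sub_abs_le_abs_sub t c
            have h5 : |s - c| ≤ |s| + |c| := abs_sub s c
            linarith
          have h2 : t ^ 2 ≤ (|s| + 2 * |c|) ^ 2 := by rw [← sq_abs t]; gcongr
          have h3 : (|s| + 2 * |c|) ^ 2 ≤ 2 * s ^ 2 + 8 * c ^ 2 := by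
            rw [← sq_abs s, ← sq_abs c]; nlinarith [sq_nonneg (|s| - 2 * |c|)]
          nlinarith [mul_nonneg (sq_nonneg c) (sq_nonneg s)]
      _ = ENNReal.ofReal (2 + 8 * c ^ 2) * ∫⁻ t, ENNReal.ofReal (1 / (1 + t ^ 2)) ∂τ :=
          lintegral_const_mul _ (by fun_prop)
      _ < ⊤ := ENNReal.mul_lt_top ENNReal.ofReal_lt_top hτ
  have := isLocallyFinite_of_weight hν
  have hle := measure_le_of_poisson_le (μ := τ) (ν := ν) hν ?_ A
  · rwa [hνd, Measure.smul_apply, Measure.map_apply hm hA, smul_eq_mul] at hle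
  intro x y hy
  -- `z` is the preimage of `x + i y` under the homothety `w ↦ c + r (w - c)`
  set z : ℂ := ⟨c + (x - c) / r, y / r⟩ with hz
  have hzim : 0 < z.im := div_pos hy hr0
  have hw : (c : ℂ) + r * (z - c) = ⟨x, y⟩ := by
    apply Complex.ext
    · simp [hz]; field_simp; ring
    · simp [hz]; field_simp
  have h1 := pick_im_antitone hτ h hzim hr
  rw [hw] at h1
  have h2 := pick_im hτ (z := ⟨x, y⟩) hy
  simp only at h2
  rw [h2]
  refine (ENNReal.ofReal_le_ofReal h1).trans (le_of_eq ?_)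
  rw [← pick_im hτ hzim, hνd, lintegral_smul_measure, lintegral_map (by fun_prop) hm, smul_eq_mul,
    ← lintegral_const_mul _ (by fun_prop)]
  refine lintegral_congr fun t => ?_
  rw [← ENNReal.ofReal_mul hr0.le]
  congr 1
  simp only [hz]
  have e1 : (t - (c + (x - c) / r)) ^ 2 + (y / r) ^ 2 ≠ 0 := by positivity
  have e2 : (c + r * (t - c) - x) ^ 2 + y ^ 2 ≠ 0 := by positivity
  have e3 : (c + r * (t - c) - x) ^ 2 + y ^ 2 =
      r ^ 2 * ((t - (c + (x - c) / r)) ^ 2 + (y / r) ^ 2) := by field_simp; ring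
  rw [e3]
  field_simp

/-- The atom at `c` is split off, and the scaling inequality passes to the rest of `τ` because
homotheties centred at `c` preserve the complement of `c`. -/
lemma unimodal_of_scaling {τ : Measure ℝ} [IsLocallyFiniteMeasure τ] {c : ℝ}
    (hs : ∀ r : ℝ, 1 ≤ r → ∀ A, MeasurableSet A →
      τ A ≤ ENNReal.ofReal r * τ ((fun x => c + r * (x - c)) ⁻¹' A)) :
    IsUnimodalWithMode τ c := by
  have hsc : MeasurableSet ({c} : Set ℝ) := measurableSet_singleton c
  obtain ⟨f, h0, h1, h2, hf⟩ := exists_density_of_scaling (ρ := τ.restrict {c}ᶜ) (c := c)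
    (by rw [Measure.restrict_apply hsc]; simp) (fun r hr A hA => by
      have hm : Measurable fun x : ℝ => c + r * (x - c) := by fun_prop
      rw [Measure.restrict_apply hA, Measure.restrict_apply (hm hA)]
      refine (hs r hr _ (hA.inter hsc.compl)).trans (le_of_eq ?_)
      congr 2
      ext x
      have : r ≠ 0 := by linarith
      simp [this, sub_eq_zero])
  refine ⟨τ {c}, f, h0, h1, h2, ?_⟩
  rw [← hf, ← Measure.restrict_singleton, Measure.restrict_add_restrict_compl hsc]

/-- generalized Isii criterion. `τ` is unimodal with mode `c` iff
`Im[(z - c) P_τ'(z)] ≤ 0` on the upper half-plane, where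
`P_τ(z) = ∫ (1 + xz) / ((x - z)(1 + x²)) dτ(x)`. -/
theorem unimodal_iff_pick (τ : Measure ℝ)
    (hτ : (∫⁻ x, ENNReal.ofReal (1 / (1 + x ^ 2)) ∂τ) < ⊤) (c : ℝ) :
    IsUnimodalWithMode τ c ↔
      ∀ z : ℂ, 0 < z.im →
        ((z - (c : ℂ)) *
          deriv (fun w : ℂ =>
            ∫ x : ℝ, (1 + (x : ℂ) * w) / (((x : ℂ) - w) * (1 + (x : ℂ) ^ 2)) ∂τ) z).im ≤ 0 := by
  have := isLocallyFinite_of_weight hτ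
  exact ⟨fun h _ hz => pick_nonpos_of_unimodal hτ h hz,
    fun h => unimodal_of_scaling fun r hr A hA => scaling_of_pick hτ h hr hA⟩
end
end

section
/- Let μ be a probability measure on ℝ₊ = (0,∞), let c ∈ ℝ₊, and define ψ_μ(z) = ∫₀^∞ xz/(1−xz) dμ(x) for z ∈ ℂ∖[0,∞). Then μ is log-unimodal with mode c if and only if Im[z(1 − cz)·ψ_μ'(z)] ≥ 0 for all z in the upper half-plane ℂ⁺ = {z ∈ ℂ : Im z > 0}. -/
/-!
Write `w = 1 / z` and `ν = x dμ(x)`. In logarithmic coordinates the density of `log_* μ` at `t` is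
the density of `ν` at `e^t`, so `μ` is log-unimodal with mode `c` exactly when `ν` is unimodal with
mode `c`, and `z (1 - c z) ψ_μ'(z) = (w - c) ∫ dν(x) / (w - x)²`.

*Log-unimodality gives positivity.* A unimodal density is a mixture of indicators of intervals
around its mode (its superlevel sets). For one such interval the integral of the kernel is
explicit (`kernel_interval_nonneg`) and has nonnegative imaginary part; integrating over the levels
gives `integral_unimodal_density_nonneg`.

*Positivity gives log-unimodality.* The imaginary part in question is, up to the factor `-r`, the
radial derivative of `Im ψ_μ(1 / w)` along the ray `w = c + r e`, and `Im ψ_μ(1 / w)` is the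
Poisson integral of `ν` at `conj w`. Hence the Poisson integral of `ν` does not increase along rays
from `c` (`im_psi_antitone`). Since dilating the half-plane dilates the measure, and Poisson
integrals determine the order of measures (`measure_le_of_poisson_le`), the image of `ν` under a
contraction `x ↦ c + κ (x - c)`, multiplied by `κ`, is at most `ν` (`sizeBias_dilation`). Averaging
over `κ` shows that `ν` is absolutely continuous away from `c`, and the Lebesgue differentiation
theorem turns the inequality into monotonicity of the density (`unimodal_of_dilation`).
-/

open MeasureTheory Set Filter Topology
open scoped ENNReal NNReal

noncomputable section

/-! ### The derivative of `ψ_μ` -/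

theorem im_le_norm_one_sub_mul (x : ℝ) (w : ℂ) :
    w.im ≤ ‖w‖ * ‖1 - (x : ℂ) * w‖ := by
  -- `Im w = -Im (conj w * (1 - x w))` because `x |w|²` is real.
  have h := Complex.abs_im_le_norm ((starRingEnd ℂ) w * (1 - (x : ℂ) * w))
  rw [norm_mul, Complex.norm_conj] at h
  refine le_trans ?_ h
  have : ((starRingEnd ℂ) w * (1 - (x : ℂ) * w)).im = -w.im := by
    simp; ring
  rw [this, abs_neg]
  exact le_abs_self _

theorem mul_im_le_norm_one_sub_mul (x : ℝ) (w : ℂ) :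
    x * w.im ≤ ‖1 - (x : ℂ) * w‖ := by
  have h := Complex.abs_im_le_norm (1 - (x : ℂ) * w)
  refine le_trans ?_ h
  have : (1 - (x : ℂ) * w).im = -(x * w.im) := by simp
  rw [this, abs_neg]
  exact le_abs_self _

theorem one_sub_mul_ne_zero (x : ℝ) (w : ℂ) (hw : 0 < w.im) : 1 - (x : ℂ) * w ≠ 0 := by
  intro h
  have := im_le_norm_one_sub_mul x w
  rw [h] at this
  simp at this
  linarith

theorem norm_psi_kernel_deriv_le (x : ℝ) (w : ℂ) (hx : 0 ≤ x) (hw : 0 < w.im) :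
    ‖(x : ℂ) / (1 - (x : ℂ) * w) ^ 2‖ ≤ ‖w‖ / w.im ^ 2 := by
  have h1 := im_le_norm_one_sub_mul x w
  have h2 := mul_im_le_norm_one_sub_mul x w
  have h3 : 0 < ‖1 - (x : ℂ) * w‖ := norm_pos_iff.2 (one_sub_mul_ne_zero x w hw)
  rw [norm_div, norm_pow, Complex.norm_real, Real.norm_of_nonneg hx,
    div_le_div_iff₀ (by positivity) (by positivity)]
  have := mul_le_mul h1 h2 (by positivity) (by positivity)
  nlinarith

theorem norm_psi_kernel_le (x : ℝ) (w : ℂ) (hx : 0 ≤ x) (hw : 0 < w.im) :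
    ‖(x : ℂ) * w / (1 - (x : ℂ) * w)‖ ≤ ‖w‖ / w.im := by
  have h2 := mul_im_le_norm_one_sub_mul x w
  have h3 : 0 < ‖1 - (x : ℂ) * w‖ := norm_pos_iff.2 (one_sub_mul_ne_zero x w hw)
  rw [norm_div, norm_mul, Complex.norm_real, Real.norm_of_nonneg hx,
    div_le_div_iff₀ (by positivity) (by positivity)]
  nlinarith [norm_nonneg w]

theorem ae_pos_of_measure_Iic {μ : Measure ℝ} (hμ : μ (Set.Iic 0) = 0) : ∀ᵐ x ∂μ, 0 < x := by
  rw [ae_iff]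
  convert! hμ using 2
  ext x; simp

theorem integrable_psi_kernel (μ : Measure ℝ) [IsProbabilityMeasure μ]
    (hμ : μ (Set.Iic 0) = 0) (z : ℂ) (hz : 0 < z.im) :
    Integrable (fun x : ℝ => ((x : ℂ) * z) / (1 - (x : ℂ) * z)) μ := by
  refine Integrable.of_bound (C := ‖z‖ / z.im) ?_ ?_
  · exact Measurable.aestronglyMeasurable (by fun_prop)
  · filter_upwards [ae_pos_of_measure_Iic hμ] with x hx
    exact norm_psi_kernel_le x z hx.le hz

/-- Differentiation of `ψ_μ` under the integral sign. -/
theorem hasDerivAt_psi (μ : Measure ℝ) [IsProbabilityMeasure μ]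
    (hμ : μ (Set.Iic 0) = 0) (z : ℂ) (hz : 0 < z.im) :
    Integrable (fun x : ℝ => (x : ℂ) / (1 - (x : ℂ) * z) ^ 2) μ ∧
    HasDerivAt (fun w : ℂ => ∫ x : ℝ, ((x : ℂ) * w) / (1 - (x : ℂ) * w) ∂μ)
      (∫ x : ℝ, (x : ℂ) / (1 - (x : ℂ) * z) ^ 2 ∂μ) z := by
  have key : ∀ w ∈ Metric.ball z (z.im / 2), z.im / 2 ≤ w.im ∧ ‖w‖ ≤ ‖z‖ + z.im / 2 := by
    intro w hw
    rw [Metric.mem_ball, dist_eq_norm] at hw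
    have h1 := (Complex.abs_im_le_norm (w - z)).trans hw.le
    rw [Complex.sub_im, abs_le] at h1
    have h2 := norm_le_norm_add_norm_sub' w z
    constructor <;> linarith [h1.1]
  refine hasDerivAt_integral_of_dominated_loc_of_deriv_le
    (F := fun (w : ℂ) (x : ℝ) => ((x : ℂ) * w) / (1 - (x : ℂ) * w))
    (F' := fun (w : ℂ) (x : ℝ) => (x : ℂ) / (1 - (x : ℂ) * w) ^ 2)
    (bound := fun _ => (‖z‖ + z.im / 2) / (z.im / 2) ^ 2)
    (Metric.ball_mem_nhds z (half_pos hz)) ?_ (integrable_psi_kernel μ hμ z hz) ?_ ?_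
    (integrable_const _) ?_
  · exact Eventually.of_forall fun w => Measurable.aestronglyMeasurable (by fun_prop)
  · exact Measurable.aestronglyMeasurable (by fun_prop)
  · filter_upwards [ae_pos_of_measure_Iic hμ] with x hx w hw
    obtain ⟨h1, h2⟩ := key w hw
    refine (norm_psi_kernel_deriv_le x w hx.le (by linarith)).trans ?_
    gcongr
  · refine Eventually.of_forall fun x w hw => ?_
    obtain ⟨h1, h2⟩ := key w hw
    have h3 := one_sub_mul_ne_zero x w (by linarith)
    have hd := ((hasDerivAt_id w).const_mul (x : ℂ)).div
      (((hasDerivAt_id w).const_mul (x : ℂ)).const_sub 1) h3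
    convert! hd using 1
    simp only [id]
    ring

/-! ### From log-unimodality to positivity -/

theorem ordConnected_superlevel_s4 {f : ℝ → ℝ} {c : ℝ} (hf1 : MonotoneOn f (Set.Iio c))
    (hf2 : AntitoneOn f (Set.Ioi c)) (s : ℝ) : ({t | s < f t} ∪ {c}).OrdConnected := by
  refine ⟨?_⟩
  intro x hx y hy t ht
  rcases lt_trichotomy t c with h | h | h
  · left
    rcases hx with hx | hx
    · exact lt_of_lt_of_le hx (hf1 (ht.1.trans_lt h) h ht.1)
    · exact absurd (ht.1.trans_lt h) (by simp_all)
  · right; exact h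
  · left
    rcases hy with hy | hy
    · exact lt_of_lt_of_le hy (hf2 h (h.trans_le ht.2) ht.2)
    · exact absurd (h.trans_le ht.2) (by simp_all)

theorem measurable_of_unimodal_s4 {f : ℝ → ℝ} {c : ℝ} (hf1 : MonotoneOn f (Set.Iio c))
    (hf2 : AntitoneOn f (Set.Ioi c)) : Measurable f := by
  refine measurable_of_Ioi fun s => ?_
  have h := (ordConnected_superlevel_s4 hf1 hf2 s).measurableSet
  by_cases hc : s < f c
  · convert! h using 1
    ext t; simp; rintro rfl; exact hc
  · convert! h.diff (measurableSet_singleton c) using 1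
    ext t; simp
    rintro h1 rfl
    exact hc h1

/-- If a continuous `G` has nonnegative integral over each
interval around `c`, then its integral against a density that is unimodal with mode `c` is
nonnegative, by decomposing the density into the indicators of its superlevel sets. -/
theorem integral_unimodal_density_nonneg {f : ℝ → ℝ} {c : ℝ}
    (hf1 : MonotoneOn f (Set.Iio c)) (hf2 : AntitoneOn f (Set.Ioi c))
    (hfin : ∫⁻ t, ENNReal.ofReal (f t) ≠ ∞) {G : ℝ → ℝ} (hG : Continuous G)
    (hpos : ∀ a b, a ≤ c → c ≤ b → 0 ≤ ∫ t in a..b, G t)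
    (hint : Integrable G (volume.withDensity fun t => ENNReal.ofReal (f t))) :
    0 ≤ ∫ t, G t ∂(volume.withDensity fun t => ENNReal.ofReal (f t)) := by
  have hfm := measurable_of_unimodal_s4 hf1 hf2
  have hlev : ∀ s : ℝ, 0 < s → ∫⁻ t in {t | s < f t}, ENNReal.ofReal (- G t)
      ≤ ∫⁻ t in {t | s < f t}, ENNReal.ofReal (G t) := by
    intro s hs
    set L := {t | s < f t} ∪ {c} with hL
    have hoc := ordConnected_superlevel_s4 hf1 hf2 s
    have hae : {t | s < f t} =ᵐ[volume] L :=
      (union_ae_eq_left_of_ae_eq_empty (by simp)).symm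
    have hvol : volume L ≠ ∞ := by
      rw [← measure_congr hae]
      refine ne_top_of_le_ne_top ?_
        (measure_mono (t := {t | ENNReal.ofReal s ≤ ENNReal.ofReal (f t)}) ?_)
      · refine ne_top_of_le_ne_top ?_
          (meas_ge_le_lintegral_div (by fun_prop) (by simpa using hs) (by simp))
        exact ENNReal.div_ne_top hfin (by simpa using hs)
      · intro t ht; exact ENNReal.ofReal_le_ofReal (le_of_lt ht)
    have hcL : c ∈ L := by simp [hL]
    have hba : BddAbove L := by
      by_contra h
      apply hvol
      rw [eq_top_iff, ← Real.volume_Ici (a := c)]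
      refine measure_mono fun t ht => ?_
      obtain ⟨y, hy, hty⟩ := not_bddAbove_iff.1 h t
      exact hoc.out hcL hy ⟨ht, hty.le⟩
    have hbb : BddBelow L := by
      by_contra h
      apply hvol
      rw [eq_top_iff, ← Real.volume_Iic (a := c)]
      refine measure_mono fun t ht => ?_
      obtain ⟨y, hy, hty⟩ := not_bddBelow_iff.1 h t
      exact hoc.out hy hcL ⟨hty.le, ht⟩
    -- `L` is order-connected and bounded, hence an interval up to its end points.
    have hI : L =ᵐ[volume] Set.Ioc (sInf L) (sSup L) := by
      have h1 : L ≤ᵐ[volume] Set.Icc (sInf L) (sSup L) :=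
        LE.le.eventuallyLE fun t ht => ⟨csInf_le hbb ht, le_csSup hba ht⟩
      have h2 : Set.Ioo (sInf L) (sSup L) ≤ᵐ[volume] L := by
        refine LE.le.eventuallyLE fun t ht => ?_
        obtain ⟨x, hx, hxt⟩ := exists_lt_of_csInf_lt ⟨c, hcL⟩ ht.1
        obtain ⟨y, hy, hty⟩ := exists_lt_of_lt_csSup ⟨c, hcL⟩ ht.2
        exact hoc.out hx hy ⟨hxt.le, hty.le⟩
      exact (h1.trans Ioc_ae_eq_Icc.symm.le).antisymm (Ioo_ae_eq_Ioc.symm.le.trans h2)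
    have hr : volume.restrict {t | s < f t} = volume.restrict (Set.Ioc (sInf L) (sSup L)) :=
      Measure.restrict_congr_set (hae.trans hI)
    rw [hr]
    have hle : sInf L ≤ sSup L := (csInf_le hbb hcL).trans (le_csSup hba hcL)
    have hi : Integrable G (volume.restrict (Set.Ioc (sInf L) (sSup L))) :=
      (hG.integrableOn_Icc).mono_set Ioc_subset_Icc_self
    have h0 := hpos _ _ (csInf_le hbb hcL) (le_csSup hba hcL)
    rw [intervalIntegral.integral_of_le hle,
      integral_eq_lintegral_pos_part_sub_lintegral_neg_part hi, sub_nonneg] at h0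
    refine (ENNReal.toReal_le_toReal ?_ ?_).1 h0
    · exact hi.neg.lintegral_lt_top.ne
    · exact hi.lintegral_lt_top.ne
  -- Layer-cake formula, by Tonelli on the region under the graph of `f`.
  have hlay : ∀ H : ℝ → ℝ≥0∞, Measurable H →
      ∫⁻ t, H t ∂(volume.withDensity fun t => ENNReal.ofReal (f t))
        = ∫⁻ s in Set.Ioi (0 : ℝ), ∫⁻ t in {t | s < f t}, H t := by
    intro H hH
    have hm : MeasurableSet {p : ℝ × ℝ | p.1 < f p.2} :=
      measurableSet_lt measurable_fst (hfm.comp measurable_snd)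
    have e1 : ∀ s : ℝ, ∫⁻ t in {t | s < f t}, H t
        = ∫⁻ t, {p : ℝ × ℝ | p.1 < f p.2}.indicator (fun p => H p.2) (s, t) := by
      intro s
      rw [← lintegral_indicator (measurableSet_lt measurable_const hfm)]
      rfl
    simp_rw [e1]
    rw [lintegral_lintegral_swap, lintegral_withDensity_eq_lintegral_mul _ (by fun_prop) hH]
    · refine lintegral_congr fun t => ?_
      have e2 : ∀ s : ℝ, {p : ℝ × ℝ | p.1 < f p.2}.indicator (fun p => H p.2) (s, t)
          = (Set.Iio (f t)).indicator (fun _ => H t) s := fun s => rfl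
      simp_rw [e2]
      rw [lintegral_indicator measurableSet_Iio, lintegral_const,
        Measure.restrict_apply_univ, Measure.restrict_apply measurableSet_Iio,
        Set.inter_comm, Set.Ioi_inter_Iio, Real.volume_Ioo, sub_zero, Pi.mul_apply, mul_comm]
    · exact ((hH.comp measurable_snd).indicator hm).aemeasurable
  rw [integral_eq_lintegral_pos_part_sub_lintegral_neg_part hint, sub_nonneg]
  refine ENNReal.toReal_mono hint.lintegral_lt_top.ne ?_
  rw [hlay _ (by fun_prop), hlay _ (by fun_prop)]
  exact setLIntegral_mono' measurableSet_Ioi fun s hs => hlev s hs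

/-- With `A = e^a` and `B = e^b`, the function `t ↦ 1 / (1 - e^t z)` is a primitive of the kernel,
so `1 - c z` times its integral over `[a, b]` is the combination of `z / (1 - B z)` and `z / (1 - A z)` with weights
`B - c` and `c - A`. -/
theorem kernel_interval_nonneg {c : ℝ} (hc : 0 < c) (z : ℂ) (hz : 0 < z.im) (a b : ℝ)
    (ha : a ≤ Real.log c) (hb : Real.log c ≤ b) :
    0 ≤ ∫ t in a..b, ((1 - (c : ℂ) * z) * ((Real.exp t : ℂ) * z /
      (1 - (Real.exp t : ℂ) * z) ^ 2)).im := by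
  have hne : ∀ x : ℝ, 1 - (x : ℂ) * z ≠ 0 := fun x => one_sub_mul_ne_zero x z hz
  have hd : ∀ t : ℝ, HasDerivAt (fun t : ℝ => ((1 - (c : ℂ) * z) / (1 - (Real.exp t : ℂ) * z)).im)
      ((1 - (c : ℂ) * z) * ((Real.exp t : ℂ) * z / (1 - (Real.exp t : ℂ) * z) ^ 2)).im t := by
    intro t
    have h1 : HasDerivAt (fun t : ℝ => (Real.exp t : ℂ)) (Real.exp t : ℂ) t :=
      (Real.hasDerivAt_exp t).ofReal_comp
    have h2 := (hasDerivAt_const t (1 - (c : ℂ) * z)).div ((h1.mul_const z).const_sub 1)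
      (hne (Real.exp t))
    have h3 := Complex.imCLM.hasFDerivAt.comp_hasDerivAt t h2
    convert! h3 using 1
    simp only [Complex.imCLM_apply]
    congr 1
    ring
  have hcont : Continuous fun t : ℝ => ((1 - (c : ℂ) * z) * ((Real.exp t : ℂ) * z /
      (1 - (Real.exp t : ℂ) * z) ^ 2)).im := by
    refine Complex.continuous_im.comp (continuous_const.mul (Continuous.div ?_ ?_ ?_))
    · fun_prop
    · fun_prop
    · intro t; exact pow_ne_zero _ (hne _)
  rw [intervalIntegral.integral_eq_sub_of_hasDerivAt (fun t _ => hd t)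
    (hcont.intervalIntegrable _ _)]
  have him : ∀ x : ℝ, ((1 - (c : ℂ) * z) / (1 - (x : ℂ) * z)).im
      = (x - c) * z.im / Complex.normSq (1 - (x : ℂ) * z) := by
    intro x
    rw [Complex.div_im]
    simp
    ring
  rw [him, him]
  have hA : Real.exp a ≤ c := by rwa [← Real.le_log_iff_exp_le hc]
  have hB : c ≤ Real.exp b := by rwa [← Real.log_le_iff_le_exp hc]
  have p1 : 0 ≤ (Real.exp b - c) * z.im / Complex.normSq (1 - (Real.exp b : ℂ) * z) :=
    div_nonneg (mul_nonneg (by linarith) hz.le) (Complex.normSq_nonneg _)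
  have p2 : (Real.exp a - c) * z.im / Complex.normSq (1 - (Real.exp a : ℂ) * z) ≤ 0 :=
    div_nonpos_of_nonpos_of_nonneg (mul_nonpos_of_nonpos_of_nonneg (by linarith) hz.le)
      (Complex.normSq_nonneg _)
  linarith

theorem nonneg_of_unimodal (μ : Measure ℝ) [IsProbabilityMeasure μ]
    (hμ : μ (Set.Iic 0) = 0) (c : ℝ) (hc : 0 < c) {c₀ : ℝ≥0∞} {f : ℝ → ℝ}
    (hf1 : MonotoneOn f (Set.Iio (Real.log c)))
    (hf2 : AntitoneOn f (Set.Ioi (Real.log c)))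
    (hτ : μ.map Real.log = c₀ • (Measure.dirac (Real.log c)) +
      volume.withDensity (fun x => ENNReal.ofReal (f x))) (z : ℂ) (hz : 0 < z.im) :
    0 ≤ (z * (1 - (c : ℂ) * z) *
          deriv (fun w : ℂ => ∫ x : ℝ, ((x : ℂ) * w) / (1 - (x : ℂ) * w) ∂μ) z).im := by
  obtain ⟨hI, hD⟩ := hasDerivAt_psi μ hμ z hz
  rw [hD.deriv]
  have hne : ∀ x : ℝ, 1 - (x : ℂ) * z ≠ 0 := fun x => one_sub_mul_ne_zero x z hz
  set F : ℝ → ℝ := fun t => ((1 - (c : ℂ) * z) * ((Real.exp t : ℂ) * z /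
      (1 - (Real.exp t : ℂ) * z) ^ 2)).im with hF
  have hcont : Continuous F := by
    refine Complex.continuous_im.comp (continuous_const.mul (Continuous.div ?_ ?_ ?_))
    · fun_prop
    · fun_prop
    · intro t; exact pow_ne_zero _ (hne _)
  have hFlog : ∀ᵐ x ∂μ, (z * (1 - (c : ℂ) * z) * ((x : ℂ) / (1 - (x : ℂ) * z) ^ 2)).im
      = F (Real.log x) := by
    filter_upwards [ae_pos_of_measure_Iic hμ] with x hx
    simp only [hF, Real.exp_log hx]
    congr 1
    ring
  have hI2 := hI.const_mul (z * (1 - (c : ℂ) * z))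
  have hFi : Integrable F (μ.map Real.log) := by
    rw [integrable_map_measure hcont.aestronglyMeasurable Real.measurable_log.aemeasurable]
    exact (integrable_congr hFlog).1 hI2.im
  have e1 : (z * (1 - (c : ℂ) * z) * ∫ x : ℝ, (x : ℂ) / (1 - (x : ℂ) * z) ^ 2 ∂μ).im
      = ∫ t, F t ∂(μ.map Real.log) := by
    rw [integral_map Real.measurable_log.aemeasurable hcont.aestronglyMeasurable,
      ← integral_congr_ae hFlog, ← integral_const_mul]
    exact (integral_im hI2).symm
  rw [e1]
  have hprob : IsProbabilityMeasure (μ.map Real.log) :=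
    Measure.isProbabilityMeasure_map Real.measurable_log.aemeasurable
  rw [hτ] at hFi ⊢
  have hu : (c₀ • (Measure.dirac (Real.log c)) +
      volume.withDensity (fun x => ENNReal.ofReal (f x))) univ = 1 := by
    rw [← hτ]; exact hprob.measure_univ
  rw [integral_add_measure hFi.left_of_add_measure hFi.right_of_add_measure,
    integral_smul_measure, integral_dirac]
  refine add_nonneg (smul_nonneg ENNReal.toReal_nonneg ?_) ?_
  · simp only [hF, Real.exp_log hc]
    have : (1 - (c : ℂ) * z) * ((c : ℂ) * z / (1 - (c : ℂ) * z) ^ 2)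
        = ((c : ℂ) * z) / (1 - (c : ℂ) * z) := by
      have := hne c
      field_simp
    rw [this, Complex.div_im]
    have : ((c : ℂ) * z).im * (1 - (c : ℂ) * z).re / Complex.normSq (1 - (c : ℂ) * z) -
      ((c : ℂ) * z).re * (1 - (c : ℂ) * z).im / Complex.normSq (1 - (c : ℂ) * z)
        = c * z.im / Complex.normSq (1 - (c : ℂ) * z) := by
      simp; ring
    rw [this]
    exact div_nonneg (by positivity) (Complex.normSq_nonneg _)
  · refine integral_unimodal_density_nonneg hf1 hf2 ?_ hcont
      (fun a b ha hb => kernel_interval_nonneg hc z hz a b ha hb) hFi.right_of_add_measure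
    simp at hu
    refine ne_top_of_le_ne_top ENNReal.one_ne_top ?_
    rw [← hu]
    exact le_add_self

/-! ### Poisson integrals and the order of measures -/

/-- The Poisson (Cauchy) kernel `v / ((u - x)² + v²)` of the upper half-plane at height `v`,
without the factor `1 / π`. -/
def poissonKer (v u x : ℝ) : ℝ := v / ((u - x) ^ 2 + v ^ 2)

theorem poissonKer_nonneg {v : ℝ} (hv : 0 ≤ v) (u x : ℝ) : 0 ≤ poissonKer v u x := by
  unfold poissonKer; positivity

theorem continuous_poissonKer {v : ℝ} (hv : 0 < v) :
    Continuous fun p : ℝ × ℝ => poissonKer v p.1 p.2 := by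
  unfold poissonKer
  refine Continuous.div (by fun_prop) (by fun_prop) fun p => ?_
  positivity

theorem poissonKer_eq {n : ℝ} (hn : 0 < n) (u x : ℝ) :
    poissonKer n⁻¹ u x = n * (1 + (n * (x - u)) ^ 2)⁻¹ := by
  unfold poissonKer
  have : (0:ℝ) < 1 + (n * (x - u)) ^ 2 := by positivity
  have h2 : (0:ℝ) < (u - x) ^ 2 + n⁻¹ ^ 2 := by positivity
  rw [div_eq_iff h2.ne', ← div_eq_mul_inv, div_mul_eq_mul_div, eq_div_iff this.ne']
  field_simp
  ring

theorem integral_poissonKer {n : ℝ} (hn : 0 < n) (x : ℝ) :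
    Integrable (fun u => poissonKer n⁻¹ u x) ∧ ∫ u, poissonKer n⁻¹ u x = Real.pi := by
  simp_rw [poissonKer_eq hn]
  have h1 : Integrable fun u : ℝ => (1 + (n * (x - u)) ^ 2)⁻¹ :=
    ((integrable_inv_one_add_sq.comp_mul_left' hn.ne').comp_sub_left x)
  refine ⟨h1.const_mul n, ?_⟩
  rw [integral_const_mul, integral_sub_left_eq_self (fun u : ℝ => (1 + (n * u) ^ 2)⁻¹) volume x,
    Measure.integral_comp_mul_left (fun u : ℝ => (1 + u ^ 2)⁻¹) n, integral_univ_inv_one_add_sq,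
    abs_of_pos (inv_pos.2 hn), smul_eq_mul, ← mul_assoc, mul_inv_cancel₀ hn.ne', one_mul]

theorem tendsto_poisson_smooth {φ : ℝ → ℝ} (hφ : Continuous φ) (hs : HasCompactSupport φ) (x : ℝ) :
    Tendsto (fun n : ℕ => ∫ u, φ u * poissonKer ((n : ℝ) + 1)⁻¹ u x) atTop
      (𝓝 (Real.pi * φ x)) := by
  have h := tendsto_integral_comp_smul_smul_of_integrable' (μ := (volume : Measure ℝ))
    (φ := fun s : ℝ => Real.pi⁻¹ * (1 + s ^ 2)⁻¹) (g := φ) (x₀ := x)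
    (fun s => by positivity)
    (by rw [integral_const_mul, integral_univ_inv_one_add_sq, inv_mul_cancel₀ Real.pi_ne_zero])
    (by
      rw [tendsto_zero_iff_norm_tendsto_zero]
      have hb : Tendsto (fun s : ℝ => ‖s‖⁻¹) (Bornology.cobounded ℝ) (𝓝 0) :=
        tendsto_inv_atTop_zero.comp tendsto_norm_cobounded_atTop
      refine squeeze_zero' (Eventually.of_forall fun _ => norm_nonneg _) ?_
        (by simpa only [mul_zero] using hb.const_mul Real.pi⁻¹)
      have h1 : ∀ᶠ s : ℝ in Bornology.cobounded ℝ, 0 < ‖s‖ :=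
        tendsto_norm_cobounded_atTop.eventually_gt_atTop 0
      filter_upwards [h1] with s hs
      have hp := Real.pi_pos
      rw [Real.norm_of_nonneg (by positivity)]
      simp only [Module.finrank_self, pow_one]
      have : ‖s‖ * (1 + s ^ 2)⁻¹ ≤ ‖s‖⁻¹ := by
        rw [← div_eq_mul_inv, inv_eq_one_div, div_le_div_iff₀ (by positivity) hs]
        rw [Real.norm_eq_abs, abs_mul_abs_self]
        linarith
      calc ‖s‖ * (Real.pi⁻¹ * (1 + s ^ 2)⁻¹) = Real.pi⁻¹ * (‖s‖ * (1 + s ^ 2)⁻¹) := by ring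
        _ ≤ Real.pi⁻¹ * ‖s‖⁻¹ := by gcongr)
    (hφ.integrable_of_hasCompactSupport hs) hφ.continuousAt
  have h2 : Tendsto (fun n : ℕ => (n : ℝ) + 1) atTop atTop :=
    tendsto_atTop_add_const_right _ _ tendsto_natCast_atTop_atTop
  have h3 := (h.comp h2).const_mul Real.pi
  refine h3.congr fun n => ?_
  simp only [Function.comp, Module.finrank_self, pow_one, smul_eq_mul]
  rw [← integral_const_mul]
  refine integral_congr_ae (Eventually.of_forall fun u => ?_)
  simp only
  rw [poissonKer_eq (by positivity)]
  have := Real.pi_ne_zero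
  field_simp

/-- Poisson smoothing of a test function decays like `1 / (1 + x²)`, uniformly in the height. -/
theorem poisson_smooth_le {φ : ℝ → ℝ} (hφ : Continuous φ) (hs : HasCompactSupport φ)
    (h0 : ∀ u, 0 ≤ φ u) : ∃ C : ℝ, ∀ (n : ℕ) (x : ℝ),
      ∫ u, φ u * poissonKer ((n : ℝ) + 1)⁻¹ u x ≤ C * (1 + x ^ 2)⁻¹ := by
  obtain ⟨M, hM⟩ := (hs.mul_left (f := fun u : ℝ => 1 + u ^ 2)).exists_bound_of_continuous
    (by fun_prop)
  have hφi : Integrable φ := hφ.integrable_of_hasCompactSupport hs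
  refine ⟨2 * M * Real.pi + 2 * ∫ u, φ u, fun n x => ?_⟩
  have hn : (0 : ℝ) < (n : ℝ) + 1 := by positivity
  set v : ℝ := ((n : ℝ) + 1)⁻¹ with hv
  have hv0 : 0 < v := by positivity
  have hv1 : v ≤ 1 := inv_le_one_of_one_le₀ (by linarith [Nat.cast_nonneg (α := ℝ) n])
  obtain ⟨hPi, hPv⟩ := integral_poissonKer hn x
  rw [← hv] at hPi hPv
  rw [← div_eq_mul_inv, le_div_iff₀ (by positivity), ← integral_mul_const]
  calc ∫ u, φ u * poissonKer v u x * (1 + x ^ 2)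
      ≤ ∫ u, (2 * M * poissonKer v u x + 2 * φ u) := by
        refine integral_mono_of_nonneg ?_ ((hPi.const_mul _).add (hφi.const_mul _)) ?_
        · refine Eventually.of_forall fun u => ?_
          have := poissonKer_nonneg hv0.le u x
          have := h0 u
          simp only [Pi.zero_apply]
          positivity
        · refine Eventually.of_forall fun u => ?_
          have h1 : (1 + u ^ 2) * φ u ≤ M := (le_abs_self _).trans (hM u)
          have h2 := poissonKer_nonneg hv0.le u x
          have h3 : (u - x) ^ 2 * poissonKer v u x ≤ 1 := by
            unfold poissonKer
            rw [← mul_div_assoc, div_le_one (by positivity)]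
            nlinarith [sq_nonneg (u - x), sq_nonneg v]
          have h4 : 1 + x ^ 2 ≤ 2 * (1 + u ^ 2) + 2 * (u - x) ^ 2 := by
            nlinarith [sq_nonneg (2 * u - x)]
          have h5 := h0 u
          calc φ u * poissonKer v u x * (1 + x ^ 2)
              ≤ φ u * poissonKer v u x * (2 * (1 + u ^ 2) + 2 * (u - x) ^ 2) := by gcongr
            _ = 2 * ((1 + u ^ 2) * φ u) * poissonKer v u x
                + 2 * φ u * ((u - x) ^ 2 * poissonKer v u x) := by ring
            _ ≤ 2 * M * poissonKer v u x + 2 * φ u * 1 := by gcongr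
            _ = _ := by ring
    _ = _ := by
        rw [integral_add (hPi.const_mul _) (hφi.const_mul _), integral_const_mul,
          integral_const_mul, hPv]

/-- Poisson integrals converge vaguely to the measure: tested against `φ`, the Poisson integral of
`ν` at height `1 / (n + 1)` tends to `π ∫ φ dν`. -/
theorem tendsto_lintegral_poisson (ν : Measure ℝ) [SFinite ν]
    (hfin : ∫⁻ x, ENNReal.ofReal ((1 + x ^ 2)⁻¹) ∂ν ≠ ∞) {φ : ℝ → ℝ} (hφ : Continuous φ)
    (hs : HasCompactSupport φ) (h0 : ∀ u, 0 ≤ φ u) :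
    Tendsto (fun n : ℕ => ∫⁻ u, ENNReal.ofReal (φ u) *
        ∫⁻ x, ENNReal.ofReal (poissonKer ((n : ℝ) + 1)⁻¹ u x) ∂ν) atTop
      (𝓝 (∫⁻ x, ENNReal.ofReal (Real.pi * φ x) ∂ν)) := by
  obtain ⟨C, hC⟩ := poisson_smooth_le hφ hs h0
  have hφi : Integrable φ := hφ.integrable_of_hasCompactSupport hs
  have hvpos : ∀ n : ℕ, (0 : ℝ) < ((n : ℝ) + 1)⁻¹ := fun n => by positivity
  have hjc : ∀ n : ℕ, Continuous fun p : ℝ × ℝ => φ p.1 * poissonKer ((n : ℝ) + 1)⁻¹ p.1 p.2 :=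
    fun n => (hφ.comp continuous_fst).mul (continuous_poissonKer (hvpos n))
  have e : ∀ n : ℕ, ∫⁻ u, ENNReal.ofReal (φ u) *
        ∫⁻ x, ENNReal.ofReal (poissonKer ((n : ℝ) + 1)⁻¹ u x) ∂ν
      = ∫⁻ x, ENNReal.ofReal (∫ u, φ u * poissonKer ((n : ℝ) + 1)⁻¹ u x) ∂ν := by
    intro n
    have e1 : ∀ u, ENNReal.ofReal (φ u) *
        ∫⁻ x, ENNReal.ofReal (poissonKer ((n : ℝ) + 1)⁻¹ u x) ∂ν
        = ∫⁻ x, ENNReal.ofReal (φ u * poissonKer ((n : ℝ) + 1)⁻¹ u x) ∂ν := by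
      intro u
      rw [← lintegral_const_mul' _ _ ENNReal.ofReal_ne_top]
      exact lintegral_congr fun x => (ENNReal.ofReal_mul (h0 u)).symm
    simp_rw [e1]
    rw [lintegral_lintegral_swap]
    · refine lintegral_congr fun x => ?_
      rw [ofReal_integral_eq_lintegral_ofReal]
      · have hcx := (hjc n).comp (by fun_prop : Continuous fun u : ℝ => (u, x))
        exact hcx.integrable_of_hasCompactSupport hs.mul_right
      · exact Eventually.of_forall fun u =>
          mul_nonneg (h0 u) (poissonKer_nonneg (hvpos n).le u x)
    · exact (ENNReal.continuous_ofReal.comp (hjc n)).measurable.aemeasurable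
  simp_rw [e]
  refine tendsto_lintegral_of_dominated_convergence'
    (fun x => ENNReal.ofReal (C * (1 + x ^ 2)⁻¹)) ?_ ?_ ?_ ?_
  · intro n
    have : StronglyMeasurable fun x => ∫ u, φ u * poissonKer ((n : ℝ) + 1)⁻¹ u x :=
      ((hjc n).comp continuous_swap).stronglyMeasurable.integral_prod_right'
    exact this.measurable.ennreal_ofReal.aemeasurable
  · exact fun n => Eventually.of_forall fun x => ENNReal.ofReal_le_ofReal (hC n x)
  · have : ∀ x : ℝ, ENNReal.ofReal (C * (1 + x ^ 2)⁻¹)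
        = ENNReal.ofReal ((1 + x ^ 2)⁻¹) * ENNReal.ofReal C := by
      intro x
      rw [mul_comm, ENNReal.ofReal_mul (by positivity)]
    simp_rw [this]
    rw [lintegral_mul_const' _ _ ENNReal.ofReal_ne_top]
    exact ENNReal.mul_ne_top hfin ENNReal.ofReal_ne_top
  · exact Eventually.of_forall fun x =>
      (ENNReal.continuous_ofReal.tendsto _).comp (tendsto_poisson_smooth hφ hs x)

theorem isLocallyFinite_of_lintegral (ν : Measure ℝ)
    (hfin : ∫⁻ x, ENNReal.ofReal ((1 + x ^ 2)⁻¹) ∂ν ≠ ∞) : IsLocallyFiniteMeasure ν := by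
  have hK : ∀ R : ℝ, ν (Metric.ball 0 R) < ∞ := by
    intro R
    have hsub : Metric.ball (0 : ℝ) R ⊆
        {x | ENNReal.ofReal ((1 + R ^ 2)⁻¹) ≤ ENNReal.ofReal ((1 + x ^ 2)⁻¹)} := by
      intro x hx
      rw [Metric.mem_ball, dist_zero_right, Real.norm_eq_abs] at hx
      refine ENNReal.ofReal_le_ofReal ?_
      have : x ^ 2 ≤ R ^ 2 := sq_le_sq' (by linarith [neg_abs_le x]) (by linarith [le_abs_self x])
      gcongr
    have hpos : ENNReal.ofReal ((1 + R ^ 2)⁻¹) ≠ 0 := by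
      have : (0:ℝ) < (1 + R ^ 2)⁻¹ := by positivity
      simpa using this
    refine lt_of_le_of_lt (measure_mono hsub) ?_
    refine lt_of_le_of_lt
      (meas_ge_le_lintegral_div (by fun_prop) hpos ENNReal.ofReal_ne_top) ?_
    exact (ENNReal.div_ne_top hfin hpos).lt_top
  refine ⟨fun x => ⟨Metric.ball 0 (|x| + 1), ?_, hK _⟩⟩
  refine Metric.isOpen_ball.mem_nhds ?_
  simp

/-- Poisson integrals determine the order: if the Poisson integral of `ν₂` is dominated pointwise
by that of `ν₁`, then `ν₂ ≤ ν₁`. -/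
theorem measure_le_of_poisson_le_s4 (ν₁ ν₂ : Measure ℝ) [SFinite ν₁] [SFinite ν₂]
    (hfin : ∫⁻ x, ENNReal.ofReal ((1 + x ^ 2)⁻¹) ∂ν₁ ≠ ∞)
    (hle : ∀ v u : ℝ, 0 < v → ∫⁻ x, ENNReal.ofReal (poissonKer v u x) ∂ν₂
      ≤ ∫⁻ x, ENNReal.ofReal (poissonKer v u x) ∂ν₁) : ν₂ ≤ ν₁ := by
  have hfin2 : ∫⁻ x, ENNReal.ofReal ((1 + x ^ 2)⁻¹) ∂ν₂ ≠ ∞ := by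
    have h := hle 1 0 one_pos
    have e : ∀ x, poissonKer 1 0 x = (1 + x ^ 2)⁻¹ := by
      intro x; unfold poissonKer; rw [one_div]; congr 1; ring
    simp_rw [e] at h
    exact ne_top_of_le_ne_top hfin h
  have := isLocallyFinite_of_lintegral ν₁ hfin
  have := isLocallyFinite_of_lintegral ν₂ hfin2
  have hφ : ∀ φ : ℝ → ℝ, Continuous φ → HasCompactSupport φ → (∀ u, 0 ≤ φ u) →
      ∫⁻ x, ENNReal.ofReal (φ x) ∂ν₂ ≤ ∫⁻ x, ENNReal.ofReal (φ x) ∂ν₁ := by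
    intro φ h1 h2 h3
    have hc1 : Continuous fun x => Real.pi⁻¹ * φ x := by fun_prop
    have hc2 : HasCompactSupport fun x => Real.pi⁻¹ * φ x := h2.mul_left
    have hc3 : ∀ x, 0 ≤ Real.pi⁻¹ * φ x := fun x =>
      mul_nonneg (inv_nonneg.2 Real.pi_pos.le) (h3 x)
    have l1 := tendsto_lintegral_poisson ν₁ hfin hc1 hc2 hc3
    have l2 := tendsto_lintegral_poisson ν₂ hfin2 hc1 hc2 hc3
    have e : ∀ x, Real.pi * (Real.pi⁻¹ * φ x) = φ x := fun x => by
      rw [← mul_assoc, mul_inv_cancel₀ Real.pi_ne_zero, one_mul]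
    simp_rw [e] at l1 l2
    refine le_of_tendsto_of_tendsto' l2 l1 fun n => ?_
    exact lintegral_mono fun u => mul_le_mul_right (hle _ u (by positivity)) _
  have hopen : ∀ U : Set ℝ, IsOpen U → ν₂ U ≤ ν₁ U := by
    intro U hU
    rw [hU.measure_eq_iSup_isCompact ν₂]
    refine iSup₂_le fun K hKU => iSup_le fun hK => ?_
    obtain ⟨φ, hφ1, hφ0, hφs, hφI⟩ := exists_continuous_one_zero_of_isCompact hK
      hU.isClosed_compl (disjoint_compl_right_iff_subset.2 hKU)
    calc ν₂ K = ∫⁻ x in K, 1 ∂ν₂ := by simp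
      _ ≤ ∫⁻ x in K, ENNReal.ofReal (φ x) ∂ν₂ :=
        setLIntegral_mono' hK.measurableSet fun x hx => by rw [hφ1 hx]; simp
      _ ≤ ∫⁻ x, ENNReal.ofReal (φ x) ∂ν₂ := setLIntegral_le_lintegral _ _
      _ ≤ ∫⁻ x, ENNReal.ofReal (φ x) ∂ν₁ := hφ φ φ.continuous hφs fun u => (hφI u).1
      _ ≤ ∫⁻ x, U.indicator 1 x ∂ν₁ := by
        refine lintegral_mono fun x => ?_
        by_cases hx : x ∈ U
        · simp [hx, (hφI x).2]
        · simp [hφ0 (show x ∈ Uᶜ from hx)]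
      _ = ν₁ U := lintegral_indicator_one hU.measurableSet
  refine Measure.le_iff'.2 fun A => ?_
  rw [A.measure_eq_iInf_isOpen ν₁]
  exact le_iInf₂ fun U hAU => le_iInf fun hU => (measure_mono hAU).trans (hopen U hU)

/-! ### Measures contracting towards a point -/

/-- Absolute continuity away from `c`: averaging `ν A ≤ l * ν (S_l ⁻¹ A)`, with
`S_l x = c + l (x - c)`, over `l ∈ [1, 2]` and applying Tonelli bounds `ν A` by an integral of
Lebesgue measures of affine preimages of `A`. -/
theorem null_of_dilation (ν : Measure ℝ) [SFinite ν] (c : ℝ)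
    (h : ∀ κ : ℝ, 0 < κ → κ ≤ 1 → ∀ A : Set ℝ, MeasurableSet A →
      ENNReal.ofReal κ * ν ((fun x => c + κ * (x - c)) ⁻¹' A) ≤ ν A)
    {A : Set ℝ} (hA : MeasurableSet A) (hA0 : volume A = 0) (hcA : c ∉ A) : ν A = 0 := by
  have h1 : ∀ l ∈ Set.Icc (1 : ℝ) 2, ν A ≤ 2 * ν ((fun x => c + l * (x - c)) ⁻¹' A) := by
    intro l hl
    have hl0 : 0 < l := by linarith [hl.1]
    have hm : Measurable fun x : ℝ => c + l * (x - c) := by fun_prop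
    have := h l⁻¹ (inv_pos.2 hl0) (inv_le_one_of_one_le₀ hl.1) _ (hm hA)
    rw [← preimage_comp] at this
    have e : ((fun x : ℝ => c + l * (x - c)) ∘ fun x => c + l⁻¹ * (x - c)) = id := by
      ext x; simp [hl0.ne']
    rw [e, preimage_id, ENNReal.ofReal_inv_of_pos hl0] at this
    have h3 := mul_le_mul_right this (ENNReal.ofReal l)
    rw [← mul_assoc, ENNReal.mul_inv_cancel (by simpa using hl0) ENNReal.ofReal_ne_top,
      one_mul] at h3
    refine h3.trans ?_
    gcongr
    rw [← ENNReal.ofReal_ofNat]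
    exact ENNReal.ofReal_le_ofReal hl.2
  have hjm : MeasurableSet {p : ℝ × ℝ | c + p.1 * (p.2 - c) ∈ A} :=
    (by fun_prop : Measurable fun p : ℝ × ℝ => c + p.1 * (p.2 - c)) hA
  have h2 : ν A ≤ ∫⁻ l in Set.Icc (1 : ℝ) 2, 2 * ν ((fun x => c + l * (x - c)) ⁻¹' A) := by
    calc ν A = ∫⁻ l in Set.Icc (1 : ℝ) 2, ν A := by
          rw [lintegral_const, Measure.restrict_apply_univ, Real.volume_Icc]
          norm_num
      _ ≤ _ := setLIntegral_mono' measurableSet_Icc h1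
  refine le_antisymm (h2.trans ?_) bot_le
  rw [lintegral_const_mul' _ _ (by simp)]
  have e : ∀ l : ℝ, ν ((fun x => c + l * (x - c)) ⁻¹' A)
      = ∫⁻ x, {p : ℝ × ℝ | c + p.1 * (p.2 - c) ∈ A}.indicator 1 (l, x) ∂ν := by
    intro l
    have hm : Measurable fun x : ℝ => c + l * (x - c) := by fun_prop
    rw [← lintegral_indicator_one (hm hA)]
    rfl
  simp_rw [e]
  rw [lintegral_lintegral_swap (f := fun l x =>
    {p : ℝ × ℝ | c + p.1 * (p.2 - c) ∈ A}.indicator (1 : ℝ × ℝ → ℝ≥0∞) (l, x))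
    (measurable_one.indicator hjm).aemeasurable]
  have e2 : ∀ x, ∫⁻ l in Set.Icc (1 : ℝ) 2,
      {p : ℝ × ℝ | c + p.1 * (p.2 - c) ∈ A}.indicator (1 : ℝ × ℝ → ℝ≥0∞) (l, x) = 0 := by
    intro x
    have hm : Measurable fun l : ℝ => c + l * (x - c) := by fun_prop
    have e3 : ∫⁻ l in Set.Icc (1 : ℝ) 2,
        {p : ℝ × ℝ | c + p.1 * (p.2 - c) ∈ A}.indicator (1 : ℝ × ℝ → ℝ≥0∞) (l, x)
        = (volume.restrict (Set.Icc (1 : ℝ) 2)) ((fun l => c + l * (x - c)) ⁻¹' A) := by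
      rw [← lintegral_indicator_one (hm hA)]
      rfl
    rw [e3]
    refine le_antisymm ((Measure.restrict_apply_le _ _).trans ?_) bot_le
    by_cases hx : x = c
    · subst hx
      simp [hcA]
    · have e4 : (fun l => c + l * (x - c)) ⁻¹' A
          = (fun l => l * (x - c)) ⁻¹' ((fun y => c + y) ⁻¹' A) := rfl
      rw [e4, Real.volume_preimage_mul_right (sub_ne_zero.2 hx), measure_preimage_add, hA0,
        mul_zero]
  simp_rw [e2]
  simp

/-- A measure that contracts towards `c` has a density, away from `c`, that decreases with the
distance to `c`. The density is taken to be the `limsup` of the mean densities over the balls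
around `x` of radius `|x - c| / (n + 1)`: dilations centred at `c` permute these balls, so the
contraction inequality gives the monotonicity at every point, and the Lebesgue differentiation
theorem identifies the `limsup` with the Radon–Nikodym derivative. -/
theorem unimodal_of_dilation (ν : Measure ℝ) [IsLocallyFiniteMeasure ν] (c : ℝ)
    (h : ∀ κ : ℝ, 0 < κ → κ ≤ 1 → ∀ A : Set ℝ, MeasurableSet A →
      ENNReal.ofReal κ * ν ((fun x => c + κ * (x - c)) ⁻¹' A) ≤ ν A) :
    ∃ g : ℝ → ℝ, (∀ x, 0 ≤ g x) ∧ MonotoneOn g (Set.Iio c) ∧ AntitoneOn g (Set.Ioi c) ∧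
      ν = ν {c} • Measure.dirac c + volume.withDensity fun x => ENNReal.ofReal (g x) := by
  set ν' := ν.restrict {c}ᶜ with hν'
  have hac : ν' ≪ volume := by
    refine Measure.AbsolutelyContinuous.mk fun A hA hA0 => ?_
    rw [hν', Measure.restrict_apply hA]
    exact null_of_dilation ν c h (hA.inter (measurableSet_singleton c).compl)
      (measure_mono_null inter_subset_left hA0) (by simp)
  have hdil : ∀ κ : ℝ, 0 < κ → κ ≤ 1 → ∀ A : Set ℝ, MeasurableSet A →
      ENNReal.ofReal κ * ν' ((fun x => c + κ * (x - c)) ⁻¹' A) ≤ ν' A := by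
    intro κ h0 h1 A hA
    have hm : Measurable fun x : ℝ => c + κ * (x - c) := by fun_prop
    rw [hν', Measure.restrict_apply hA, Measure.restrict_apply (hm hA)]
    refine le_trans ?_ (h κ h0 h1 _ (hA.inter (measurableSet_singleton c).compl))
    gcongr
    rintro x ⟨hx1, hx2⟩
    refine ⟨hx1, ?_⟩
    have : x - c ≠ 0 := sub_ne_zero.2 hx2
    simp [h0.ne', this]
  let q : ℝ → ℕ → ℝ≥0∞ := fun x n =>
    ν' (Metric.closedBall x (|x - c| * ((n : ℝ) + 1)⁻¹)) /
      volume (Metric.closedBall x (|x - c| * ((n : ℝ) + 1)⁻¹))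
  let G : ℝ → ℝ≥0∞ := fun x => limsup (q x) atTop
  have hq : ∀ x l : ℝ, 1 ≤ l → x ≠ c → ∀ n, q (c + l * (x - c)) n ≤ q x n := by
    intro x l hl hx n
    have hl0 : 0 < l := by linarith
    have hd : 0 < |x - c| := abs_pos.2 (sub_ne_zero.2 hx)
    set r : ℝ := |x - c| * ((n : ℝ) + 1)⁻¹ with hr
    have hr0 : 0 < r := by positivity
    have e1 : |c + l * (x - c) - c| * ((n : ℝ) + 1)⁻¹ = l * r := by
      rw [add_sub_cancel_left, abs_mul, abs_of_pos hl0, hr, mul_assoc]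
    have e2 : (fun y => c + l⁻¹ * (y - c)) ⁻¹' (Metric.closedBall x r)
        = Metric.closedBall (c + l * (x - c)) (l * r) := by
      ext y
      simp only [mem_preimage, Metric.mem_closedBall, Real.dist_eq]
      have : y - (c + l * (x - c)) = l * (c + l⁻¹ * (y - c) - x) := by
        field_simp; ring
      rw [this, abs_mul, abs_of_pos hl0, mul_le_mul_iff_right₀ hl0]
    have h3 := hdil l⁻¹ (inv_pos.2 hl0) (inv_le_one_of_one_le₀ hl) _
      (Metric.isClosed_closedBall (x := x) (ε := r)).measurableSet
    rw [e2, ENNReal.ofReal_inv_of_pos hl0] at h3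
    simp only [q]
    rw [e1, ← hr, Real.volume_closedBall, Real.volume_closedBall,
      show 2 * (l * r) = l * (2 * r) by ring, ENNReal.ofReal_mul hl0.le, div_eq_mul_inv,
      ENNReal.mul_inv (Or.inr ENNReal.ofReal_ne_top) (Or.inl ENNReal.ofReal_ne_top), ← mul_assoc,
      mul_comm (ν' _), ← div_eq_mul_inv]
    exact ENNReal.div_le_div_right h3 _
  have hG : ∀ x l : ℝ, 1 ≤ l → x ≠ c → G (c + l * (x - c)) ≤ G x := fun x l hl hx =>
    limsup_le_limsup (Eventually.of_forall (hq x l hl hx))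
  have hGae : ∀ᵐ x, G x = ν'.rnDeriv volume x := by
    have hne : ∀ᵐ x : ℝ, x ≠ c := by simp [ae_iff]
    filter_upwards [Besicovitch.ae_tendsto_rnDeriv ν' volume, hne] with x hx hxc
    refine Tendsto.limsup_eq (hx.comp ?_)
    have hd : 0 < |x - c| := abs_pos.2 (sub_ne_zero.2 hxc)
    refine tendsto_nhdsWithin_iff.2 ⟨?_, Eventually.of_forall fun n => ?_⟩
    · simpa [one_div] using (tendsto_one_div_add_atTop_nhds_zero_nat (𝕜 := ℝ)).const_mul |x - c|
    · show 0 < |x - c| * ((n : ℝ) + 1)⁻¹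
      positivity
  have hGfin : ∀ x, x ≠ c → G x < ∞ := by
    have hae : ∀ᵐ x, G x < ∞ := by
      filter_upwards [hGae, Measure.rnDeriv_lt_top ν' volume] with x h1 h2
      rwa [h1]
    intro x hx
    -- A point between `c` and `x` at which `G` is finite.
    have hex : ∃ l : ℝ, 1 ≤ l ∧ ∃ y, y ≠ c ∧ x = c + l * (y - c) ∧ G y < ∞ := by
      rcases lt_or_gt_of_ne hx with hlt | hgt
      · have hpos : volume (Set.Ioo x c) ≠ 0 := by simpa using hlt
        obtain ⟨y, hy, hyG⟩ := (frequently_ae_mem_iff.2 hpos).and_eventually hae |>.exists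
        have hyc : y - c < 0 := sub_neg.2 hy.2
        refine ⟨(x - c) / (y - c), ?_, y, hy.2.ne, ?_, hyG⟩
        · rw [le_div_iff_of_neg hyc]; linarith [hy.1]
        · rw [div_mul_cancel₀ _ hyc.ne]; ring
      · have hpos : volume (Set.Ioo c x) ≠ 0 := by simpa using hgt
        obtain ⟨y, hy, hyG⟩ := (frequently_ae_mem_iff.2 hpos).and_eventually hae |>.exists
        have hyc : 0 < y - c := sub_pos.2 hy.1
        refine ⟨(x - c) / (y - c), ?_, y, hy.1.ne', ?_, hyG⟩
        · rw [le_div_iff₀ hyc]; linarith [hy.2]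
        · rw [div_mul_cancel₀ _ hyc.ne']; ring
    obtain ⟨l, hl, y, hyc, hxy, hy⟩ := hex
    rw [hxy]
    exact (hG y l hl hyc).trans_lt hy
  refine ⟨fun x => (G x).toReal, fun x => ENNReal.toReal_nonneg, ?_, ?_, ?_⟩
  · intro x hx y hy hxy
    have hyc : y - c < 0 := sub_neg.2 hy
    refine ENNReal.toReal_mono (hGfin y (ne_of_lt hy)).ne ?_
    have := hG y ((x - c) / (y - c)) (by rw [le_div_iff_of_neg hyc]; linarith) (ne_of_lt hy)
    rwa [div_mul_cancel₀ _ hyc.ne, add_sub_cancel] at this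
  · intro x hx y hy hxy
    have hxc : 0 < x - c := sub_pos.2 hx
    refine ENNReal.toReal_mono (hGfin x (ne_of_gt hx)).ne ?_
    have := hG x ((y - c) / (x - c)) (by rw [le_div_iff₀ hxc]; linarith) (ne_of_gt hx)
    rwa [div_mul_cancel₀ _ hxc.ne', add_sub_cancel] at this
  · have e1 : volume.withDensity (fun x => ENNReal.ofReal (G x).toReal) = ν' := by
      rw [← Measure.withDensity_rnDeriv_eq ν' volume hac]
      refine withDensity_congr_ae ?_
      filter_upwards [hGae, Measure.rnDeriv_lt_top ν' volume] with x h1 h2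
      rw [h1, ENNReal.ofReal_toReal h2.ne]
    rw [e1, ← Measure.restrict_singleton, hν',
      Measure.restrict_add_restrict_compl (measurableSet_singleton c)]

/-! ### From positivity to log-unimodality -/

/-- `x dμ(x)`: its density with respect to Lebesgue measure at `e^t` is that of `log_* μ` at `t`. -/
def sizeBias (μ : Measure ℝ) : Measure ℝ := μ.withDensity fun x => ENNReal.ofReal x

instance (μ : Measure ℝ) [IsProbabilityMeasure μ] : SFinite (sizeBias μ) := by
  unfold sizeBias; infer_instance

theorem lintegral_sizeBias (μ : Measure ℝ) {k : ℝ → ℝ≥0∞} (hk : Measurable k) :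
    ∫⁻ x, k x ∂(sizeBias μ) = ∫⁻ x, ENNReal.ofReal x * k x ∂μ :=
  lintegral_withDensity_eq_lintegral_mul _ (by fun_prop) hk

theorem sizeBias_fin (μ : Measure ℝ) [IsProbabilityMeasure μ] :
    ∫⁻ x, ENNReal.ofReal ((1 + x ^ 2)⁻¹) ∂(sizeBias μ) ≠ ∞ := by
  rw [lintegral_sizeBias μ (by fun_prop)]
  refine ne_top_of_le_ne_top (b := ∫⁻ x, 1 ∂μ) (by simp) (lintegral_mono fun x => ?_)
  rw [← ENNReal.ofReal_mul' (by positivity), ← ENNReal.ofReal_one]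
  refine ENNReal.ofReal_le_ofReal ?_
  rw [← div_eq_mul_inv, div_le_one (by positivity)]
  nlinarith [sq_nonneg (x - 1)]

theorem inv_im_pos {u v : ℝ} (hv : 0 < v) : 0 < ((u : ℂ) - v * Complex.I)⁻¹.im := by
  rw [Complex.inv_im]
  have h : ((u : ℂ) - v * Complex.I) ≠ 0 := by
    intro h
    have := congrArg Complex.im h
    simp at this
    linarith
  have := Complex.normSq_pos.2 h
  have e : ((u : ℂ) - v * Complex.I).im = -v := by simp
  rw [e, neg_neg]
  positivity

/-- The Poisson integral of `x dμ(x)` at `u + iv` is `Im ψ_μ(1 / (u - iv))`. -/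
theorem poisson_sizeBias_eq (μ : Measure ℝ) [IsProbabilityMeasure μ]
    (hμ : μ (Set.Iic 0) = 0) {v : ℝ} (hv : 0 < v) (u : ℝ) :
    ∫⁻ x, ENNReal.ofReal (poissonKer v u x) ∂(sizeBias μ) =
      ENNReal.ofReal (∫ x : ℝ, ((x : ℂ) * ((u : ℂ) - v * Complex.I)⁻¹) /
        (1 - (x : ℂ) * ((u : ℂ) - v * Complex.I)⁻¹) ∂μ).im := by
  have hc : Continuous fun x => poissonKer v u x :=
    (continuous_poissonKer hv).comp (by fun_prop : Continuous fun x : ℝ => (u, x))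
  have hI := integrable_psi_kernel μ hμ _ (inv_im_pos (u := u) hv)
  have hw : ((u : ℂ) - v * Complex.I) ≠ 0 := by
    intro h
    have := congrArg Complex.im h
    simp at this
    linarith
  have him : ∀ x : ℝ, (((x : ℂ) * ((u : ℂ) - v * Complex.I)⁻¹) /
        (1 - (x : ℂ) * ((u : ℂ) - v * Complex.I)⁻¹)).im = x * poissonKer v u x := by
    intro x
    have hwx : ((u : ℂ) - v * Complex.I) - x ≠ 0 := by
      intro h
      have := congrArg Complex.im h
      simp at this
      linarith
    have e : ((x : ℂ) * ((u : ℂ) - v * Complex.I)⁻¹) /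
        (1 - (x : ℂ) * ((u : ℂ) - v * Complex.I)⁻¹) = x / (((u : ℂ) - v * Complex.I) - x) := by
      rw [div_eq_div_iff (one_sub_mul_ne_zero x _ (inv_im_pos hv)) hwx]
      field_simp
    rw [e, Complex.div_im, poissonKer]
    simp [Complex.normSq_apply]
    ring
  rw [lintegral_sizeBias μ hc.measurable.ennreal_ofReal]
  have e2 : (∫ x : ℝ, ((x : ℂ) * ((u : ℂ) - v * Complex.I)⁻¹) /
        (1 - (x : ℂ) * ((u : ℂ) - v * Complex.I)⁻¹) ∂μ).im = ∫ x, x * poissonKer v u x ∂μ := by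
    rw [← integral_congr_ae (Eventually.of_forall him)]
    exact (integral_im hI).symm
  have hI2 : Integrable (fun x => x * poissonKer v u x) μ :=
    (integrable_congr (Eventually.of_forall him)).1 hI.im
  rw [e2, ofReal_integral_eq_lintegral_ofReal hI2]
  · exact lintegral_congr fun x => (ENNReal.ofReal_mul' (poissonKer_nonneg hv.le u x)).symm
  · filter_upwards [ae_pos_of_measure_Iic hμ] with x hx
    exact mul_nonneg hx.le (poissonKer_nonneg hv.le u x)

/-- The hypothesis makes `Im ψ_μ(1 / w)` non-increasing along the rays from `c` in the lower
half-plane, since `r * d/dr ψ_μ(1 / (c + r e)) = -z (1 - c z) ψ_μ'(z)` with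
`z = 1 / (c + r e)`. -/
theorem im_psi_antitone (μ : Measure ℝ) [IsProbabilityMeasure μ]
    (hμ : μ (Set.Iic 0) = 0) (c : ℝ)
    (h : ∀ z : ℂ, 0 < z.im → 0 ≤ (z * (1 - (c : ℂ) * z) *
      deriv (fun w : ℂ => ∫ x : ℝ, ((x : ℂ) * w) / (1 - (x : ℂ) * w) ∂μ) z).im)
    (e : ℂ) (he : e.im < 0) :
    AntitoneOn (fun r : ℝ => (∫ x : ℝ, ((x : ℂ) * ((c : ℂ) + r * e)⁻¹) /
        (1 - (x : ℂ) * ((c : ℂ) + r * e)⁻¹) ∂μ).im) (Set.Ioi 0) := by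
  set ψ : ℂ → ℂ := fun w : ℂ => ∫ x : ℝ, ((x : ℂ) * w) / (1 - (x : ℂ) * w) ∂μ with hψ
  have hd : ∀ r : ℝ, 0 < r → ∃ D : ℝ, D ≤ 0 ∧
      HasDerivAt (fun r : ℝ => (ψ ((c : ℂ) + r * e)⁻¹).im) D r := by
    intro r hr
    have hwim : ((c : ℂ) + r * e).im = r * e.im := by simp
    have hneg : r * e.im < 0 := mul_neg_of_pos_of_neg hr he
    have hw : (c : ℂ) + r * e ≠ 0 := by
      intro h0
      rw [h0] at hwim
      simp only [Complex.zero_im] at hwim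
      linarith
    have hz : 0 < (((c : ℂ) + r * e)⁻¹).im := by
      rw [Complex.inv_im, hwim]
      exact div_pos (by linarith) (Complex.normSq_pos.2 hw)
    have h1 := (hasDerivAt_psi μ hμ _ hz).2.differentiableAt.hasDerivAt
    have h2 : HasDerivAt (fun r : ℝ => (c : ℂ) + r * e) e r := by
      simpa using ((Complex.ofRealCLM.hasDerivAt (x := r)).mul_const e).const_add (c : ℂ)
    have h3 := h1.comp r (h2.fun_inv hw)
    have h4 := Complex.imCLM.hasFDerivAt.comp_hasDerivAt r h3
    refine ⟨_, ?_, h4⟩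
    have h5 := h _ hz
    set z := ((c : ℂ) + r * e)⁻¹ with hzdef
    have hr' : (r : ℂ) ≠ 0 := by exact_mod_cast hr.ne'
    have e1 : deriv ψ z * (-e / ((c : ℂ) + r * e) ^ 2)
        = ((-r⁻¹ : ℝ) : ℂ) * (z * (1 - (c : ℂ) * z) * deriv ψ z) := by
      have : z * (1 - (c : ℂ) * z) = r * e / ((c : ℂ) + r * e) ^ 2 := by
        rw [hzdef]; field_simp; ring
      rw [this]
      push_cast
      field_simp
    rw [Complex.imCLM_apply]
    change (deriv ψ z * (-e / ((c : ℂ) + r * e) ^ 2)).im ≤ 0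
    rw [e1, Complex.im_ofReal_mul]
    exact mul_nonpos_of_nonpos_of_nonneg (by simpa using hr.le) h5
  refine antitoneOn_of_deriv_nonpos (convex_Ioi 0) ?_ ?_ ?_
  · intro r hr
    obtain ⟨D, _, hD⟩ := hd r hr
    exact hD.continuousAt.continuousWithinAt
  · rw [interior_Ioi]
    intro r hr
    obtain ⟨D, _, hD⟩ := hd r hr
    exact hD.differentiableAt.differentiableWithinAt
  · rw [interior_Ioi]
    intro r hr
    obtain ⟨D, hD0, hD⟩ := hd r hr
    rw [hD.deriv]
    exact hD0

/-- The image of `x dμ(x)` under the contraction towards `c` with factor `κ`, multiplied by `κ`, is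
at most `x dμ(x)`. -/
theorem sizeBias_dilation (μ : Measure ℝ) [IsProbabilityMeasure μ]
    (hμ : μ (Set.Iic 0) = 0) (c : ℝ)
    (h : ∀ z : ℂ, 0 < z.im → 0 ≤ (z * (1 - (c : ℂ) * z) *
      deriv (fun w : ℂ => ∫ x : ℝ, ((x : ℂ) * w) / (1 - (x : ℂ) * w) ∂μ) z).im)
    (κ : ℝ) (hκ0 : 0 < κ) (hκ1 : κ ≤ 1) (A : Set ℝ) (hA : MeasurableSet A) :
    ENNReal.ofReal κ * sizeBias μ ((fun x => c + κ * (x - c)) ⁻¹' A) ≤ sizeBias μ A := by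
  have hm : Measurable fun x : ℝ => c + κ * (x - c) := by fun_prop
  have hle : ENNReal.ofReal κ • (sizeBias μ).map (fun x => c + κ * (x - c)) ≤ sizeBias μ := by
    refine measure_le_of_poisson_le_s4 _ _ (sizeBias_fin μ) fun v u hv => ?_
    have hc : Continuous fun x => poissonKer v u x :=
      (continuous_poissonKer hv).comp (by fun_prop : Continuous fun x : ℝ => (u, x))
    -- The dilation moves `u + iv` along the ray from `c` to `c + κ⁻¹ (u + iv - c)`.
    have e1 : ∀ x, ENNReal.ofReal κ * ENNReal.ofReal (poissonKer v u (c + κ * (x - c)))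
        = ENNReal.ofReal (poissonKer (κ⁻¹ * v) (c + κ⁻¹ * (u - c)) x) := by
      intro x
      rw [← ENNReal.ofReal_mul hκ0.le]
      congr 1
      unfold poissonKer
      have h1 : (0:ℝ) < (u - (c + κ * (x - c))) ^ 2 + v ^ 2 := by positivity
      have h2 : (0:ℝ) < (c + κ⁻¹ * (u - c) - x) ^ 2 + (κ⁻¹ * v) ^ 2 := by positivity
      rw [← mul_div_assoc, div_eq_div_iff h1.ne' h2.ne']
      field_simp
      ring
    rw [lintegral_smul_measure, lintegral_map hc.measurable.ennreal_ofReal hm, smul_eq_mul,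
      ← lintegral_const_mul' _ _ ENNReal.ofReal_ne_top]
    simp_rw [e1]
    have hκi : 0 < κ⁻¹ := inv_pos.2 hκ0
    rw [poisson_sizeBias_eq μ hμ (by positivity), poisson_sizeBias_eq μ hμ hv]
    refine ENNReal.ofReal_le_ofReal ?_
    have hanti := im_psi_antitone μ hμ c h ((u : ℂ) - c - v * Complex.I) (by simpa using hv)
      (Set.mem_Ioi.2 one_pos) (Set.mem_Ioi.2 hκi)
      ((one_le_inv₀ hκ0).2 hκ1)
    have w1 : (c : ℂ) + ((1 : ℝ) : ℂ) * ((u : ℂ) - c - v * Complex.I)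
        = (u : ℂ) - v * Complex.I := by
      push_cast; ring
    have w2 : (c : ℂ) + ((κ⁻¹ : ℝ) : ℂ) * ((u : ℂ) - c - v * Complex.I)
        = ((c + κ⁻¹ * (u - c) : ℝ) : ℂ) - ((κ⁻¹ * v : ℝ) : ℂ) * Complex.I := by
      push_cast; ring
    simp only [w1, w2] at hanti
    exact hanti
  have := hle A
  rwa [Measure.smul_apply, Measure.map_apply hm hA, smul_eq_mul] at this

theorem map_log_eq_of_sizeBias (μ : Measure ℝ) (hμ : μ (Set.Iic 0) = 0) (c : ℝ) (hc : 0 < c)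
    {m : ℝ≥0∞} {g : ℝ → ℝ} (hg : Measurable g)
    (hν : sizeBias μ = m • Measure.dirac c + volume.withDensity fun x => ENNReal.ofReal (g x)) :
    μ.map Real.log = (m * (ENNReal.ofReal c)⁻¹) • Measure.dirac (Real.log c) +
      volume.withDensity fun t => ENNReal.ofReal (g (Real.exp t)) := by
  ext B hB
  have hE : MeasurableSet (Real.exp '' B) :=
    hB.image_of_measurable_injOn Real.measurable_exp Real.exp_injective.injOn
  have e0 : μ.map Real.log B = μ (Real.exp '' B) := by
    rw [Measure.map_apply Real.measurable_log hB]
    refine measure_congr ?_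
    filter_upwards [ae_pos_of_measure_Iic hμ] with x hx
    refine propext ⟨fun h => ⟨Real.log x, h, Real.exp_log hx⟩, ?_⟩
    rintro ⟨t, ht, rfl⟩
    show Real.log (Real.exp t) ∈ B
    rwa [Real.log_exp]
  have e1 : μ (Real.exp '' B)
      = ∫⁻ x, (Real.exp '' B).indicator (fun x => (ENNReal.ofReal x)⁻¹) x ∂(sizeBias μ) := by
    rw [lintegral_sizeBias μ (Measurable.indicator (by fun_prop) hE),
      ← lintegral_indicator_one hE]
    refine lintegral_congr fun x => ?_
    by_cases hx : x ∈ Real.exp '' B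
    · obtain ⟨t, ht, rfl⟩ := id hx
      rw [indicator_of_mem hx, indicator_of_mem hx, Pi.one_apply,
        ENNReal.mul_inv_cancel (by simpa using Real.exp_pos t) ENNReal.ofReal_ne_top]
    · rw [indicator_of_notMem hx, indicator_of_notMem hx, mul_zero]
  rw [e0, e1, hν, lintegral_add_measure, lintegral_smul_measure, lintegral_dirac,
    lintegral_indicator hE]
  have e2 : ∫⁻ x in Real.exp '' B, (ENNReal.ofReal x)⁻¹
        ∂(volume.withDensity fun x => ENNReal.ofReal (g x))
      = volume.withDensity (fun t => ENNReal.ofReal (g (Real.exp t))) B := by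
    rw [setLIntegral_withDensity_eq_setLIntegral_mul _ (by fun_prop) (by fun_prop) hE,
      lintegral_image_eq_lintegral_abs_deriv_mul hB
        (fun t _ => (Real.hasDerivAt_exp t).hasDerivWithinAt) Real.exp_injective.injOn,
      withDensity_apply _ hB]
    refine lintegral_congr fun t => ?_
    rw [Pi.mul_apply, abs_of_pos (Real.exp_pos t), mul_comm (ENNReal.ofReal (g _)), ← mul_assoc,
      ENNReal.mul_inv_cancel (by simpa using Real.exp_pos t) ENNReal.ofReal_ne_top, one_mul]
  rw [e2, Measure.add_apply, Measure.smul_apply, Measure.dirac_apply' _ hB]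
  congr 1
  have hiff : c ∈ Real.exp '' B ↔ Real.log c ∈ B := by
    constructor
    · rintro ⟨t, ht, rfl⟩; rwa [Real.log_exp]
    · intro h; exact ⟨_, h, Real.exp_log hc⟩
  by_cases hcB : Real.log c ∈ B
  · simp [indicator_of_mem (hiff.2 hcB), hcB]
  · simp [indicator_of_notMem (fun h => hcB (hiff.1 h)), hcB]

/-- a probability measure `μ` on `ℝ₊` is log-unimodal with mode `c` iff
`Im[z (1 - cz) ψ_μ'(z)] ≥ 0` on the upper half-plane, where
`ψ_μ(z) = ∫ xz / (1 - xz) dμ(x)`. -/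
theorem logUnimodal_iff_psi (μ : Measure ℝ) [IsProbabilityMeasure μ]
    (hμ : μ (Set.Iic 0) = 0) (c : ℝ) (hc : 0 < c) :
    IsLogUnimodalWithMode μ c ↔
      ∀ z : ℂ, 0 < z.im →
        0 ≤ (z * (1 - (c : ℂ) * z) *
          deriv (fun w : ℂ => ∫ x : ℝ, ((x : ℂ) * w) / (1 - (x : ℂ) * w) ∂μ) z).im := by
  constructor
  · rintro ⟨c₀, f, -, hf1, hf2, hτ⟩ z hz
    exact nonneg_of_unimodal μ hμ c hc hf1 hf2 hτ z hz
  · intro h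
    have := isLocallyFinite_of_lintegral _ (sizeBias_fin μ)
    obtain ⟨g, hg0, hg1, hg2, hν⟩ := unimodal_of_dilation (sizeBias μ) c
      (fun κ h0 h1 A hA => sizeBias_dilation μ hμ c h κ h0 h1 A hA)
    refine ⟨_, fun t => g (Real.exp t), fun t => hg0 _, ?_, ?_,
      map_log_eq_of_sizeBias μ hμ c hc (measurable_of_unimodal_s4 hg1 hg2) hν⟩
    · intro s hs t ht hst
      exact hg1 ((Real.lt_log_iff_exp_lt hc).1 hs) ((Real.lt_log_iff_exp_lt hc).1 ht)
        (Real.exp_le_exp.2 hst)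
    · intro s hs t ht hst
      exact hg2 ((Real.log_lt_iff_lt_exp hc).1 hs) ((Real.log_lt_iff_lt_exp hc).1 ht)
        (Real.exp_le_exp.2 hst)
end
end

section
/- For b ∈ (0,π), let λ_b be the probability measure on ℝ₊ = (0,∞) with density c_b/(1 − 2x cos b + x²), where c_b = sin b/(π − b). Then λ_b is ⊛-strongly log-unimodal if and only if cos b ≤ 0. -/
/-!
Under `log`, multiplicative convolution on `(0, ∞)` becomes additive convolution, and `λ_b` becomes
the measure with density `g t = C / (cosh t - k)`, `k = cos b` (`map_log_lambda`,
`map_log_mulConv`). The logarithm of `g` has second derivative `(k cosh t - 1) / (cosh t - k) ^ 2`,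
so `g` is log-concave exactly when `k ≤ 0`, and the theorem is an instance of Ibragimov's
characterisation of strong unimodality.

If `k ≤ 0` and `σ` is unimodal with mode `c`, let `h = g ∗ σ`. Then `h' x / g (x - c)` is
non-increasing in `x` (`kernelConvDeriv_div_antitone`): by the layer-cake formula it suffices to
treat uniform laws on intervals `[a, b] ∋ c`, for which this ratio is a constant multiple of
`(g (x - a) - g (x - b)) / g (x - c)`, together with the atom at `c`, for which it is a constant
multiple of `g' / g`; both are non-increasing by log-concavity. Hence `h'` changes sign at most once,
from `+` to `-`, and since `h` is positive and vanishes at `±∞`, it has a mode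
(`exists_mode_of_antitone`).

If `0 < k < 1`, the logarithmic derivative `g' / g` has a minimum `-r < -1` and then increases to
`-1`. Convolving `g` with a suitable mixture of the unit mass at `0` and the uniform law on a long
interval `[0, L]` gives a density whose derivative is proportional to `g' + r (g - g (· - L))`; it is
negative at the minimum point of `g' / g` and positive further to the right
(`exists_unimodal_bad`), so the density is not unimodal (`not_isUnimodalWithMode`).
-/

open MeasureTheory Set Filter Topology
open scoped ENNReal NNReal

noncomputable section

/-! ### The kernel `C / (cosh t - k)` -/

/-- The density of the push-forward of `λ_b` under `log`, where `k = cos b` and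
`C = sin b / (2 (π - b))`. -/
def coshKernel (C k t : ℝ) : ℝ := C / (Real.cosh t - k)

/-- The derivative of `coshKernel C k`. -/
def coshKernelDeriv (C k t : ℝ) : ℝ := -(C * Real.sinh t) / (Real.cosh t - k) ^ 2

lemma cosh_sub_pos {k : ℝ} (hk : k < 1) (t : ℝ) : 0 < Real.cosh t - k := by
  linarith [Real.one_le_cosh t]

lemma coshKernel_pos {C k : ℝ} (hC : 0 < C) (hk : k < 1) (t : ℝ) : 0 < coshKernel C k t :=
  div_pos hC (cosh_sub_pos hk t)

lemma hasDerivAt_coshKernel {k : ℝ} (C : ℝ) (hk : k < 1) (t : ℝ) :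
    HasDerivAt (coshKernel C k) (coshKernelDeriv C k t) t := by
  have h := (hasDerivAt_const t C).div ((Real.hasDerivAt_cosh t).sub_const k)
    (cosh_sub_pos hk t).ne'
  exact h.congr_deriv (by simp [coshKernelDeriv])

lemma continuous_coshKernel {k : ℝ} (C : ℝ) (hk : k < 1) : Continuous (coshKernel C k) :=
  continuous_iff_continuousAt.2 fun t => (hasDerivAt_coshKernel C hk t).continuousAt

lemma continuous_coshKernelDeriv {k : ℝ} (C : ℝ) (hk : k < 1) :
    Continuous (coshKernelDeriv C k) := by
  unfold coshKernelDeriv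
  refine Continuous.div (by fun_prop) (by fun_prop) fun t => ?_
  exact (pow_pos (cosh_sub_pos hk t) 2).ne'

lemma coshKernel_le {C k : ℝ} (hC : 0 < C) (hk : k < 1) (t : ℝ) :
    coshKernel C k t ≤ C / (1 - k) :=
  div_le_div_of_nonneg_left hC.le (by linarith) (by linarith [Real.one_le_cosh t])

lemma norm_coshKernel_le {C k : ℝ} (hC : 0 < C) (hk : k < 1) (t : ℝ) :
    ‖coshKernel C k t‖ ≤ C / (1 - k) := by
  rw [Real.norm_of_nonneg (coshKernel_pos hC hk t).le]
  exact coshKernel_le hC hk t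

lemma norm_coshKernelDeriv_le {C k : ℝ} (hC : 0 < C) (hk : k < 1) (t : ℝ) :
    ‖coshKernelDeriv C k t‖ ≤ C * (1 / (1 - k) + 1 / (1 - k) ^ 2) := by
  have hp := cosh_sub_pos hk t
  have h1 : (1 - k) ≤ Real.cosh t - k := by linarith [Real.one_le_cosh t]
  have h1k : 0 < 1 - k := by linarith
  have hs : |Real.sinh t| ≤ (Real.cosh t - k) + 1 := by
    have : |Real.sinh t| ≤ Real.cosh t := by
      apply abs_le_of_sq_le_sq _ (Real.cosh_pos t).le
      nlinarith [Real.cosh_sq t]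
    linarith
  unfold coshKernelDeriv
  rw [norm_div, norm_neg, norm_mul, Real.norm_of_nonneg hC.le, Real.norm_eq_abs,
    Real.norm_of_nonneg (pow_pos hp 2).le, mul_div_assoc]
  gcongr
  calc |Real.sinh t| / (Real.cosh t - k) ^ 2
      ≤ ((Real.cosh t - k) + 1) / (Real.cosh t - k) ^ 2 := by gcongr
    _ = 1 / (Real.cosh t - k) + 1 / (Real.cosh t - k) ^ 2 := by field_simp
    _ ≤ _ := by gcongr

lemma tendsto_cosh_atTop : Tendsto Real.cosh atTop atTop := by
  refine tendsto_atTop_mono (fun t => ?_) tendsto_id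
  have := Real.add_one_le_exp t
  have := Real.cosh_eq t
  have h2 := Real.quadratic_le_exp_of_nonneg (abs_nonneg t)
  rw [← Real.cosh_abs, Real.cosh_eq]
  have h3 : 0 < Real.exp (-|t|) := Real.exp_pos _
  simp only [id]
  nlinarith [le_abs_self t, sq_nonneg (|t| - 1)]

lemma tendsto_cosh_atBot : Tendsto Real.cosh atBot atTop := by
  have := tendsto_cosh_atTop.comp tendsto_neg_atBot_atTop
  refine this.congr fun t => ?_
  simp

lemma tendsto_coshKernel_atTop (C k : ℝ) : Tendsto (coshKernel C k) atTop (𝓝 0) :=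
  (tendsto_atTop_add_const_right _ (-k) tendsto_cosh_atTop).const_div_atTop C

lemma tendsto_coshKernel_atBot (C k : ℝ) : Tendsto (coshKernel C k) atBot (𝓝 0) :=
  (tendsto_atTop_add_const_right _ (-k) tendsto_cosh_atBot).const_div_atTop C

/-- Log-convexity of `cosh - k` for `k ≤ 0`, in multiplicative increment form. Equivalently
`coshKernel C k` is log-concave. -/
lemma cosh_sub_mul_le {k : ℝ} (hk : k ≤ 0) (p : ℝ) {u v : ℝ} (hu : 0 ≤ u) (hv : 0 ≤ v) :
    (Real.cosh (p + u) - k) * (Real.cosh (p + v) - k)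
      ≤ (Real.cosh p - k) * (Real.cosh (p + u + v) - k) := by
  have hsu : 0 ≤ Real.sinh u := Real.sinh_nonneg_iff.2 hu
  have hsv : 0 ≤ Real.sinh v := Real.sinh_nonneg_iff.2 hv
  have h1 : Real.cosh p * Real.cosh (p + u + v) - Real.cosh (p + u) * Real.cosh (p + v)
      = Real.sinh u * Real.sinh v := by
    simp only [Real.cosh_add, Real.sinh_add]
    linear_combination (Real.sinh u * Real.sinh v) * (Real.cosh_sq p)
  -- sum-to-product about the common midpoint `p + (u + v) / 2`
  have h2 : Real.cosh (p + u) + Real.cosh (p + v) ≤ Real.cosh p + Real.cosh (p + u + v) := by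
    have e1 : p + u = (p + (u + v) / 2) + (u - v) / 2 := by ring
    have e2 : p + v = (p + (u + v) / 2) - (u - v) / 2 := by ring
    have e4 : p + u + v = (p + (u + v) / 2) + (u + v) / 2 := by ring
    have e3 : Real.cosh p = Real.cosh ((p + (u + v) / 2) - (u + v) / 2) := by congr 1; ring
    rw [e4, e3, e1, e2]
    generalize p + (u + v) / 2 = m
    simp only [Real.cosh_add, Real.cosh_sub]
    have : Real.cosh ((u - v) / 2) ≤ Real.cosh ((u + v) / 2) := by
      rw [Real.cosh_le_cosh, abs_of_nonneg (by linarith : 0 ≤ (u + v) / 2)]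
      exact abs_le.2 ⟨by linarith, by linarith⟩
    nlinarith [Real.cosh_pos m]
  nlinarith [mul_nonneg hsu hsv]

/-- For `k ≤ 0` the logarithmic derivative of the kernel is non-increasing. -/
lemma coshKernelDeriv_div_antitone {C k : ℝ} (hC : 0 < C) (hk : k ≤ 0) {s t : ℝ} (hst : s ≤ t) :
    coshKernelDeriv C k t / coshKernel C k t ≤ coshKernelDeriv C k s / coshKernel C k s := by
  have hs := cosh_sub_pos (by linarith : k < 1) s
  have ht := cosh_sub_pos (by linarith : k < 1) t
  have key (r : ℝ) (hr : 0 < Real.cosh r - k) :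
      coshKernelDeriv C k r / coshKernel C k r = -(Real.sinh r / (Real.cosh r - k)) := by
    unfold coshKernelDeriv coshKernel
    field_simp
  rw [key _ hs, key _ ht, neg_le_neg_iff, div_le_div_iff₀ hs ht]
  have h1 : 0 ≤ Real.sinh (t - s) := Real.sinh_nonneg_iff.2 (by linarith)
  rw [Real.sinh_sub] at h1
  have h2 : Real.sinh s ≤ Real.sinh t := Real.sinh_le_sinh.2 hst
  nlinarith

/-! ### Convolution of the kernel with a finite measure -/

/-- The density of the convolution of `coshKernel C k` with the measure `σ`. -/
def kernelConv (C k : ℝ) (σ : Measure ℝ) (x : ℝ) : ℝ := ∫ y, coshKernel C k (x - y) ∂σ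

/-- The derivative of `kernelConv C k σ`. -/
def kernelConvDeriv (C k : ℝ) (σ : Measure ℝ) (x : ℝ) : ℝ := ∫ y, coshKernelDeriv C k (x - y) ∂σ

lemma integrable_coshKernel_sub {C k : ℝ} (hC : 0 < C) (hk : k < 1) (σ : Measure ℝ)
    [IsFiniteMeasure σ] (x : ℝ) : Integrable (fun y => coshKernel C k (x - y)) σ :=
  Integrable.of_bound
    ((continuous_coshKernel C hk).comp (continuous_const.sub continuous_id)).aestronglyMeasurable
    _ (Eventually.of_forall fun _ => norm_coshKernel_le hC hk _)

lemma integrable_coshKernelDeriv_sub {C k : ℝ} (hC : 0 < C) (hk : k < 1) (σ : Measure ℝ)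
    [IsFiniteMeasure σ] (x : ℝ) : Integrable (fun y => coshKernelDeriv C k (x - y)) σ :=
  Integrable.of_bound
    ((continuous_coshKernelDeriv C hk).comp
      (continuous_const.sub continuous_id)).aestronglyMeasurable
    _ (Eventually.of_forall fun _ => norm_coshKernelDeriv_le hC hk _)

lemma hasDerivAt_kernelConv {C k : ℝ} (hC : 0 < C) (hk : k < 1) (σ : Measure ℝ)
    [IsFiniteMeasure σ] (x : ℝ) :
    HasDerivAt (kernelConv C k σ) (kernelConvDeriv C k σ x) x := by
  refine (hasDerivAt_integral_of_dominated_loc_of_deriv_le (μ := σ) (s := univ)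
    (F := fun x y => coshKernel C k (x - y)) (F' := fun x y => coshKernelDeriv C k (x - y))
    (bound := fun _ => C * (1 / (1 - k) + 1 / (1 - k) ^ 2)) univ_mem
    (Eventually.of_forall fun x => (integrable_coshKernel_sub hC hk σ x).aestronglyMeasurable)
    (integrable_coshKernel_sub hC hk σ x)
    (integrable_coshKernelDeriv_sub hC hk σ x).aestronglyMeasurable
    (Eventually.of_forall fun _ _ _ => norm_coshKernelDeriv_le hC hk _)
    (integrable_const _) (Eventually.of_forall fun y x _ => ?_)).2
  exact HasDerivAt.comp_sub_const x y (hasDerivAt_coshKernel C hk _)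

lemma kernelConv_pos {C k : ℝ} (hC : 0 < C) (hk : k < 1) (σ : Measure ℝ)
    [IsProbabilityMeasure σ] (x : ℝ) : 0 < kernelConv C k σ x := by
  refine (integral_pos_iff_support_of_nonneg (fun y => (coshKernel_pos hC hk _).le)
    (integrable_coshKernel_sub hC hk σ x)).2 ?_
  have : Function.support (fun y => coshKernel C k (x - y)) = univ :=
    eq_univ_of_forall fun y => (coshKernel_pos hC hk _).ne'
  simp [this]

lemma tendsto_kernelConv {C k : ℝ} (hC : 0 < C) (hk : k < 1) (σ : Measure ℝ)
    [IsFiniteMeasure σ] (l : Filter ℝ) [l.IsCountablyGenerated]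
    (hl : ∀ y, Tendsto (fun x => coshKernel C k (x - y)) l (𝓝 0)) :
    Tendsto (kernelConv C k σ) l (𝓝 0) := by
  have := tendsto_integral_filter_of_dominated_convergence (μ := σ) (l := l)
    (F := fun x y => coshKernel C k (x - y)) (f := fun _ => 0) (fun _ => C / (1 - k))
    (Eventually.of_forall fun x => (integrable_coshKernel_sub hC hk σ x).aestronglyMeasurable)
    (Eventually.of_forall fun _ => Eventually.of_forall fun _ => norm_coshKernel_le hC hk _)
    (integrable_const _) (Eventually.of_forall hl)
  rw [integral_zero] at this
  exact this

lemma tendsto_kernelConv_atTop {C k : ℝ} (hC : 0 < C) (hk : k < 1) (σ : Measure ℝ)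
    [IsFiniteMeasure σ] : Tendsto (kernelConv C k σ) atTop (𝓝 0) :=
  tendsto_kernelConv hC hk σ _ fun y => (tendsto_coshKernel_atTop C k).comp
    (tendsto_atTop_add_const_right _ (-y) tendsto_id)

lemma tendsto_kernelConv_atBot {C k : ℝ} (hC : 0 < C) (hk : k < 1) (σ : Measure ℝ)
    [IsFiniteMeasure σ] : Tendsto (kernelConv C k σ) atBot (𝓝 0) :=
  tendsto_kernelConv hC hk σ _ fun y => (tendsto_coshKernel_atBot C k).comp
    (tendsto_atBot_add_const_right _ (-y) tendsto_id)

/-! ### The push-forward of `λ_b ⊛ ν` under `log` -/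

/-- Substituting `x = exp t` turns the density of `λ_b` into `coshKernel`. -/
lemma map_log_lambda {S k : ℝ} (hk : k < 1) :
    (volume.withDensity (fun x => ENNReal.ofReal (Set.indicator (Set.Ioi 0)
        (fun y => S / (1 - 2 * y * k + y ^ 2)) x))).map Real.log
      = volume.withDensity (fun t => ENNReal.ofReal (coshKernel (S / 2) k t)) := by
  ext A hA
  rw [Measure.map_apply Real.measurable_log hA, withDensity_apply _ (Real.measurable_log hA),
    withDensity_apply _ hA]
  have e1 : ∫⁻ x in Real.log ⁻¹' A, ENNReal.ofReal (Set.indicator (Set.Ioi 0)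
        (fun y => S / (1 - 2 * y * k + y ^ 2)) x)
      = ∫⁻ x in Ioi 0, (Real.log ⁻¹' A).indicator
          (fun y => ENNReal.ofReal (S / (1 - 2 * y * k + y ^ 2))) x := by
    rw [← lintegral_indicator (Real.measurable_log hA), ← lintegral_indicator measurableSet_Ioi]
    congr 1
    ext x
    by_cases h1 : x ∈ Ioi (0 : ℝ) <;> by_cases h2 : x ∈ Real.log ⁻¹' A <;>
      simp [indicator, h1, h2]
  have e2 := lintegral_image_eq_lintegral_abs_deriv_mul (s := univ) (f := Real.exp)
    (f' := Real.exp) MeasurableSet.univ (fun x _ => (Real.hasDerivAt_exp x).hasDerivWithinAt)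
    Real.exp_injective.injOn ((Real.log ⁻¹' A).indicator
          (fun y => ENNReal.ofReal (S / (1 - 2 * y * k + y ^ 2))))
  rw [image_univ, Real.range_exp] at e2
  rw [e1, e2, setLIntegral_univ, ← lintegral_indicator hA]
  congr 1
  ext t
  by_cases ht : t ∈ A
  · rw [indicator_of_mem (by simpa using ht), indicator_of_mem ht,
      ← ENNReal.ofReal_mul (abs_nonneg _), abs_of_pos (Real.exp_pos t)]
    congr 1
    have h1 := cosh_sub_pos hk t
    have he := Real.exp_pos t
    have h2 : 1 - 2 * Real.exp t * k + Real.exp t ^ 2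
        = 2 * Real.exp t * (Real.cosh t - k) := by
      rw [Real.cosh_eq, Real.exp_neg]
      field_simp
      ring
    rw [h2]
    unfold coshKernel
    field_simp
  · rw [indicator_of_notMem (by simpa using ht), indicator_of_notMem ht, mul_zero]

/-- Convolving the measure with density `coshKernel C k` with `σ` yields the density
`kernelConv C k σ`. -/
lemma addConv_kernel {C k : ℝ} (hC : 0 < C) (hk : k < 1) (σ : Measure ℝ) [IsFiniteMeasure σ] :
    addConv (volume.withDensity (fun t => ENNReal.ofReal (coshKernel C k t))) σ
      = volume.withDensity (fun x => ENNReal.ofReal (kernelConv C k σ x)) := by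
  have hcm : Measurable (coshKernel C k) := (continuous_coshKernel C hk).measurable
  have hm : Measurable (fun t => ENNReal.ofReal (coshKernel C k t)) :=
    ENNReal.measurable_ofReal.comp hcm
  ext A hA
  have hA1 : Measurable (A.indicator (1 : ℝ → ℝ≥0∞)) := measurable_one.indicator hA
  have e0 : addConv (volume.withDensity (fun t => ENNReal.ofReal (coshKernel C k t))) σ A
      = ∫⁻ z, A.indicator 1 z
        ∂(addConv (volume.withDensity (fun t => ENNReal.ofReal (coshKernel C k t))) σ) :=
    (lintegral_indicator_one hA).symm
  rw [e0, addConv, lintegral_map hA1 (by fun_prop),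
    lintegral_prod_symm _ (by fun_prop), withDensity_apply _ hA]
  have e1 (y : ℝ) : ∫⁻ x, A.indicator 1 (x + y)
        ∂(volume.withDensity (fun t => ENNReal.ofReal (coshKernel C k t)))
      = ∫⁻ x, ENNReal.ofReal (coshKernel C k (x - y)) * A.indicator 1 x := by
    rw [lintegral_withDensity_eq_lintegral_mul _ hm (by fun_prop)]
    rw [← lintegral_add_right_eq_self (μ := volume)
      (fun x => ENNReal.ofReal (coshKernel C k (x - y)) * A.indicator 1 x) y]
    simp
  simp_rw [e1]
  rw [lintegral_lintegral_swap (by fun_prop), ← lintegral_indicator hA]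
  congr 1
  ext x
  have e2 : ENNReal.ofReal (kernelConv C k σ x)
      = ∫⁻ y, ENNReal.ofReal (coshKernel C k (x - y)) ∂σ :=
    ofReal_integral_eq_lintegral_ofReal (integrable_coshKernel_sub hC hk σ x)
      (Eventually.of_forall fun _ => (coshKernel_pos hC hk _).le)
  rw [lintegral_mul_const _ (by fun_prop), ← e2]
  by_cases hx : x ∈ A <;> simp [hx]

/-- `log` carries multiplicative convolution on `(0, ∞)` to additive convolution. -/
lemma map_log_mulConv (μ ν : Measure ℝ) [SFinite μ] [SFinite ν]
    (hμ : ∀ᵐ x ∂μ, x ≠ 0) (hν : ∀ᵐ x ∂ν, x ≠ 0) :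
    (mulConv μ ν).map Real.log = addConv (μ.map Real.log) (ν.map Real.log) := by
  unfold mulConv addConv
  rw [Measure.map_prod_map _ _ Real.measurable_log Real.measurable_log,
    Measure.map_map Real.measurable_log (by fun_prop),
    Measure.map_map (by fun_prop) (by fun_prop)]
  refine Measure.map_congr ?_
  have h1 : ∀ᵐ p ∂(μ.prod ν), p.1 ≠ 0 := Measure.quasiMeasurePreserving_fst.ae hμ
  have h2 : ∀ᵐ p ∂(μ.prod ν), p.2 ≠ 0 := Measure.quasiMeasurePreserving_snd.ae hν
  filter_upwards [h1, h2] with p hp1 hp2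
  simp [Real.log_mul hp1 hp2]

/-! ### Sign of an integral against a unimodal density -/

/-- The super-level sets of a unimodal function become order-connected once the mode is added. -/
lemma ordConnected_insert_levelSet {f : ℝ → ℝ} {c : ℝ} (hm : MonotoneOn f (Iio c))
    (ha : AntitoneOn f (Ioi c)) (t : ℝ) : (insert c {y | t < f y}).OrdConnected := by
  refine ⟨fun x hx z hz y hy => ?_⟩
  rcases lt_trichotomy y c with h | h | h
  · have hxc : x < c := hy.1.trans_lt h
    rcases hx with rfl | hx
    · exact absurd hxc (lt_irrefl _)
    · exact Or.inr (lt_of_lt_of_le hx (hm hxc h hy.1))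
  · exact Or.inl h
  · have hzc : c < z := h.trans_le hy.2
    rcases hz with rfl | hz
    · exact absurd hzc (lt_irrefl _)
    · exact Or.inr (lt_of_lt_of_le hz (ha h hzc hy.2))

/-- An order-connected set of finite length containing `c` is, up to a null set, an interval
around `c`. -/
lemma ordConnected_ae_eq_Ioc {T : Set ℝ} (hT : T.OrdConnected) {c : ℝ} (hc : c ∈ T)
    (hfin : volume T ≠ ∞) : ∃ a b, a ≤ c ∧ c ≤ b ∧ T =ᵐ[volume] Ioc a b := by
  have hup : ∀ y ∈ T, y ≤ c + (volume T).toReal := by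
    intro y hy
    by_contra! h
    have h1 : volume (Icc c y) ≤ volume T := measure_mono (hT.out hc hy)
    rw [Real.volume_Icc, ENNReal.ofReal_le_iff_le_toReal hfin] at h1
    linarith
  have hlo : ∀ y ∈ T, c - (volume T).toReal ≤ y := by
    intro y hy
    by_contra! h
    have h1 : volume (Icc y c) ≤ volume T := measure_mono (hT.out hy hc)
    rw [Real.volume_Icc, ENNReal.ofReal_le_iff_le_toReal hfin] at h1
    linarith
  have hbb : BddBelow T := ⟨_, hlo⟩
  have hba : BddAbove T := ⟨_, hup⟩
  refine ⟨sInf T, sSup T, csInf_le hbb hc, le_csSup hba hc, ?_⟩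
  have hne (r : ℝ) : ∀ᵐ y : ℝ, y ≠ r := compl_mem_ae_iff.2 (measure_singleton r)
  filter_upwards [hne (sInf T), hne (sSup T)] with y h1 h2
  apply propext
  change y ∈ T ↔ y ∈ Ioc (sInf T) (sSup T)
  constructor
  · intro hy
    exact ⟨lt_of_le_of_ne (csInf_le hbb hy) (Ne.symm h1), le_csSup hba hy⟩
  · rintro ⟨h3, h4⟩
    obtain ⟨u, hu, huy⟩ := exists_lt_of_csInf_lt ⟨c, hc⟩ h3
    obtain ⟨v, hv, hyv⟩ := exists_lt_of_lt_csSup ⟨c, hc⟩ (lt_of_le_of_ne h4 h2)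
    exact hT.out hu hv ⟨huy.le, hyv.le⟩

/-- If a primitive `P` of `K` is non-negative to the right of `c` and non-positive to the left,
then `K` has non-negative integral over every interval around `c`, hence, by the layer-cake
formula, against every unimodal density with mode `c`. -/
lemma integral_mul_unimodal_nonneg {f K P : ℝ → ℝ} {c M : ℝ} (hf0 : ∀ x, 0 ≤ f x)
    (hfm : Measurable f) (hfi : Integrable f) (hm : MonotoneOn f (Iio c))
    (ha : AntitoneOn f (Ioi c)) (hK : Continuous K) (hKM : ∀ x, ‖K x‖ ≤ M)
    (hP : ∀ x, HasDerivAt P (K x) x) (hPr : ∀ x, c ≤ x → 0 ≤ P x) (hPl : ∀ x, x ≤ c → P x ≤ 0) :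
    0 ≤ ∫ y, f y * K y := by
  have level (t : ℝ) (ht : 0 < t) :
      ∫⁻ y in {y | t < f y}, ENNReal.ofReal (-K y) ≤ ∫⁻ y in {y | t < f y}, ENNReal.ofReal (K y) := by
    set E := {y | t < f y} with hE
    have hEfin : volume E < ∞ := hfi.measure_gt_lt_top ht
    have hTE : (insert c E : Set ℝ) =ᵐ[volume] E := insert_ae_eq_self c E
    obtain ⟨a, b, hac, hcb, hab⟩ := ordConnected_ae_eq_Ioc
      (ordConnected_insert_levelSet hm ha t) (mem_insert c _)
      (by rw [measure_congr hTE]; exact hEfin.ne)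
    have hEab : E =ᵐ[volume] Ioc a b := hTE.symm.trans hab
    have hint : IntegrableOn K E :=
      Measure.integrableOn_of_bounded hEfin.ne hK.aestronglyMeasurable (M := M)
        (Eventually.of_forall hKM)
    have h0 : 0 ≤ ∫ y in E, K y := by
      rw [setIntegral_congr_set hEab, ← intervalIntegral.integral_of_le (hac.trans hcb),
        intervalIntegral.integral_eq_sub_of_hasDerivAt (fun x _ => hP x)
          (hK.intervalIntegrable a b)]
      linarith [hPr b hcb, hPl a hac]
    rw [integral_eq_lintegral_pos_part_sub_lintegral_neg_part hint, sub_nonneg] at h0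
    refine (ENNReal.toReal_le_toReal ?_ ?_).1 h0
    · exact (hint.neg.lintegral_lt_top).ne
    · exact hint.lintegral_lt_top.ne
  have hKm := hK.measurable
  have hfK : Integrable (fun y => f y * K y) :=
    hfi.mul_bdd hK.aestronglyMeasurable (Eventually.of_forall hKM)
  -- the layer-cake formula, for each of the two measures with densities `K⁺` and `K⁻`
  have cake (L : ℝ → ℝ) (hL : Measurable L) : ∫⁻ y, ENNReal.ofReal (f y * L y)
      = ∫⁻ t in Ioi 0, ∫⁻ y in {y | t < f y}, ENNReal.ofReal (L y) := by
    have hL' : Measurable (fun y => ENNReal.ofReal (L y)) := by fun_prop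
    have h := lintegral_eq_lintegral_meas_lt (volume.withDensity fun y => ENNReal.ofReal (L y))
      (Eventually.of_forall hf0) hfm.aemeasurable
    rw [lintegral_withDensity_eq_lintegral_mul _ hL' (by fun_prop)] at h
    simp_rw [withDensity_apply _ (measurableSet_lt measurable_const hfm)] at h
    rw [← h]
    congr 1
    ext y
    rw [ENNReal.ofReal_mul (hf0 y), Pi.mul_apply, mul_comm]
  rw [integral_eq_lintegral_pos_part_sub_lintegral_neg_part hfK, sub_nonneg]
  refine ENNReal.toReal_mono hfK.lintegral_lt_top.ne ?_
  simp_rw [← mul_neg]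
  rw [cake K hKm, cake (fun y => -K y) hKm.neg]
  exact setLIntegral_mono' measurableSet_Ioi fun t ht => level t ht

/-- Changing the value of the density at the mode gives a unimodal decomposition with a
measurable density. -/
lemma IsUnimodalWithMode.exists_measurable {τ : Measure ℝ} {c : ℝ} (h : IsUnimodalWithMode τ c) :
    ∃ (c₀ : ℝ≥0∞) (f : ℝ → ℝ), (∀ x, 0 ≤ f x) ∧ Measurable f ∧ MonotoneOn f (Iio c) ∧
      AntitoneOn f (Ioi c) ∧
      τ = c₀ • (Measure.dirac c) + volume.withDensity (fun x => ENNReal.ofReal (f x)) := by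
  obtain ⟨c₀, f, h0, hm, ha, rfl⟩ := h
  have hm' : MonotoneOn (Function.update f c 0) (Iio c) := by
    intro x hx y hy hxy
    rw [Function.update_of_ne (ne_of_lt hx), Function.update_of_ne (ne_of_lt hy)]
    exact hm hx hy hxy
  have ha' : AntitoneOn (Function.update f c 0) (Ioi c) := by
    intro x hx y hy hxy
    rw [Function.update_of_ne (ne_of_lt hy).symm, Function.update_of_ne (ne_of_lt hx).symm]
    exact ha hx hy hxy
  refine ⟨c₀, Function.update f c 0, fun x => ?_, ?_, hm', ha', ?_⟩
  · by_cases hx : x = c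
    · simp [hx]
    · simpa [hx] using h0 x
  · refine measurable_of_Ioi fun t => ?_
    have h1 := (ordConnected_insert_levelSet hm' ha' t).measurableSet
    change MeasurableSet {y | t < Function.update f c 0 y}
    by_cases hc : t < Function.update f c 0 c
    · rwa [insert_eq_of_mem (show c ∈ {y | t < Function.update f c 0 y} from hc)] at h1
    · have := h1.diff (measurableSet_singleton c)
      rwa [insert_sdiff_self_of_notMem
        (show c ∉ {y | t < Function.update f c 0 y} from hc)] at this
  · congr 1
    refine withDensity_congr_ae ?_
    filter_upwards [compl_mem_ae_iff.2 (measure_singleton c)] with x hx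
    rw [Function.update_of_ne hx]

/-! ### Log-concave kernels preserve unimodality -/

/-- For `k ≤ 0` the derivative of the convolution, divided by the kernel centred at the mode, is
non-increasing. In particular it changes sign at most once. -/
lemma kernelConvDeriv_div_antitone {C k : ℝ} (hC : 0 < C) (hk : k ≤ 0) {σ : Measure ℝ}
    [IsFiniteMeasure σ] {c : ℝ} (hσ : IsUnimodalWithMode σ c) :
    Antitone fun x => kernelConvDeriv C k σ x / coshKernel C k (x - c) := by
  intro x₁ x₂ hx
  have hk1 : k < 1 := by linarith
  obtain ⟨c₀, f, hf0, hfm, hm, ha, hσf⟩ := hσ.exists_measurable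
  have hA := coshKernel_pos hC hk1 (x₁ - c)
  have hB := coshKernel_pos hC hk1 (x₂ - c)
  set A := coshKernel C k (x₁ - c)
  set B := coshKernel C k (x₂ - c)
  let K : ℝ → ℝ := fun y => coshKernelDeriv C k (x₁ - y) / A - coshKernelDeriv C k (x₂ - y) / B
  let P : ℝ → ℝ := fun y => coshKernel C k (x₂ - y) / B - coshKernel C k (x₁ - y) / A
  have hi1 := integrable_coshKernelDeriv_sub hC hk1 σ x₁
  have hi2 := integrable_coshKernelDeriv_sub hC hk1 σ x₂
  have hKint : ∫ y, K y ∂σ = kernelConvDeriv C k σ x₁ / A - kernelConvDeriv C k σ x₂ / B := by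
    rw [integral_sub (hi1.div_const A) (hi2.div_const B), integral_div, integral_div]
    rfl
  have hcd := continuous_coshKernelDeriv C hk1
  have hK : Continuous K := by fun_prop
  let M := C * (1 / (1 - k) + 1 / (1 - k) ^ 2)
  have hKM (y : ℝ) : ‖K y‖ ≤ M / A + M / B := by
    refine (norm_sub_le _ _).trans ?_
    rw [norm_div, norm_div, Real.norm_of_nonneg hA.le, Real.norm_of_nonneg hB.le]
    gcongr <;> exact norm_coshKernelDeriv_le hC hk1 _
  have hP (y : ℝ) : HasDerivAt P (K y) y := by
    have h1 := ((hasDerivAt_coshKernel C hk1 (x₁ - y)).comp_const_sub x₁ y).div_const A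
    have h2 := ((hasDerivAt_coshKernel C hk1 (x₂ - y)).comp_const_sub x₂ y).div_const B
    exact (h2.sub h1).congr_deriv (by simp only [K]; ring)
  have hPeq (y : ℝ) : P y = (Real.cosh (x₂ - c) - k) / (Real.cosh (x₂ - y) - k)
      - (Real.cosh (x₁ - c) - k) / (Real.cosh (x₁ - y) - k) := by
    have h1 := cosh_sub_pos hk1 (x₂ - y)
    have h2 := cosh_sub_pos hk1 (x₁ - y)
    have h3 := cosh_sub_pos hk1 (x₂ - c)
    have h4 := cosh_sub_pos hk1 (x₁ - c)
    simp only [P, A, B, coshKernel]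
    field_simp
  have hPr (y : ℝ) (hy : c ≤ y) : 0 ≤ P y := by
    rw [hPeq, sub_nonneg, div_le_div_iff₀ (cosh_sub_pos hk1 _) (cosh_sub_pos hk1 _)]
    have := cosh_sub_mul_le hk (x₁ - y) (u := y - c) (v := x₂ - x₁) (by linarith) (by linarith)
    rw [show x₁ - y + (y - c) = x₁ - c by ring, show x₁ - y + (x₂ - x₁) = x₂ - y by ring,
      show x₁ - c + (x₂ - x₁) = x₂ - c by ring] at this
    linarith
  have hPl (y : ℝ) (hy : y ≤ c) : P y ≤ 0 := by
    rw [hPeq, sub_nonpos, div_le_div_iff₀ (cosh_sub_pos hk1 _) (cosh_sub_pos hk1 _)]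
    have := cosh_sub_mul_le hk (x₁ - c) (u := c - y) (v := x₂ - x₁) (by linarith) (by linarith)
    rw [show x₁ - c + (c - y) = x₁ - y by ring, show x₁ - c + (x₂ - x₁) = x₂ - c by ring,
      show x₁ - y + (x₂ - x₁) = x₂ - y by ring] at this
    linarith
  have hKc : 0 ≤ K c := by
    have := coshKernelDeriv_div_antitone hC hk (show x₁ - c ≤ x₂ - c by linarith)
    simpa only [K, sub_nonneg] using this
  have hfmE : Measurable fun x => ENNReal.ofReal (f x) := by fun_prop
  have hfin : IsFiniteMeasure (volume.withDensity (fun x => ENNReal.ofReal (f x))) := by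
    refine isFiniteMeasure_of_le σ ?_
    rw [hσf]
    exact Measure.le_add_left le_rfl
  have hfin' : IsFiniteMeasure (c₀ • Measure.dirac c) := by
    refine isFiniteMeasure_of_le σ ?_
    rw [hσf]
    exact Measure.le_add_right le_rfl
  have hfi : Integrable f := by
    refine ⟨hfm.aestronglyMeasurable, ?_⟩
    rw [hasFiniteIntegral_iff_ofReal (Eventually.of_forall hf0)]
    have := measure_lt_top (volume.withDensity (fun x => ENNReal.ofReal (f x))) univ
    rwa [withDensity_apply _ MeasurableSet.univ, setLIntegral_univ] at this
  have hKi (μ : Measure ℝ) [IsFiniteMeasure μ] : Integrable K μ :=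
    Integrable.of_bound hK.aestronglyMeasurable _ (Eventually.of_forall hKM)
  have hpos : 0 ≤ ∫ y, K y ∂σ := by
    rw [hσf, integral_add_measure (hKi _) (hKi _), integral_smul_measure, integral_dirac,
      integral_withDensity_eq_integral_toReal_smul hfmE
        (Eventually.of_forall fun _ => ENNReal.ofReal_lt_top)]
    refine add_nonneg (smul_nonneg ENNReal.toReal_nonneg hKc) ?_
    simp_rw [ENNReal.toReal_ofReal (hf0 _), smul_eq_mul]
    exact integral_mul_unimodal_nonneg hf0 hfm hfi hm ha hK hKM hP hPr hPl
  rw [hKint] at hpos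
  simpa only [sub_nonneg] using hpos

/-- A positive function vanishing at `±∞` whose derivative is a positive multiple of a
non-increasing function is unimodal. -/
lemma exists_mode_of_antitone {h H w : ℝ → ℝ} (hd : ∀ x, HasDerivAt h (H x) x)
    (hw : ∀ x, 0 < w x) (hanti : Antitone fun x => H x / w x) (hpos : ∀ x, 0 < h x)
    (htop : Tendsto h atTop (𝓝 0)) (hbot : Tendsto h atBot (𝓝 0)) :
    ∃ m, MonotoneOn h (Iio m) ∧ AntitoneOn h (Ioi m) := by
  have hc : Continuous h := continuous_iff_continuousAt.2 fun x => (hd x).continuousAt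
  have hdiff : Differentiable ℝ h := fun x => (hd x).differentiableAt
  have hS {x y : ℝ} (hxy : x ≤ y) (hy : 0 ≤ H y) : 0 ≤ H x := by
    have h1 : 0 ≤ H x / w x := (div_nonneg hy (hw y).le).trans (hanti hxy)
    by_contra! h2
    exact absurd h1 (not_le.2 (div_neg_of_neg_of_pos h2 (hw x)))
  obtain ⟨x₀, hx₀⟩ : ∃ x, 0 ≤ H x := by
    by_contra! hcon
    have hA : Antitone h := antitone_of_deriv_nonpos hdiff fun x => by
      rw [(hd x).deriv]; exact (hcon x).le
    have := hA.ge_of_tendsto hbot 0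
    linarith [hpos 0]
  obtain ⟨x₁, hx₁⟩ : ∃ x, H x < 0 := by
    by_contra! hcon
    have hM : Monotone h := monotone_of_deriv_nonneg hdiff fun x => by
      rw [(hd x).deriv]; exact hcon x
    have := hM.ge_of_tendsto htop 0
    linarith [hpos 0]
  have hbdd : BddAbove {x | 0 ≤ H x} := by
    refine ⟨x₁, fun x hx => ?_⟩
    by_contra! hlt
    exact absurd (hS hlt.le hx) (not_le.2 hx₁)
  refine ⟨sSup {x | 0 ≤ H x}, ?_, ?_⟩
  · refine monotoneOn_of_deriv_nonneg (convex_Iio _) hc.continuousOn hdiff.differentiableOn ?_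
    intro x hx
    rw [interior_Iio] at hx
    rw [(hd x).deriv]
    obtain ⟨y, hy, hxy⟩ := exists_lt_of_lt_csSup ⟨x₀, hx₀⟩ hx
    exact hS hxy.le hy
  · refine antitoneOn_of_deriv_nonpos (convex_Ioi _) hc.continuousOn hdiff.differentiableOn ?_
    intro x hx
    rw [interior_Ioi] at hx
    rw [(hd x).deriv]
    by_contra! hlt
    exact absurd (le_csSup hbdd hlt.le) (not_le.2 hx)

/-! ### Failure of strong unimodality when the kernel is not log-concave -/

/-- A comparison valid on a dense subset of an open set extends to the whole open set. -/
lemma le_of_dense_le {h₁ h₂ : ℝ → ℝ} (hc₁ : Continuous h₁) (hc₂ : Continuous h₂) {D O : Set ℝ}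
    (hD : Dense D) (hO : IsOpen O)
    (hDO : ∀ x ∈ D, ∀ y ∈ D, x ∈ O → y ∈ O → x < y → h₁ x ≤ h₂ y) :
    ∀ x ∈ O, ∀ y ∈ O, x < y → h₁ x ≤ h₂ y := by
  intro x hx y hy hxy
  by_contra! hlt
  have hopen : IsOpen {p : ℝ × ℝ | p.1 ∈ O ∧ p.2 ∈ O ∧ p.1 < p.2 ∧ h₂ p.2 < h₁ p.1} :=
    (hO.preimage continuous_fst).inter ((hO.preimage continuous_snd).inter
      ((isOpen_lt continuous_fst continuous_snd).inter
        (isOpen_lt (hc₂.comp continuous_snd) (hc₁.comp continuous_fst))))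
  obtain ⟨p, ⟨hp1, hp2, hp3, hp4⟩, hpD⟩ :=
    (hD.prod hD).inter_open_nonempty _ hopen ⟨(x, y), hx, hy, hxy, hlt⟩
  exact absurd (hDO p.1 hpD.1 p.2 hpD.2 hp1 hp2 hp3) (not_le.2 hp4)

/-- A measure with a differentiable density whose derivative is negative somewhere and positive
further to the right is not unimodal. -/
lemma not_isUnimodalWithMode {h H : ℝ → ℝ} (hd : ∀ x, HasDerivAt h (H x) x) (h0 : ∀ x, 0 ≤ h x)
    {t₀ t₁ : ℝ} (ht : t₀ < t₁) (hneg : H t₀ < 0) (hpos : 0 < H t₁) (m : ℝ) :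
    ¬ IsUnimodalWithMode (volume.withDensity fun x => ENNReal.ofReal (h x)) m := by
  intro hU
  have hc : Continuous h := continuous_iff_continuousAt.2 fun x => (hd x).continuousAt
  obtain ⟨c₀, f, hf0, hfm, hm, ha, heq⟩ := hU.exists_measurable
  have hc₀ : c₀ = 0 := by
    have h1 : (volume.withDensity fun x => ENNReal.ofReal (h x)) {m} = 0 :=
      withDensity_absolutelyContinuous _ _ (measure_singleton m)
    rw [heq] at h1
    simpa using h1
  rw [hc₀, zero_smul, zero_add, withDensity_eq_iff_of_sigmaFinite
    (hc.measurable.ennreal_ofReal.aemeasurable) (hfm.ennreal_ofReal.aemeasurable)] at heq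
  have hae : ∀ᵐ x : ℝ, h x = f x := by
    filter_upwards [heq] with x hx
    exact (ENNReal.ofReal_eq_ofReal_iff (h0 x) (hf0 x)).1 hx
  have hD : Dense {x | h x = f x} := Measure.dense_of_ae hae
  have hmono : MonotoneOn h (Iio m) := by
    have := le_of_dense_le hc hc hD isOpen_Iio (fun x hx y hy hxO hyO hxy => by
      rw [show h x = f x from hx, show h y = f y from hy]
      exact hm hxO hyO hxy.le)
    intro x hx y hy hxy
    rcases hxy.eq_or_lt with rfl | hlt
    · exact le_rfl
    · exact this x hx y hy hlt
  have hanti : AntitoneOn h (Ioi m) := by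
    have := le_of_dense_le hc.neg hc.neg hD isOpen_Ioi (fun x hx y hy hxO hyO hxy => by
      rw [Pi.neg_apply, Pi.neg_apply, show h x = f x from hx, show h y = f y from hy]
      exact neg_le_neg (ha hxO hyO hxy.le))
    intro x hx y hy hxy
    rcases hxy.eq_or_lt with rfl | hlt
    · exact le_rfl
    · exact neg_le_neg_iff.1 (this x hx y hy hlt)
  rcases lt_or_ge m t₁ with hmt | hmt
  · have h1 := hanti.derivWithin_nonpos (x := t₁)
    rw [derivWithin_of_isOpen isOpen_Ioi hmt, (hd t₁).deriv] at h1
    linarith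
  · have h1 := hmono.derivWithin_nonneg (x := t₀)
    rw [derivWithin_of_isOpen isOpen_Iio (ht.trans_le hmt), (hd t₀).deriv] at h1
    linarith

/-- For `0 < k < 1` a mixture `σ` of the unit mass at `0` and a uniform law on a long interval
`[0, L]` destroys unimodality. Up to a positive factor, the derivative of the convolution is
`g' + r (g - g (· - L))`. The logarithmic derivative `g' / g` attains its minimum `-r` at the
point `t₀` where `cosh t₀ = 1 / k`, and increases to `-1 > -r` to the right of `t₀`. -/
lemma exists_unimodal_bad {C k : ℝ} (hC : 0 < C) (hk0 : 0 < k) (hk : k < 1) :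
    ∃ σ : Measure ℝ, IsProbabilityMeasure σ ∧ IsUnimodalWithMode σ 0 ∧
      ∃ t₀ t₁, t₀ < t₁ ∧ kernelConvDeriv C k σ t₀ < 0 ∧ 0 < kernelConvDeriv C k σ t₁ := by
  have h1k : 1 ≤ 1 / k := by rw [le_div_iff₀ hk0]; linarith
  obtain ⟨t₀, ht₀, hsinh⟩ : ∃ t, Real.cosh t = 1 / k ∧ 0 ≤ Real.sinh t :=
    ⟨Real.arcosh (1 / k), Real.cosh_arcosh h1k, Real.sinh_nonneg_iff.2 (Real.arcosh_nonneg h1k)⟩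
  have hψ₀ := cosh_sub_pos hk t₀
  obtain ⟨r, hr⟩ : ∃ r, r = Real.sinh t₀ / (Real.cosh t₀ - k) := ⟨_, rfl⟩
  have hr1 : 1 < r := by
    rw [hr, lt_div_iff₀ hψ₀, one_mul]
    refine lt_of_pow_lt_pow_left₀ 2 hsinh ?_
    rw [Real.sinh_sq, ht₀]
    have : 1 / k * k = 1 := by field_simp
    nlinarith
  have hg₀ : coshKernelDeriv C k t₀ + r * coshKernel C k t₀ = 0 := by
    rw [hr, coshKernelDeriv, coshKernel]
    field_simp
    ring
  obtain ⟨t₁, ht₁, ht₀₁⟩ : ∃ t, r * k / (r - 1) < Real.cosh t ∧ t₀ < t :=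
    ((tendsto_cosh_atTop.eventually_gt_atTop _).and (eventually_gt_atTop t₀)).exists
  have hψ₁ := cosh_sub_pos hk t₁
  have hg₁ : 0 < coshKernelDeriv C k t₁ + r * coshKernel C k t₁ := by
    have e : coshKernelDeriv C k t₁ + r * coshKernel C k t₁
        = C * (r * (Real.cosh t₁ - k) - Real.sinh t₁) / (Real.cosh t₁ - k) ^ 2 := by
      rw [coshKernelDeriv, coshKernel]
      field_simp
      ring
    rw [e]
    rw [div_lt_iff₀ (by linarith)] at ht₁
    have := Real.sinh_lt_cosh t₁
    exact div_pos (mul_pos hC (by nlinarith)) (by positivity)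
  obtain ⟨L, hL, hL0⟩ : ∃ L, r * coshKernel C k (t₁ - L)
      < coshKernelDeriv C k t₁ + r * coshKernel C k t₁ ∧ 0 < L := by
    have h1 : Tendsto (fun L => t₁ - L) atTop atBot :=
      tendsto_atBot_add_const_left _ t₁ tendsto_neg_atTop_atBot
    have h2 := ((tendsto_coshKernel_atBot C k).comp h1).const_mul r
    rw [mul_zero] at h2
    exact ((h2.eventually_lt_const hg₁).and (eventually_gt_atTop 0)).exists
  have hr0 : 0 < r := by linarith
  obtain ⟨a, ha⟩ : ∃ a, a = 1 / (1 + r * L) := ⟨_, rfl⟩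
  have ha0 : 0 < a := by rw [ha]; positivity
  have ha1 : a + r * a * L = 1 := by rw [ha]; field_simp
  let f : ℝ → ℝ := (Ioc 0 L).indicator fun _ => r * a
  have hf0 (x : ℝ) : 0 ≤ f x := indicator_nonneg (fun _ _ => by positivity) x
  have hofReal : (fun x => ENNReal.ofReal (f x))
      = (Ioc 0 L).indicator fun _ => ENNReal.ofReal (r * a) := by
    ext x
    by_cases hx : x ∈ Ioc 0 L <;> simp [f, hx]
  have hdens : volume.withDensity (fun x => ENNReal.ofReal (f x))
      = ENNReal.ofReal (r * a) • volume.restrict (Ioc 0 L) := by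
    rw [hofReal, withDensity_indicator measurableSet_Ioc, withDensity_const]
  let σ : Measure ℝ := ENNReal.ofReal a • Measure.dirac 0
    + volume.withDensity (fun x => ENNReal.ofReal (f x))
  have hprob : IsProbabilityMeasure σ := by
    constructor
    simp only [σ, hdens]
    simp only [Measure.add_apply, Measure.smul_apply, smul_eq_mul, measure_univ, mul_one,
      Measure.restrict_apply MeasurableSet.univ, univ_inter, Real.volume_Ioc, sub_zero]
    rw [← ENNReal.ofReal_mul (by positivity), ← ENNReal.ofReal_add ha0.le (by positivity), ha1,
      ENNReal.ofReal_one]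
  have hderiv (x : ℝ) : kernelConvDeriv C k σ x
      = a * (coshKernelDeriv C k x + r * coshKernel C k x - r * coshKernel C k (x - L)) := by
    have hfin1 : IsFiniteMeasure (ENNReal.ofReal a • Measure.dirac (0 : ℝ)) :=
      Measure.smul_finite _ ENNReal.ofReal_ne_top
    have hfin2 : IsFiniteMeasure (ENNReal.ofReal (r * a) • volume.restrict (Ioc 0 L)) :=
      Measure.smul_finite _ ENNReal.ofReal_ne_top
    have hint : ∫ y in (0 : ℝ)..L, coshKernelDeriv C k (x - y)
        = coshKernel C k x - coshKernel C k (x - L) := by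
      have hd (y : ℝ) : HasDerivAt (fun y => -coshKernel C k (x - y))
          (coshKernelDeriv C k (x - y)) y :=
        ((hasDerivAt_coshKernel C hk (x - y)).comp_const_sub x y).neg.congr_deriv (by simp)
      rw [intervalIntegral.integral_eq_sub_of_hasDerivAt (fun y _ => hd y)
        (((continuous_coshKernelDeriv C hk).comp
          (continuous_const.sub continuous_id)).intervalIntegrable 0 L)]
      simp only [sub_zero]
      ring
    simp only [kernelConvDeriv, σ, hdens]
    rw [integral_add_measure (integrable_coshKernelDeriv_sub hC hk _ x)
        (integrable_coshKernelDeriv_sub hC hk _ x), integral_smul_measure, integral_smul_measure,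
      integral_dirac, ← intervalIntegral.integral_of_le hL0.le, hint,
      ENNReal.toReal_ofReal ha0.le, ENNReal.toReal_ofReal (by positivity), sub_zero,
      smul_eq_mul, smul_eq_mul]
    ring
  refine ⟨σ, hprob, ⟨ENNReal.ofReal a, f, hf0, ?_, ?_, rfl⟩, t₀, t₁, ht₀₁, ?_, ?_⟩
  · intro x hx y hy _
    have : f x = 0 := indicator_of_notMem (fun h => lt_asymm h.1 hx) _
    rw [this]
    exact hf0 y
  · intro x hx y hy hxy
    by_cases hyL : y ∈ Ioc 0 L
    · have hxL : x ∈ Ioc 0 L := ⟨hx, hxy.trans hyL.2⟩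
      simp [f, hxL, hyL]
    · have : f y = 0 := indicator_of_notMem hyL _
      rw [this]
      exact hf0 x
  · rw [hderiv, hg₀]
    have := coshKernel_pos hC hk (t₀ - L)
    have := mul_pos ha0 (mul_pos hr0 this)
    linarith
  · rw [hderiv]
    exact mul_pos ha0 (by linarith)

/-- for `b ∈ (0, π)`, the measure `λ_b` is `⊛`-strongly log-unimodal iff
`cos b ≤ 0`. -/
theorem lambda_b_stronglyLogUnimodal_iff (b : ℝ) (hb : b ∈ Set.Ioo 0 Real.pi)
    (lb : Measure ℝ)
    (hlb : lb = volume.withDensity (fun x => ENNReal.ofReal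
      (Set.indicator (Set.Ioi 0)
        (fun y => (Real.sin b / (Real.pi - b)) / (1 - 2 * y * Real.cos b + y ^ 2)) x))) :
    StronglyLogUnimodal lb ↔ Real.cos b ≤ 0 := by
  have hs : 0 < Real.sin b := Real.sin_pos_of_mem_Ioo hb
  have hk : Real.cos b < 1 := by
    have := Real.cos_lt_cos_of_nonneg_of_le_pi le_rfl hb.2.le hb.1
    rwa [Real.cos_zero] at this
  have hC : 0 < Real.sin b / (Real.pi - b) / 2 := by
    have : 0 < Real.pi - b := by linarith [hb.2]
    positivity
  have hlog : lb.map Real.log = volume.withDensity (fun t => ENNReal.ofReal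
      (coshKernel (Real.sin b / (Real.pi - b) / 2) (Real.cos b) t)) := by
    rw [hlb]
    exact map_log_lambda hk
  have hlb0 : ∀ᵐ x ∂lb, x ≠ 0 := by
    rw [hlb]
    exact (withDensity_absolutelyContinuous _ _).ae_le
      (compl_mem_ae_iff.2 (measure_singleton (0 : ℝ)))
  have : SFinite lb := by rw [hlb]; infer_instance
  have hconv (ν : Measure ℝ) [IsProbabilityMeasure ν] (hν : ν (Set.Iic 0) = 0) :
      (mulConv lb ν).map Real.log = volume.withDensity (fun x => ENNReal.ofReal
        (kernelConv (Real.sin b / (Real.pi - b) / 2) (Real.cos b) (ν.map Real.log) x)) := by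
    have hν0 : ∀ᵐ x ∂ν, x ≠ 0 :=
      compl_mem_ae_iff.2 (measure_mono_null (fun x (hx : x = 0) => hx.le) hν)
    have := Measure.isProbabilityMeasure_map (μ := ν) Real.measurable_log.aemeasurable
    rw [map_log_mulConv lb ν hlb0 hν0, hlog, addConv_kernel hC hk]
  constructor
  · intro hstrong
    by_contra! hk0
    obtain ⟨σ, hσ, hσU, t₀, t₁, ht, hneg, hpos⟩ := exists_unimodal_bad hC hk0 hk
    have hprob := Measure.isProbabilityMeasure_map (μ := σ) Real.measurable_exp.aemeasurable
    have hmap : (σ.map Real.exp).map Real.log = σ := by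
      rw [Measure.map_map Real.measurable_log Real.measurable_exp,
        show Real.log ∘ Real.exp = id from funext Real.log_exp, Measure.map_id]
    have hnull : σ.map Real.exp (Set.Iic 0) = 0 := by
      rw [Measure.map_apply Real.measurable_exp measurableSet_Iic]
      have : Real.exp ⁻¹' Set.Iic 0 = ∅ :=
        eq_empty_of_forall_notMem fun x hx => absurd hx (not_le.2 (Real.exp_pos x))
      rw [this, measure_empty]
    obtain ⟨m, -, hU⟩ := hstrong (σ.map Real.exp) hprob hnull
      ⟨1, one_pos, by rwa [IsLogUnimodalWithMode, hmap, Real.log_one]⟩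
    rw [IsLogUnimodalWithMode, hconv _ hnull, hmap] at hU
    exact not_isUnimodalWithMode (hasDerivAt_kernelConv hC hk σ)
      (fun x => (kernelConv_pos hC hk σ x).le) ht hneg hpos _ hU
  · rintro hk0 ν hν hν0 ⟨a, -, hU⟩
    have := Measure.isProbabilityMeasure_map (μ := ν) Real.measurable_log.aemeasurable
    obtain ⟨m, hm, ha⟩ := exists_mode_of_antitone (hasDerivAt_kernelConv hC hk (ν.map Real.log))
      (fun x => coshKernel_pos hC hk (x - Real.log a)) (kernelConvDeriv_div_antitone hC hk0 hU)
      (kernelConv_pos hC hk _) (tendsto_kernelConv_atTop hC hk _)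
      (tendsto_kernelConv_atBot hC hk _)
    refine ⟨Real.exp m, Real.exp_pos m, ?_⟩
    rw [IsLogUnimodalWithMode, hconv ν hν0, Real.log_exp]
    exact ⟨0, _, fun x => (kernelConv_pos hC hk _ x).le, hm, ha, by rw [zero_smul, zero_add]⟩
end
end
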